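/- There exists ε > 0 such that for every origin-symmetric convex body K ⊂ ℝ³ with (1−ε)B³ ⊆ K ⊆ (1+ε)B³ which is not an ellipsoid (i.e., K ≠ T(B³) for every invertible linear map T), the optimal lattice packing fraction satisfies φ(K) > φ(B³). In other words, B³ is a local pessimum for lattice packing among origin-symmetric convex bodies. -/

import Mathlib

open scoped RealInnerProductSpace
open Metric MeasureTheory

noncomputable section

abbrev Euc (n : ℕ) := EuclideanSpace ℝ (Fin n)

/-- The rank-one symmetric map `P_x : y ↦ ⟪y, x⟫ • x`. -/
def projMap {F : Type*} [NormedAddCommGroup F] [InnerProductSpace ℝ F] (x : F) :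
    F →ₗ[ℝ] F where
  toFun y := (⟪y, x⟫) • x
  map_add' y z := by simp [inner_add_left, add_smul]
  map_smul' c y := by simp [real_inner_smul_left, mul_smul]

/-- A configuration is perfect if the maps `P_x`, `x ∈ S`, span the symmetric maps. -/
def IsPerfectCfg {F : Type*} [NormedAddCommGroup F] [InnerProductSpace ℝ F]
    (S : Set F) : Prop :=
  ∀ T : F →ₗ[ℝ] F, T.IsSymmetric → T ∈ Submodule.span ℝ (projMap '' S)

/-- A configuration is eutactic if `Id = Σ_{x∈S} υ_x P_x` with `υ_x > 0`, `υ_x = υ_{-x}`. -/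
def IsEutacticCfg {F : Type*} [NormedAddCommGroup F] [InnerProductSpace ℝ F]
    (S : Set F) : Prop :=
  ∃ υ : F → ℝ, (∀ x ∈ S, 0 < υ x) ∧ (∀ x ∉ S, υ x = 0) ∧
    (Function.support υ).Finite ∧ (∀ x, υ x = υ (-x)) ∧
    ∑ᶠ x, υ x • projMap x = (LinearMap.id : F →ₗ[ℝ] F)

/-- A configuration is semi-eutactic if `Id = Σ_{x∈S} υ_x P_x` with `υ_x ≥ 0`, `υ_x = υ_{-x}`. -/
def IsSemiEutacticCfg {F : Type*} [NormedAddCommGroup F] [InnerProductSpace ℝ F]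
    (S : Set F) : Prop :=
  ∃ υ : F → ℝ, (∀ x ∈ S, 0 ≤ υ x) ∧ (∀ x ∉ S, υ x = 0) ∧
    (Function.support υ).Finite ∧ (∀ x, υ x = υ (-x)) ∧
    ∑ᶠ x, υ x • projMap x = (LinearMap.id : F →ₗ[ℝ] F)

/-- A configuration is extreme if it is perfect and eutactic. -/
def IsExtremeCfg {F : Type*} [NormedAddCommGroup F] [InnerProductSpace ℝ F]
    (S : Set F) : Prop :=
  IsPerfectCfg S ∧ IsEutacticCfg S

/-- Hilbert–Schmidt (Frobenius) norm of a linear map on `ℝ^n`. -/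
def frobNorm {n : ℕ} (T : Euc n →ₗ[ℝ] Euc n) : ℝ :=
  Real.sqrt (∑ j, ∑ i, (T (EuclideanSpace.single j 1) i) ^ 2)

/-- The lattice `T ℤ^n` as a set of points. -/
def latticeSet {n : ℕ} (T : Euc n →ₗ[ℝ] Euc n) : Set (Euc n) :=
  {v | ∃ z : Fin n → ℤ, v = T (∑ i, (z i : ℝ) • EuclideanSpace.single i 1)}

/-- A set is an (n-dimensional) lattice if it is `T ℤ^n` for an invertible `T`. -/
def IsLattice {n : ℕ} (Λ : Set (Euc n)) : Prop :=
  ∃ T : Euc n →ₗ[ℝ] Euc n, LinearMap.det T ≠ 0 ∧ Λ = latticeSet T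

/-- The determinant `d(Λ) = |det T|` of a lattice. -/
def latDet {n : ℕ} (Λ : Set (Euc n)) : ℝ :=
  sInf {d | ∃ T : Euc n →ₗ[ℝ] Euc n, Λ = latticeSet T ∧ d = |LinearMap.det T|}

/-- The metric `δ(Λ, Λ') = inf ‖T - T'‖` on the space of lattices. -/
def latDist {n : ℕ} (Λ Λ' : Set (Euc n)) : ℝ :=
  sInf {d | ∃ T T' : Euc n →ₗ[ℝ] Euc n,
    Λ = latticeSet T ∧ Λ' = latticeSet T' ∧ d = frobNorm (T - T')}

/-- The minimal norm `m(Λ)`. -/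
def minNorm {n : ℕ} (Λ : Set (Euc n)) : ℝ :=
  sInf {r | ∃ x ∈ Λ, x ≠ 0 ∧ r = ‖x‖ ^ 2}

/-- The set `S(Λ)` of minimal vectors of a lattice. -/
def minVecs {n : ℕ} (Λ : Set (Euc n)) : Set (Euc n) :=
  {x | x ∈ Λ ∧ x ≠ 0 ∧ ‖x‖ ^ 2 = minNorm Λ}

/-- An origin-symmetric convex body. -/
structure IsSymCB {n : ℕ} (K : Set (Euc n)) : Prop where
  convex : Convex ℝ K
  compact : IsCompact K
  nonempty_interior : (interior K).Nonempty
  symm : -K = K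

/-- A lattice is admissible for a body if it meets the interior only at the origin. -/
def IsAdmissible {n : ℕ} (Λ K : Set (Euc n)) : Prop :=
  Λ ∩ interior K ⊆ {0}

/-- The critical determinant `d_K`. -/
def critDet {n : ℕ} (K : Set (Euc n)) : ℝ :=
  sInf {d | ∃ Λ : Set (Euc n), IsLattice Λ ∧ IsAdmissible Λ K ∧ d = latDet Λ}

/-- A critical lattice of `K`: an admissible lattice attaining the critical determinant. -/
def IsCriticalLattice {n : ℕ} (Λ K : Set (Euc n)) : Prop :=
  IsLattice Λ ∧ IsAdmissible Λ K ∧ latDet Λ = critDet K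

/-- The optimal lattice packing fraction `φ(K) = 2⁻ⁿ vol(K) / d_K`. -/
def packFrac {n : ℕ} (K : Set (Euc n)) : ℝ :=
  (volume K).toReal / (2 ^ n * critDet K)

/-- The closed unit ball `Bⁿ`. -/
def unitBall (n : ℕ) : Set (Euc n) := Metric.closedBall 0 1

/-- The support function of a body. -/
def suppFn {n : ℕ} (K : Set (Euc n)) (x : Euc n) : ℝ :=
  sSup ((fun y => ⟪x, y⟫) '' K)

/-- The radial function of a body. -/
def radFn {n : ℕ} (K : Set (Euc n)) (x : Euc n) : ℝ :=
  sSup {t : ℝ | 0 ≤ t ∧ t • x ∈ K}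

/-!
Let `f` be the norm with unit ball `K` and let `v x = f x ^ 2 - ‖x‖ ^ 2`, which is small. Rotate the
face-centred cubic lattice by `R` and deform it linearly so that its six pairs of minimal vectors
`R • fcc j` leave the interior of `K`. To first order in `v`, the determinant then changes by a
multiple of `∑ j, v (R • fcc j)`, and the mean of this over `R` is exactly what the volume of `K`
loses. Hence either some deformed lattice packs `K` more densely than the original one packs the
ball, or the deviation of `R ↦ ∑ j, v (R • fcc j)` from its mean, being bounded above by a
second-order error, is itself of second order.

On spherical harmonics of degree `2 * n` the operator `v ↦ ∑ j, v (R • fcc j)` acts by the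
eigenvalue `1 + 4 * P (1 / 2) + P 0`, with `P` the Legendre polynomial of degree `2 * n`. It tends
to `1` and vanishes only for `n = 1`: its `2`-adic valuation shows that it is not zero for `n ≥ 2`.
So once the part of `v` of degree two is made negligible by a linear change of coordinates, and
with the constant part cancelled by the mean, the second alternative bounds `v` by a quantity of
second order in `v`, which forces `v = 0`: then `K` is an ellipsoid.
-/

/-! ### Averages over the orthogonal group -/

section OrthGroup

/-- The orthogonal group of a Euclidean space, encoded as the unitary elements of its algebra of
continuous endomorphisms so that it carries the norm topology; it acts on `E` by `•`. -/
abbrev OrthGroup (E : Type*) [NormedAddCommGroup E] [InnerProductSpace ℝ E] [CompleteSpace E] :=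
  unitary (E →L[ℝ] E)

namespace OrthGroup

variable {E : Type*} [NormedAddCommGroup E] [InnerProductSpace ℝ E] [CompleteSpace E]

lemma norm_smul (R : OrthGroup E) (x : E) : ‖R • x‖ = ‖x‖ :=
  (Unitary.linearIsometryEquiv R).norm_map x

lemma inner_smul_smul (R : OrthGroup E) (x y : E) : ⟪R • x, R • y⟫ = ⟪x, y⟫ :=
  (Unitary.linearIsometryEquiv R).inner_map_map x y

lemma inner_smul_left (R : OrthGroup E) (x y : E) : ⟪R • x, y⟫ = ⟪x, R⁻¹ • y⟫ := by
  rw [← inner_smul_smul R x, smul_inv_smul]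

lemma exists_smul_eq {x y : E} (h : ‖x‖ = ‖y‖) : ∃ R : OrthGroup E, R • x = y :=
  ⟨Unitary.linearIsometryEquiv.symm (Submodule.reflection (ℝ ∙ (x - y))ᗮ),
    Submodule.reflection_sub h⟩

instance instContinuousSMul : ContinuousSMul (OrthGroup E) E where
  continuous_smul := (continuous_subtype_val.comp continuous_fst).clm_apply continuous_snd

instance instMeasurableSpace : MeasurableSpace (OrthGroup E) := borel _

instance instBorelSpace : BorelSpace (OrthGroup E) := ⟨rfl⟩

lemma continuous_comp_smul {f : E → ℝ} (hf : ContinuousOn f (sphere 0 1)) {x : E}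
    (hx : ‖x‖ = 1) : Continuous fun R : OrthGroup E => f (R • x) :=
  hf.comp_continuous (by fun_prop) fun R => by simp [norm_smul, hx]

variable [FiniteDimensional ℝ E]

lemma abs_det (R : OrthGroup E) : |LinearMap.det ((R : E →L[ℝ] E) : E →ₗ[ℝ] E)| = 1 := by
  rw [← Real.norm_eq_abs, ← LinearMap.normDet_eq_norm_det]
  exact LinearIsometry.normDet_eq_one (Unitary.linearIsometryEquiv R).toLinearIsometry

instance instCompactSpace : CompactSpace (OrthGroup E) := by
  have : ProperSpace (E →L[ℝ] E) := FiniteDimensional.proper_real _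
  refine isCompact_iff_compactSpace.mp <|
    (isCompact_closedBall (0 : E →L[ℝ] E) 1).of_isClosed_subset isClosed_unitary fun R hR => ?_
  rw [mem_closedBall_zero_iff]
  exact ContinuousLinearMap.opNorm_le_bound _ zero_le_one fun x =>
    (one_mul ‖x‖).symm ▸ (norm_smul ⟨R, hR⟩ x).le

/-- The Haar probability measure of the orthogonal group. -/
def haar : Measure (OrthGroup E) := Measure.haarMeasure ⊤

instance : (haar : Measure (OrthGroup E)).IsHaarMeasure := by
  unfold haar; infer_instance

instance : IsProbabilityMeasure (haar : Measure (OrthGroup E)) :=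
  ⟨Measure.haarMeasure_self (K₀ := (⊤ : TopologicalSpace.PositiveCompacts (OrthGroup E)))⟩

instance : (haar : Measure (OrthGroup E)).IsMulRightInvariant where
  map_mul_right_eq_self g := by
    have : IsProbabilityMeasure (Measure.map (· * g) (haar : Measure (OrthGroup E))) :=
      Measure.isProbabilityMeasure_map (by fun_prop)
    exact Measure.isHaarMeasure_eq_of_isProbabilityMeasure _ _

lemma integrable_of_continuous {F : OrthGroup E → ℝ} (hF : Continuous F) : Integrable F haar :=
  hF.integrable_of_hasCompactSupport (HasCompactSupport.of_compactSpace F)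

lemma integrable_comp_smul {f : E → ℝ} (hf : ContinuousOn f (sphere 0 1)) {x : E}
    (hx : ‖x‖ = 1) : Integrable (fun R : OrthGroup E => f (R • x)) haar :=
  integrable_of_continuous (continuous_comp_smul hf hx)

lemma integral_comp_smul_eq_of_norm_eq (f : E → ℝ) {x y : E} (h : ‖x‖ = ‖y‖) :
    ∫ R : OrthGroup E, f (R • x) ∂haar = ∫ R : OrthGroup E, f (R • y) ∂haar := by
  obtain ⟨S, rfl⟩ := exists_smul_eq h
  simp_rw [smul_smul]
  exact (integral_mul_right_eq_self (fun R : OrthGroup E => f (R • x)) S).symm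

end OrthGroup

end OrthGroup

section SphereMean

variable {E : Type*} [NormedAddCommGroup E] [InnerProductSpace ℝ E] [CompleteSpace E]
  [FiniteDimensional ℝ E] [Nontrivial E]

/-- The mean of a function over the unit sphere, encoded as the average over the orthogonal group
of its values along the orbit of some unit vector. -/
def sphereMean (f : E → ℝ) : ℝ :=
  ∫ R : OrthGroup E, f (R • (exists_norm_eq E zero_le_one).choose) ∂OrthGroup.haar

lemma integral_comp_smul_of_norm_eq_one (f : E → ℝ) {x : E} (hx : ‖x‖ = 1) :
    ∫ R : OrthGroup E, f (R • x) ∂OrthGroup.haar = sphereMean f :=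
  OrthGroup.integral_comp_smul_eq_of_norm_eq f <|
    hx.trans (exists_norm_eq E zero_le_one).choose_spec.symm

lemma integral_comp_smul_eq_sphereMean (f : E → ℝ) (x : E) :
    ∫ R : OrthGroup E, f (R • x) ∂OrthGroup.haar = sphereMean fun y => f (‖x‖ • y) := by
  obtain ⟨e, he⟩ := exists_norm_eq E zero_le_one
  rw [← integral_comp_smul_of_norm_eq_one _ he, OrthGroup.integral_comp_smul_eq_of_norm_eq f
    (y := ‖x‖ • e) (by simp [_root_.norm_smul, he])]
  simp_rw [smul_comm _ ‖x‖ e]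

lemma sphereMean_comp_smul (f : E → ℝ) (Q : OrthGroup E) :
    sphereMean (fun x => f (Q • x)) = sphereMean f := by
  simp_rw [sphereMean, smul_smul]
  exact integral_mul_left_eq_self
    (fun R : OrthGroup E => f (R • (exists_norm_eq E zero_le_one).choose)) Q

lemma sphereMean_congr {f g : E → ℝ} (h : ∀ x, ‖x‖ = 1 → f x = g x) :
    sphereMean f = sphereMean g := by
  obtain ⟨e, he⟩ := exists_norm_eq E zero_le_one
  simp_rw [← integral_comp_smul_of_norm_eq_one _ he]
  exact integral_congr_ae (.of_forall fun R => h _ (by rw [OrthGroup.norm_smul, he]))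

lemma integral_comp_smul_of_homogeneous {f : E → ℝ} {k : ℕ}
    (hf : ∀ (r : ℝ) x, f (r • x) = r ^ k * f x) (x : E) :
    ∫ R : OrthGroup E, f (R • x) ∂OrthGroup.haar = ‖x‖ ^ k * sphereMean f := by
  simp_rw [integral_comp_smul_eq_sphereMean, hf, sphereMean, integral_const_mul]

lemma sphereMean_const (c : ℝ) : sphereMean (fun _ : E => c) = c := by
  simp [sphereMean]

lemma sphereMean_const_mul (c : ℝ) (f : E → ℝ) :
    sphereMean (fun x => c * f x) = c * sphereMean f :=
  integral_const_mul _ _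

lemma sphereMean_nonneg {f : E → ℝ} (h : ∀ x, 0 ≤ f x) : 0 ≤ sphereMean f :=
  integral_nonneg fun _ => h _

variable {f g : E → ℝ} (hf : ContinuousOn f (sphere 0 1)) (hg : ContinuousOn g (sphere 0 1))
include hf hg

lemma sphereMean_add : sphereMean (fun x => f x + g x) = sphereMean f + sphereMean g := by
  obtain ⟨e, he⟩ := exists_norm_eq E zero_le_one
  simp_rw [← integral_comp_smul_of_norm_eq_one _ he]
  exact integral_add (OrthGroup.integrable_comp_smul hf he)
    (OrthGroup.integrable_comp_smul hg he)

lemma sphereMean_sub : sphereMean (fun x => f x - g x) = sphereMean f - sphereMean g := by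
  obtain ⟨e, he⟩ := exists_norm_eq E zero_le_one
  simp_rw [← integral_comp_smul_of_norm_eq_one _ he]
  exact integral_sub (OrthGroup.integrable_comp_smul hf he)
    (OrthGroup.integrable_comp_smul hg he)

lemma sphereMean_mono (h : ∀ x, ‖x‖ = 1 → f x ≤ g x) : sphereMean f ≤ sphereMean g := by
  obtain ⟨e, he⟩ := exists_norm_eq E zero_le_one
  simp_rw [← integral_comp_smul_of_norm_eq_one _ he]
  exact integral_mono (OrthGroup.integrable_comp_smul hf he)
    (OrthGroup.integrable_comp_smul hg he) fun R => h _ (by rw [OrthGroup.norm_smul, he])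

omit hf hg

lemma sphereMean_finsetSum {ι : Type*} (s : Finset ι) {f : ι → E → ℝ}
    (hf : ∀ i ∈ s, ContinuousOn (f i) (sphere 0 1)) :
    sphereMean (fun x => ∑ i ∈ s, f i x) = ∑ i ∈ s, sphereMean (f i) := by
  obtain ⟨e, he⟩ := exists_norm_eq E zero_le_one
  simp_rw [← integral_comp_smul_of_norm_eq_one _ he]
  exact integral_finsetSum s fun i hi => OrthGroup.integrable_comp_smul (hf i hi) he

lemma abs_sphereMean_le {C : ℝ} (h : ∀ x, ‖x‖ = 1 → |f x| ≤ C) : |sphereMean f| ≤ C := by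
  obtain ⟨e, he⟩ := exists_norm_eq E zero_le_one
  rw [← integral_comp_smul_of_norm_eq_one _ he]
  simpa using norm_integral_le_of_norm_le_const (μ := (OrthGroup.haar : Measure (OrthGroup E)))
    (f := fun R => f (R • e)) (.of_forall fun R => h _ (by rw [OrthGroup.norm_smul, he]))

end SphereMean

/-! ### Legendre polynomials of even degree -/

/-- The mean of `cos ^ (2 * k)` over a period. -/
def cosPowMean (k : ℕ) : ℝ := (Nat.centralBinom k : ℝ) / 4 ^ k

/-- The Legendre polynomial of degree `2 * n`, encoded by the expansion of Laplace's integral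
`P_{2 * n}(t) = (2 * π)⁻¹ ∫ (t + i √(1 - t²) cos θ) ^ (2 * n) dθ`. -/
def evenLegendre (n : ℕ) (t : ℝ) : ℝ :=
  ∑ k ∈ Finset.range (n + 1),
    ((2 * n).choose (2 * k) : ℝ) * t ^ (2 * (n - k)) * (t ^ 2 - 1) ^ k * cosPowMean k

lemma cosPowMean_succ (k : ℕ) :
    cosPowMean (k + 1) = (2 * k + 1) / (2 * k + 2) * cosPowMean k := by
  have h : ((k : ℝ) + 1) * (Nat.centralBinom (k + 1) : ℝ) =
      2 * (2 * k + 1) * Nat.centralBinom k := by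
    exact_mod_cast Nat.succ_mul_centralBinom_succ k
  rw [cosPowMean, cosPowMean, div_mul_div_comm, div_eq_div_iff (by positivity) (by positivity),
    pow_succ]
  linear_combination 2 * 4 ^ k * h

lemma integral_cos_pow_add_two (m : ℕ) :
    (∫ θ in (0 : ℝ)..2 * Real.pi, Real.cos θ ^ (m + 2)) =
      (m + 1) / (m + 2) * ∫ θ in (0 : ℝ)..2 * Real.pi, Real.cos θ ^ m := by
  simp [integral_cos_pow]

lemma integral_cos_pow_two_mul (k : ℕ) :
    (∫ θ in (0 : ℝ)..2 * Real.pi, Real.cos θ ^ (2 * k)) = 2 * Real.pi * cosPowMean k := by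
  induction k with
  | zero => simp [cosPowMean]
  | succ k ih =>
    rw [mul_add_one, integral_cos_pow_add_two, ih, cosPowMean_succ]
    push_cast
    ring

lemma integral_cos_pow_two_mul_add_one (k : ℕ) :
    (∫ θ in (0 : ℝ)..2 * Real.pi, Real.cos θ ^ (2 * k + 1)) = 0 := by
  induction k with
  | zero => simp
  | succ k ih => rw [mul_add_one, add_right_comm, integral_cos_pow_add_two, ih, mul_zero]

lemma sum_range_two_mul_add_one {M : Type*} [AddCommMonoid M] (f : ℕ → M) (n : ℕ) :
    ∑ m ∈ Finset.range (2 * n + 1), f m =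
      (∑ k ∈ Finset.range (n + 1), f (2 * k)) + ∑ k ∈ Finset.range n, f (2 * k + 1) := by
  induction n with
  | zero => simp
  | succ n ih =>
    rw [mul_add_one, Finset.sum_range_succ, Finset.sum_range_succ, ih,
      Finset.sum_range_succ _ (n + 1), Finset.sum_range_succ _ n, Finset.sum_range_succ _ n]
    simp only [mul_add_one]
    abel

lemma integral_add_mul_cos_pow_complex (A B : ℂ) (n : ℕ) :
    (∫ θ in (0 : ℝ)..2 * Real.pi, (A + B * (Real.cos θ : ℂ)) ^ (2 * n)) =
      2 * Real.pi * ∑ k ∈ Finset.range (n + 1),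
        ((2 * n).choose (2 * k) : ℂ) * A ^ (2 * (n - k)) * (B ^ 2) ^ k * (cosPowMean k : ℂ) := by
  have binomial (θ : ℝ) : (A + B * (Real.cos θ : ℂ)) ^ (2 * n) =
      ∑ m ∈ Finset.range (2 * n + 1),
        (B ^ m * A ^ (2 * n - m) * ((2 * n).choose m : ℂ)) * ((Real.cos θ ^ m : ℝ) : ℂ) := by
    rw [add_comm, add_pow]
    refine Finset.sum_congr rfl fun m _ => ?_
    push_cast
    ring
  simp_rw [binomial]
  rw [intervalIntegral.integral_finsetSum fun m _ =>
    Continuous.intervalIntegrable (by fun_prop) _ _]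
  simp_rw [intervalIntegral.integral_const_mul, intervalIntegral.integral_ofReal,
    sum_range_two_mul_add_one, integral_cos_pow_two_mul, integral_cos_pow_two_mul_add_one,
    Complex.ofReal_zero, mul_zero, Finset.sum_const_zero, add_zero, Finset.mul_sum]
  refine Finset.sum_congr rfl fun k _ => ?_
  rw [← Nat.mul_sub, pow_mul B]
  push_cast
  ring

lemma integral_add_mul_cos_pow (A B : ℝ) (n : ℕ) :
    (∫ θ in (0 : ℝ)..2 * Real.pi, (A + B * Real.cos θ) ^ (2 * n)) =
      2 * Real.pi * ∑ k ∈ Finset.range (n + 1),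
        ((2 * n).choose (2 * k) : ℝ) * A ^ (2 * (n - k)) * (B ^ 2) ^ k * cosPowMean k := by
  have h := integral_add_mul_cos_pow_complex A B n
  have cast (θ : ℝ) : ((A : ℂ) + B * (Real.cos θ : ℂ)) ^ (2 * n) =
      (((A + B * Real.cos θ) ^ (2 * n) : ℝ) : ℂ) := by push_cast; ring
  simp_rw [cast, intervalIntegral.integral_ofReal] at h
  exact_mod_cast h

lemma integral_add_mul_cos_add_mul_sin_pow (A B C : ℝ) (n : ℕ) :
    (∫ θ in (0 : ℝ)..2 * Real.pi, (A + B * Real.cos θ + C * Real.sin θ) ^ (2 * n)) =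
      2 * Real.pi * ∑ k ∈ Finset.range (n + 1),
        ((2 * n).choose (2 * k) : ℝ) * A ^ (2 * (n - k)) * (B ^ 2 + C ^ 2) ^ k *
          cosPowMean k := by
  set z : ℂ := ⟨B, C⟩
  have hB : ‖z‖ * Real.cos z.arg = B := Complex.norm_mul_cos_arg z
  have hC : ‖z‖ * Real.sin z.arg = C := Complex.norm_mul_sin_arg z
  have hn : B ^ 2 + C ^ 2 = ‖z‖ ^ 2 := by
    rw [← hB, ← hC]
    linear_combination ‖z‖ ^ 2 * Real.sin_sq_add_cos_sq z.arg
  set F : ℝ → ℝ := fun θ => (A + ‖z‖ * Real.cos θ) ^ (2 * n)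
  have shift (θ : ℝ) : (A + B * Real.cos θ + C * Real.sin θ) ^ (2 * n) = F (θ - z.arg) := by
    simp only [F, Real.cos_sub]
    rw [← hB, ← hC]
    ring
  have periodic : F.Periodic (2 * Real.pi) := fun θ => by simp [F]
  calc (∫ θ in (0 : ℝ)..2 * Real.pi, (A + B * Real.cos θ + C * Real.sin θ) ^ (2 * n))
      = ∫ θ in (0 - z.arg)..(0 - z.arg + 2 * Real.pi), F θ := by
        simp_rw [shift]
        rw [intervalIntegral.integral_comp_sub_right F]
        congr 1
        ring
    _ = ∫ θ in (0 : ℝ)..2 * Real.pi, F θ := by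
        rw [periodic.intervalIntegral_add_eq _ 0, zero_add]
    _ = _ := by rw [hn, integral_add_mul_cos_pow]

lemma two_pi_mul_abs_evenLegendre_le (n : ℕ) {t : ℝ} (ht : t ^ 2 ≤ 1) :
    2 * Real.pi * |evenLegendre n t| ≤
      ∫ θ in (0 : ℝ)..2 * Real.pi, (t ^ 2 + (1 - t ^ 2) * Real.cos θ ^ 2) ^ n := by
  set s := Real.sqrt (1 - t ^ 2)
  have hs : s ^ 2 = 1 - t ^ 2 := Real.sq_sqrt (by linarith)
  have laplace : (∫ θ in (0 : ℝ)..2 * Real.pi,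
      ((t : ℂ) + Complex.I * s * (Real.cos θ : ℂ)) ^ (2 * n)) =
        ((2 * Real.pi * evenLegendre n t : ℝ) : ℂ) := by
    have hI : (Complex.I * s) ^ 2 = ((t ^ 2 - 1 : ℝ) : ℂ) := by
      rw [mul_pow, Complex.I_sq, ← Complex.ofReal_pow, hs]
      push_cast
      ring
    rw [integral_add_mul_cos_pow_complex, hI, evenLegendre]
    push_cast
    rfl
  have norm_integrand (θ : ℝ) : ‖((t : ℂ) + Complex.I * s * (Real.cos θ : ℂ)) ^ (2 * n)‖ =
      (t ^ 2 + (1 - t ^ 2) * Real.cos θ ^ 2) ^ n := by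
    rw [norm_pow, pow_mul, ← Complex.normSq_eq_norm_sq, Complex.normSq_apply, ← hs]
    simp [-Complex.ofReal_cos]
    ring
  calc 2 * Real.pi * |evenLegendre n t|
      = ‖((2 * Real.pi * evenLegendre n t : ℝ) : ℂ)‖ := by
        rw [Complex.norm_real, Real.norm_eq_abs, abs_mul, abs_of_pos Real.two_pi_pos]
    _ ≤ ∫ θ in (0 : ℝ)..2 * Real.pi, ‖((t : ℂ) + Complex.I * s * (Real.cos θ : ℂ)) ^ (2 * n)‖ :=
        laplace ▸ intervalIntegral.norm_integral_le_integral_norm Real.two_pi_pos.le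
    _ = _ := by simp_rw [norm_integrand]

lemma ae_sin_ne_zero : ∀ᵐ θ : ℝ, Real.sin θ ≠ 0 := by
  have countable : (Real.sin ⁻¹' {0}).Countable :=
    (Set.countable_range fun n : ℤ => (n : ℝ) * Real.pi).mono fun _ hx =>
      Real.sin_eq_zero_iff.mp hx
  exact countable.ae_notMem volume

lemma tendsto_integral_laplace_majorant {t : ℝ} (ht : t ^ 2 < 1) :
    Filter.Tendsto (fun n : ℕ => ∫ θ in (0 : ℝ)..2 * Real.pi,
      (t ^ 2 + (1 - t ^ 2) * Real.cos θ ^ 2) ^ n) Filter.atTop (nhds 0) := by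
  have base_eq (θ : ℝ) : t ^ 2 + (1 - t ^ 2) * Real.cos θ ^ 2 =
      1 - (1 - t ^ 2) * Real.sin θ ^ 2 := by
    rw [Real.cos_sq']
    ring
  have base_nonneg (θ : ℝ) : 0 ≤ t ^ 2 + (1 - t ^ 2) * Real.cos θ ^ 2 := by
    have : 0 ≤ 1 - t ^ 2 := by linarith
    positivity
  have tendsto_zero : Filter.Tendsto (fun n : ℕ => ∫ θ in (0 : ℝ)..2 * Real.pi,
      (t ^ 2 + (1 - t ^ 2) * Real.cos θ ^ 2) ^ n) Filter.atTop
      (nhds (∫ _ in (0 : ℝ)..2 * Real.pi, (0 : ℝ))) := by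
    refine intervalIntegral.tendsto_integral_filter_of_dominated_convergence (fun _ => 1)
      (.of_forall fun _ => Continuous.aestronglyMeasurable (by fun_prop))
      (.of_forall fun n => .of_forall fun θ _ => ?_) (continuous_const.intervalIntegrable _ _) ?_
    · rw [Real.norm_of_nonneg (pow_nonneg (base_nonneg θ) n)]
      refine pow_le_one₀ (base_nonneg θ) ?_
      nlinarith [base_eq θ, sq_nonneg (Real.sin θ)]
    · filter_upwards [ae_sin_ne_zero] with θ hθ
      intro _
      refine tendsto_pow_atTop_nhds_zero_of_lt_one (base_nonneg θ) ?_
      have : 0 < (1 - t ^ 2) * Real.sin θ ^ 2 := mul_pos (by linarith) (by positivity)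
      linarith [base_eq θ]
  simpa using tendsto_zero

lemma tendsto_evenLegendre {t : ℝ} (ht : t ^ 2 < 1) :
    Filter.Tendsto (fun n => evenLegendre n t) Filter.atTop (nhds 0) := by
  refine squeeze_zero_norm (fun n => ?_)
    (by simpa using (tendsto_integral_laplace_majorant ht).div_const (2 * Real.pi))
  rw [le_div_iff₀ Real.two_pi_pos, Real.norm_eq_abs, mul_comm]
  exact two_pi_mul_abs_evenLegendre_le n ht.le

lemma evenLegendre_one (n : ℕ) : evenLegendre n 1 = 1 := by
  rw [evenLegendre, Finset.sum_range_succ', Finset.sum_eq_zero] <;> simp [cosPowMean]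

lemma evenLegendre_neg (n : ℕ) (t : ℝ) : evenLegendre n (-t) = evenLegendre n t := by
  simp_rw [evenLegendre, pow_mul (-t), pow_mul t, neg_sq]

lemma evenLegendre_zero (n : ℕ) : evenLegendre n 0 = (-1) ^ n * cosPowMean n := by
  rw [evenLegendre, Finset.sum_range_succ, Finset.sum_eq_zero fun k hk => ?_]
  · simp
  · have : 2 * (n - k) ≠ 0 := by have := Finset.mem_range.mp hk; omega
    simp [this]

/-- The eigenvalue on spherical harmonics of degree `2 * n` of summation over the face-centred cubic
configuration: up to sign, a minimal vector forms the angles `0`, `π/3` (four times) and `π/2` with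
the six pairs `±x` of minimal vectors. -/
def fccEigenvalue (n : ℕ) : ℝ := 1 + 4 * evenLegendre n (1 / 2) + evenLegendre n 0

lemma two_pow_dvd_two_pow_mul_centralBinom {v k j : ℕ} (h : 2 ^ v ∣ Nat.centralBinom (k + j)) :
    2 ^ v ∣ 2 ^ j * Nat.centralBinom k := by
  induction j generalizing k with
  | zero => simpa using h
  | succ j ih =>
    have recursion : (2 * k + 1) * (2 ^ (j + 1) * Nat.centralBinom k) =
        2 ^ j * Nat.centralBinom (k + 1) * (k + 1) := by
      rw [mul_assoc, mul_comm _ (k + 1), Nat.succ_mul_centralBinom_succ]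
      ring
    refine Nat.Coprime.dvd_of_dvd_mul_left (Nat.Coprime.pow_left v ?_)
      (recursion ▸ (ih (k := k + 1) (by rwa [add_right_comm])).mul_right _)
    simp

lemma two_pow_succ_dvd_centralBinom_mul_four_pow {v k j : ℕ} (hj : j ≠ 0)
    (h : 2 ^ v ∣ Nat.centralBinom (k + j)) :
    (2 : ℤ) ^ (v + 1) ∣ (Nat.centralBinom k : ℤ) * 4 ^ j := by
  have : 2 ^ (v + 1) ∣ Nat.centralBinom k * 4 ^ j :=
    calc 2 ^ (v + 1) ∣ 2 ^ j * Nat.centralBinom k * 2 :=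
          Nat.mul_dvd_mul_right (two_pow_dvd_two_pow_mul_centralBinom h) 2
      _ = Nat.centralBinom k * 2 ^ (j + 1) := by ring
      _ ∣ Nat.centralBinom k * (2 ^ 2) ^ j := by
          rw [← pow_mul]
          exact Nat.mul_dvd_mul_left _ (pow_dvd_pow 2 (by omega))
  exact_mod_cast this

lemma four_pow_mul_evenLegendre_half (n : ℕ) : (4 : ℝ) ^ (2 * n) * evenLegendre n (1 / 2) =
    ∑ k ∈ Finset.range (n + 1),
      ((2 * n).choose (2 * k) : ℝ) * ((-3) ^ k * (Nat.centralBinom k * 4 ^ (n - k))) := by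
  unfold evenLegendre cosPowMean
  rw [Finset.mul_sum]
  refine Finset.sum_congr rfl fun k hk => ?_
  obtain ⟨j, rfl⟩ := Nat.exists_eq_add_of_le (Nat.lt_succ_iff.mp (Finset.mem_range.mp hk))
  have half_sq : (1 / 2 : ℝ) ^ 2 = 1 / 4 := by norm_num
  rw [Nat.add_sub_cancel_left, pow_mul (1 / 2 : ℝ), half_sq,
    show (1 / 4 : ℝ) - 1 = -3 / 4 by norm_num, div_pow, div_pow, one_pow]
  field_simp
  ring

lemma four_pow_mul_fccEigenvalue_succ (m : ℕ) : (4 : ℝ) ^ (2 * m + 1) * fccEigenvalue (m + 1) =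
    ((4 ^ (2 * m + 1) + ∑ k ∈ Finset.range (m + 1), ((2 * (m + 1)).choose (2 * k) : ℤ) *
        ((-3) ^ k * (Nat.centralBinom k * 4 ^ (m + 1 - k))) +
      (-1) ^ (m + 1) * (Nat.centralBinom (m + 1) * 4 ^ m) +
      (-3) ^ (m + 1) * Nat.centralBinom (m + 1) : ℤ) : ℝ) := by
  have half := four_pow_mul_evenLegendre_half (m + 1)
  rw [Finset.sum_range_succ, Nat.choose_self, Nat.sub_self] at half
  have zero : (4 : ℝ) ^ (m + 1) * cosPowMean (m + 1) = Nat.centralBinom (m + 1) := by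
    unfold cosPowMean
    field_simp
  rw [fccEigenvalue, evenLegendre_zero]
  push_cast at half ⊢
  linear_combination half + (-1) ^ (m + 1) * 4 ^ m * zero

-- With `2 ^ v` the exact power of two dividing `centralBinom n`, the integer
-- `4 ^ (2 * n - 1) * fccEigenvalue n` is congruent modulo `2 ^ (v + 1)` to its last summand
-- `(-3) ^ n * centralBinom n`.
lemma fccEigenvalue_ne_zero {n : ℕ} (hn : 2 ≤ n) : fccEigenvalue n ≠ 0 := by
  obtain ⟨m, rfl⟩ := Nat.exists_eq_add_of_le' hn
  intro h0
  obtain ⟨v, w, hw, hv⟩ := Nat.exists_eq_two_pow_mul_odd (Nat.centralBinom_ne_zero (m + 2))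
  have dvd_of_add_eq (k j : ℕ) (hj : j ≠ 0) (hkj : k + j = m + 2) :
      (2 : ℤ) ^ (v + 1) ∣ (Nat.centralBinom k : ℤ) * 4 ^ j :=
    two_pow_succ_dvd_centralBinom_mul_four_pow hj (hkj ▸ hv ▸ dvd_mul_right _ _)
  have dvd_first : (2 : ℤ) ^ (v + 1) ∣ 4 ^ (2 * (m + 1) + 1) := by
    have := dvd_of_add_eq 0 (m + 2) (by omega) (by omega)
    rw [Nat.centralBinom_zero, Nat.cast_one, one_mul] at this
    exact this.trans (pow_dvd_pow _ (by omega))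
  have dvd_sum : (2 : ℤ) ^ (v + 1) ∣ ∑ k ∈ Finset.range (m + 2),
      ((2 * (m + 2)).choose (2 * k) : ℤ) *
        ((-3) ^ k * (Nat.centralBinom k * 4 ^ (m + 2 - k))) :=
    Finset.dvd_sum fun k hk => by
      have := Finset.mem_range.mp hk
      exact ((dvd_of_add_eq k _ (by omega) (by omega)).mul_left _).mul_left _
  have dvd_third : (2 : ℤ) ^ (v + 1) ∣ (Nat.centralBinom (m + 2) : ℤ) * 4 ^ (m + 1) := by
    rw [hv]
    exact ⟨w * 2 * 4 ^ m, by push_cast; ring⟩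
  have dvd_last : (2 : ℤ) ^ (v + 1) ∣ (-3) ^ (m + 2) * Nat.centralBinom (m + 2) := by
    have h := four_pow_mul_fccEigenvalue_succ (m + 1)
    rw [h0, mul_zero] at h
    rw [← dvd_add_right ((dvd_first.add dvd_sum).add (dvd_third.mul_left _))]
    exact (Int.cast_eq_zero.mp h.symm).symm ▸ dvd_zero _
  rw [hv, Nat.cast_mul, Nat.cast_pow, mul_left_comm, pow_succ, Nat.cast_ofNat,
    mul_dvd_mul_iff_left (by positivity), ← even_iff_two_dvd] at dvd_last
  exact Int.not_even_iff_odd.mpr (.mul (.pow (by decide)) (mod_cast hw)) dvd_last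

lemma tendsto_fccEigenvalue : Filter.Tendsto fccEigenvalue Filter.atTop (nhds 1) := by
  have h := (((tendsto_evenLegendre (t := 1 / 2) (by norm_num)).const_mul 4).const_add 1).add
    (tendsto_evenLegendre (t := 0) (by norm_num))
  rwa [mul_zero, add_zero, add_zero] at h

lemma exists_forall_le_abs_fccEigenvalue :
    ∃ c > (0 : ℝ), ∀ n, 2 ≤ n → c ≤ |fccEigenvalue n| := by
  have hlim := ((Filter.tendsto_add_atTop_iff_nat 2).mpr tendsto_fccEigenvalue).abs.inv₀
    (by norm_num)
  obtain ⟨C, hC⟩ := hlim.bddAbove_range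
  have inv_le (n : ℕ) : |fccEigenvalue (n + 2)|⁻¹ ≤ C := hC ⟨n, rfl⟩
  have pos (n : ℕ) : 0 < |fccEigenvalue (n + 2)| :=
    abs_pos.mpr (fccEigenvalue_ne_zero (by omega))
  have hCpos : 0 < C := (inv_pos.mpr (pos 0)).trans_le (inv_le 0)
  refine ⟨C⁻¹, inv_pos.mpr hCpos, fun n hn => ?_⟩
  obtain ⟨m, rfl⟩ := Nat.exists_eq_add_of_le' hn
  exact inv_le_of_inv_le₀ (pos m) (inv_le m)

/-! ### Translation of zonal functions on the orthogonal group -/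

section RightTranslation

variable {E : Type*} [NormedAddCommGroup E] [InnerProductSpace ℝ E] [CompleteSpace E]
  [FiniteDimensional ℝ E]

/-- The Hilbert space of square integrable functions on the orthogonal group. -/
abbrev OrthL2 (E : Type*) [NormedAddCommGroup E] [InnerProductSpace ℝ E] [CompleteSpace E]
    [FiniteDimensional ℝ E] :=
  Lp ℝ 2 (OrthGroup.haar : Measure (OrthGroup E))

namespace OrthL2

/-- Right translation `(rightTranslation S F) R = F (R * S)`. -/
def rightTranslation (S : OrthGroup E) : OrthL2 E →ₗᵢ[ℝ] OrthL2 E :=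
  Lp.compMeasurePreservingₗᵢ ℝ (· * S) (measurePreserving_mul_right OrthGroup.haar S)

/-- The class of a continuous function on the orthogonal group. -/
def ofContinuous : C(OrthGroup E, ℝ) →L[ℝ] OrthL2 E := ContinuousMap.toLp 2 OrthGroup.haar ℝ

lemma coeFn_rightTranslation (S : OrthGroup E) (F : OrthL2 E) :
    rightTranslation S F =ᵐ[OrthGroup.haar] fun R => F (R * S) :=
  Lp.coeFn_compMeasurePreserving F (measurePreserving_mul_right OrthGroup.haar S)

lemma coeFn_ofContinuous (F : C(OrthGroup E, ℝ)) : ofContinuous F =ᵐ[OrthGroup.haar] F :=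
  ContinuousMap.coeFn_toLp OrthGroup.haar F

lemma rightTranslation_ofContinuous (S : OrthGroup E) (F : C(OrthGroup E, ℝ)) :
    rightTranslation S (ofContinuous F) = ofContinuous (F.comp (.mulRight S)) := by
  apply Lp.ext
  filter_upwards [coeFn_rightTranslation S (ofContinuous F), coeFn_ofContinuous (F.comp _),
    (measurePreserving_mul_right OrthGroup.haar S).quasiMeasurePreserving.ae_eq_comp
      (coeFn_ofContinuous F)] with R h1 h2 h3
  rw [h1, h2]
  exact h3

lemma rightTranslation_rightTranslation (S T : OrthGroup E) (F : OrthL2 E) :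
    rightTranslation S (rightTranslation T F) = rightTranslation (S * T) F := by
  apply Lp.ext
  filter_upwards [coeFn_rightTranslation S (rightTranslation T F),
    coeFn_rightTranslation (S * T) F,
    (measurePreserving_mul_right OrthGroup.haar S).quasiMeasurePreserving.ae_eq_comp
      (coeFn_rightTranslation T F)] with R h1 h2 h3
  rw [h1, h2, ← mul_assoc]
  exact h3

lemma inner_rightTranslation_rightTranslation (S T : OrthGroup E) (F H : OrthL2 E) :
    ⟪rightTranslation S F, rightTranslation T H⟫ = ⟪rightTranslation (T⁻¹ * S) F, H⟫ := by
  rw [← (rightTranslation T).inner_map_map (rightTranslation (T⁻¹ * S) F),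
    rightTranslation_rightTranslation, mul_inv_cancel_left]

lemma inner_ofContinuous (F : C(OrthGroup E, ℝ)) (H : OrthL2 E) :
    ⟪ofContinuous F, H⟫ = ∫ R, F R * H R ∂OrthGroup.haar := by
  rw [L2.inner_def]
  refine integral_congr_ae ?_
  filter_upwards [coeFn_ofContinuous F] with R hR
  simp [hR, mul_comm]

lemma inner_ofContinuous_ofContinuous (F H : C(OrthGroup E, ℝ)) :
    ⟪ofContinuous F, ofContinuous H⟫ = ∫ R, F R * H R ∂OrthGroup.haar := by
  rw [inner_ofContinuous]
  refine integral_congr_ae ?_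
  filter_upwards [coeFn_ofContinuous H] with R hR
  rw [hR]

lemma norm_ofContinuous_sq (F : C(OrthGroup E, ℝ)) :
    ‖ofContinuous F‖ ^ 2 = ∫ R, F R ^ 2 ∂OrthGroup.haar := by
  simp_rw [← real_inner_self_eq_norm_sq, inner_ofContinuous_ofContinuous, sq]

lemma integrable (H : OrthL2 E) : Integrable H OrthGroup.haar :=
  (Lp.memLp H).integrable one_le_two

end OrthL2

end RightTranslation

/-- The third vector of the standard basis, the axis of the zonal functions. -/
def pole : Euc 3 := EuclideanSpace.single 2 1

lemma norm_pole : ‖pole‖ = 1 := by simp [pole]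

lemma inner_pole (x : Euc 3) : ⟪x, pole⟫ = x 2 := by
  simp [pole, EuclideanSpace.inner_single_right]

/-- The rotation by the angle `θ` about `pole`. -/
def poleRotation (θ : ℝ) : OrthGroup (Euc 3) :=
  ⟨Matrix.toEuclideanCLM (𝕜 := ℝ)
    !![Real.cos θ, -Real.sin θ, 0; Real.sin θ, Real.cos θ, 0; 0, 0, 1], by
      refine Unitary.map_mem _ (Matrix.mem_unitaryGroup_iff.mpr ?_)
      ext i j
      fin_cases i <;> fin_cases j <;>
        simp [Matrix.mul_apply, Fin.sum_univ_three, ← sq, mul_comm]⟩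

lemma poleRotation_smul (θ : ℝ) (x : Euc 3) : poleRotation θ • x =
    !₂[Real.cos θ * x 0 - Real.sin θ * x 1, Real.sin θ * x 0 + Real.cos θ * x 1, x 2] := by
  ext i
  fin_cases i <;>
    simp [poleRotation, dotProduct, Fin.sum_univ_three, sub_eq_add_neg]

lemma poleRotation_smul_pole (θ : ℝ) : poleRotation θ • pole = pole := by
  rw [poleRotation_smul]
  ext i
  fin_cases i <;> simp [pole]

lemma continuous_poleRotation : Continuous poleRotation := by
  refine Continuous.subtype_mk ?_ _
  refine (LinearMap.continuous_of_finiteDimensional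
    (Matrix.toEuclideanCLM (n := Fin 3) (𝕜 := ℝ)).toAlgEquiv.toLinearMap).comp ?_
  fun_prop

lemma inner_mul_poleRotation_mul_smul (R S : OrthGroup (Euc 3)) (θ : ℝ) (a : Euc 3) :
    ⟪(R * poleRotation θ * S) • pole, a⟫ = ⟪S • pole, pole⟫ * ⟪R • pole, a⟫ +
      ((S • pole) 0 * (R⁻¹ • a) 0 + (S • pole) 1 * (R⁻¹ • a) 1) * Real.cos θ +
      ((S • pole) 0 * (R⁻¹ • a) 1 - (S • pole) 1 * (R⁻¹ • a) 0) * Real.sin θ := by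
  rw [mul_assoc, mul_smul, mul_smul, OrthGroup.inner_smul_left, OrthGroup.inner_smul_left R pole,
    real_inner_comm _ pole, inner_pole, inner_pole, poleRotation_smul, PiLp.inner_apply,
    Fin.sum_univ_three]
  simp
  ring

/-- The zonal function `R ↦ ⟪R • pole, a⟫`. -/
def zonal (a : Euc 3) : C(OrthGroup (Euc 3), ℝ) := ⟨fun R => ⟪R • pole, a⟫, by fun_prop⟩

lemma zonal_apply (a : Euc 3) (R : OrthGroup (Euc 3)) : zonal a R = ⟪R • pole, a⟫ := rfl

lemma abs_zonal_le (a : Euc 3) (R : OrthGroup (Euc 3)) : |zonal a R| ≤ ‖a‖ := by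
  simpa [zonal_apply, OrthGroup.norm_smul, norm_pole] using abs_real_inner_le_norm (R • pole) a

/-- Even powers of zonal functions, as elements of `L²`. -/
def zonalPow (a : Euc 3) (k : ℕ) : OrthL2 (Euc 3) := OrthL2.ofContinuous (zonal a ^ (2 * k))

lemma inner_zonalPow (a : Euc 3) (k : ℕ) (h : OrthL2 (Euc 3)) :
    ⟪zonalPow a k, h⟫ = ∫ R, zonal a R ^ (2 * k) * h R ∂OrthGroup.haar :=
  OrthL2.inner_ofContinuous _ h

/-- The closed span of the even zonal powers of degree at most `2 * n`; it plays the role of the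
even spherical polynomials of degree at most `2 * n`. -/
def zonalSpan (n : ℕ) : Submodule ℝ (OrthL2 (Euc 3)) :=
  (Submodule.span ℝ {F | ∃ a k, k ≤ n ∧ zonalPow a k = F}).topologicalClosure

lemma zonalPow_mem_zonalSpan {a : Euc 3} {k n : ℕ} (h : k ≤ n) : zonalPow a k ∈ zonalSpan n :=
  Submodule.le_topologicalClosure _ (Submodule.subset_span ⟨a, k, h, rfl⟩)

lemma zonalSpan_mono : Monotone zonalSpan := fun _ _ h =>
  Submodule.topologicalClosure_mono <| Submodule.span_mono fun _ ⟨a, k, hk, hF⟩ =>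
    ⟨a, k, hk.trans h, hF⟩

instance (n : ℕ) : (zonalSpan n).HasOrthogonalProjection := by
  unfold zonalSpan
  infer_instance

lemma eq_of_mem_zonalSpan {G : Type*} [TopologicalSpace G] [T2Space G] [AddCommMonoid G]
    [Module ℝ G] {n : ℕ} {Φ Ψ : OrthL2 (Euc 3) →L[ℝ] G}
    (h : ∀ a k, k ≤ n → Φ (zonalPow a k) = Ψ (zonalPow a k)) {F : OrthL2 (Euc 3)}
    (hF : F ∈ zonalSpan n) : Φ F = Ψ F := by
  refine ContinuousLinearMap.eqOn_closure_span (f := Φ) (g := Ψ) ?_ hF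
  rintro _ ⟨a, k, hk, rfl⟩
  exact h a k hk

lemma mem_zonalSpan_orthogonal {n : ℕ} {h : OrthL2 (Euc 3)} :
    h ∈ (zonalSpan n)ᗮ ↔ ∀ a k, k ≤ n → ⟪zonalPow a k, h⟫ = 0 := by
  refine ⟨fun H a k hk => H _ (zonalPow_mem_zonalSpan hk), fun H F hF => ?_⟩
  rw [real_inner_comm]
  refine eq_of_mem_zonalSpan (Φ := innerSL ℝ h) (Ψ := 0) (fun a k hk => ?_) hF
  simpa [real_inner_comm] using H a k hk

/-- Invariance under right translation by the rotations about `pole`: functions of `R • pole`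
are axis invariant. -/
def IsAxisInvariant (h : OrthL2 (Euc 3)) : Prop :=
  ∀ θ : ℝ, OrthL2.rightTranslation (poleRotation θ) h = h

lemma isAxisInvariant_of_mem_zonalSpan {n : ℕ} {F : OrthL2 (Euc 3)} (hF : F ∈ zonalSpan n) :
    IsAxisInvariant F := by
  intro θ
  refine eq_of_mem_zonalSpan
    (Φ := (OrthL2.rightTranslation (poleRotation θ)).toContinuousLinearMap) (Ψ := .id ℝ _)
    (fun a k _ => ?_) hF
  simp only [LinearIsometry.coe_toContinuousLinearMap, ContinuousLinearMap.coe_id', id_eq]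
  rw [zonalPow, OrthL2.rightTranslation_ofContinuous]
  congr 1
  ext R
  simp [zonal_apply, mul_smul, poleRotation_smul_pole]

section Averaging

open Polynomial

/-- The average of `⟪(R * poleRotation θ * S) • pole, a⟫ ^ (2 * n)` over `θ`, as a polynomial in
`⟪R • pole, a⟫ ^ 2`; here `t = ⟪S • pole, pole⟫` and `r = ‖a‖ ^ 2`. -/
def zonalAverage (n : ℕ) (t r : ℝ) : ℝ[X] :=
  ∑ k ∈ Finset.range (n + 1), C (((2 * n).choose (2 * k) : ℝ) * cosPowMean k) *
    ((C (t ^ 2) * X) ^ (n - k) * (C (t ^ 2 - 1) * (X - C r)) ^ k)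

lemma natDegree_zonalAverage_term_le {n k : ℕ} (h : k ≤ n) (t r : ℝ) :
    ((C (t ^ 2) * X : ℝ[X]) ^ (n - k) * (C (t ^ 2 - 1) * (X - C r)) ^ k).natDegree ≤ n := by
  calc _ ≤ (n - k) * 1 + k * 1 := natDegree_mul_le_of_le
        (natDegree_pow_le_of_le _ ((natDegree_C_mul_le _ _).trans natDegree_X_le))
        (natDegree_pow_le_of_le _ ((natDegree_C_mul_le _ _).trans (natDegree_X_sub_C_le r)))
    _ = n := by omega

lemma natDegree_zonalAverage_le (n : ℕ) (t r : ℝ) : (zonalAverage n t r).natDegree ≤ n :=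
  natDegree_sum_le_of_forall_le _ _ fun _ hk => (natDegree_C_mul_le _ _).trans
    (natDegree_zonalAverage_term_le (Nat.lt_succ_iff.mp (Finset.mem_range.mp hk)) t r)

lemma coeff_zonalAverage (n : ℕ) (t r : ℝ) :
    (zonalAverage n t r).coeff n = evenLegendre n t := by
  rw [zonalAverage, finsetSum_coeff, evenLegendre]
  refine Finset.sum_congr rfl fun k hk => ?_
  have hX : (C (t ^ 2) * X).natDegree ≤ 1 := (natDegree_C_mul_le _ _).trans natDegree_X_le
  have hlin : (C (t ^ 2 - 1) * (X - C r)).natDegree ≤ 1 :=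
    (natDegree_C_mul_le _ _).trans (natDegree_X_sub_C_le r)
  have hcoeff : ((C (t ^ 2) * X : ℝ[X]) ^ (n - k) * (C (t ^ 2 - 1) * (X - C r)) ^ k).coeff n =
      (t ^ 2) ^ (n - k) * (t ^ 2 - 1) ^ k := by
    have h := coeff_mul_add_eq_of_natDegree_le
      (natDegree_pow_le_of_le (n - k) hX) (natDegree_pow_le_of_le k hlin)
    rw [coeff_pow_of_natDegree_le hX, coeff_pow_of_natDegree_le hlin,
      show (n - k) * 1 + k * 1 = n by have := Finset.mem_range.mp hk; omega] at h
    rw [h, coeff_C_mul, coeff_C_mul, coeff_X_one, coeff_sub, coeff_X_one, coeff_C_succ, sub_zero,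
      mul_one, mul_one]
  rw [coeff_C_mul, hcoeff, pow_mul]
  ring

lemma integral_zonal_mul_poleRotation_mul_pow (n : ℕ) (R S : OrthGroup (Euc 3)) (a : Euc 3) :
    (∫ θ in (0 : ℝ)..2 * Real.pi, zonal a (R * poleRotation θ * S) ^ (2 * n)) =
      2 * Real.pi * (zonalAverage n ⟪S • pole, pole⟫ (‖a‖ ^ 2)).eval (zonal a R ^ 2) := by
  have hS : ‖S • pole‖ ^ 2 = 1 := by rw [OrthGroup.norm_smul, norm_pole, one_pow]
  have ha : ‖R⁻¹ • a‖ ^ 2 = ‖a‖ ^ 2 := by rw [OrthGroup.norm_smul]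
  have hR : ⟪R • pole, a⟫ = (R⁻¹ • a) 2 := by
    rw [OrthGroup.inner_smul_left, real_inner_comm, inner_pole]
  simp only [EuclideanSpace.norm_sq_eq (S • pole), EuclideanSpace.norm_sq_eq (R⁻¹ • a),
    Fin.sum_univ_three, Real.norm_eq_abs, sq_abs] at hS ha
  have hBC : ((S • pole) 0 * (R⁻¹ • a) 0 + (S • pole) 1 * (R⁻¹ • a) 1) ^ 2 +
      ((S • pole) 0 * (R⁻¹ • a) 1 - (S • pole) 1 * (R⁻¹ • a) 0) ^ 2 =
      (⟪S • pole, pole⟫ ^ 2 - 1) * (⟪R • pole, a⟫ ^ 2 - ‖a‖ ^ 2) := by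
    rw [hR, inner_pole, ← ha]
    linear_combination ((R⁻¹ • a) 0 ^ 2 + (R⁻¹ • a) 1 ^ 2) * hS
  simp_rw [zonal_apply, inner_mul_poleRotation_mul_smul]
  rw [integral_add_mul_cos_add_mul_sin_pow, hBC, zonalAverage, eval_finsetSum]
  congr 1
  refine Finset.sum_congr rfl fun k _ => ?_
  simp only [eval_mul, eval_C, eval_pow, eval_X, eval_sub, pow_mul, mul_pow]
  ring

end Averaging

lemma integrable_zonal_pow_mul (a : Euc 3) (k : ℕ) (h : OrthL2 (Euc 3)) :
    Integrable (fun R => zonal a R ^ k * h R) OrthGroup.haar := by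
  refine (OrthL2.integrable h).bdd_mul (c := ‖a‖ ^ k)
    (by fun_prop : Continuous fun R => zonal a R ^ k).aestronglyMeasurable ?_
  filter_upwards with R
  rw [norm_pow]
  exact pow_le_pow_left₀ (norm_nonneg _) (abs_zonal_le a R) k

lemma two_pi_mul_inner_rightTranslation_zonalPow (n : ℕ) (S : OrthGroup (Euc 3)) (a : Euc 3)
    {h : OrthL2 (Euc 3)} (hax : IsAxisInvariant h) :
    2 * Real.pi * ⟪OrthL2.rightTranslation S (zonalPow a n), h⟫ =
      ∫ R, (∫ θ in (0 : ℝ)..2 * Real.pi, zonal a (R * poleRotation θ * S) ^ (2 * n)) * h R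
        ∂OrthGroup.haar := by
  have hθ (θ : ℝ) : ⟪OrthL2.rightTranslation S (zonalPow a n), h⟫ =
      ∫ R, zonal a (R * poleRotation θ * S) ^ (2 * n) * h R ∂OrthGroup.haar := by
    rw [← (OrthL2.rightTranslation (poleRotation θ)).inner_map_map, hax θ,
      OrthL2.rightTranslation_rightTranslation, zonalPow, OrthL2.rightTranslation_ofContinuous,
      OrthL2.inner_ofContinuous]
    simp [mul_assoc]
  calc _ = ∫ θ in (0 : ℝ)..2 * Real.pi,
        ∫ R, zonal a (R * poleRotation θ * S) ^ (2 * n) * h R ∂OrthGroup.haar := by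
        simp_rw [← hθ]
        simp
    _ = _ := by
        simp_rw [intervalIntegral.integral_of_le Real.two_pi_pos.le, ← integral_mul_const]
        refine integral_integral_swap
          (((OrthL2.integrable h).comp_snd _).bdd_mul (c := ‖a‖ ^ (2 * n)) ?_ ?_)
        · have := continuous_poleRotation
          exact Continuous.aestronglyMeasurable (by fun_prop)
        · filter_upwards with p
          rw [norm_pow]
          exact pow_le_pow_left₀ (norm_nonneg _) (abs_zonal_le a _) _

lemma inner_rightTranslation_zonalPow (n : ℕ) (S : OrthGroup (Euc 3)) (a : Euc 3)
    {h : OrthL2 (Euc 3)} (hax : IsAxisInvariant h)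
    (hlow : ∀ k < n, ⟪zonalPow a k, h⟫ = 0) :
    ⟪OrthL2.rightTranslation S (zonalPow a n), h⟫ =
      evenLegendre n ⟪S • pole, pole⟫ * ⟪zonalPow a n, h⟫ := by
  refine mul_left_cancel₀ Real.two_pi_pos.ne' ?_
  rw [two_pi_mul_inner_rightTranslation_zonalPow n S a hax]
  simp_rw [integral_zonal_mul_poleRotation_mul_pow, mul_assoc (2 * Real.pi)]
  rw [integral_const_mul]
  simp_rw [Polynomial.eval_eq_sum_range' (Nat.lt_succ_of_le (natDegree_zonalAverage_le n _ _)),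
    Finset.sum_mul, mul_assoc, ← pow_mul]
  rw [integral_finsetSum _ fun k _ => (integrable_zonal_pow_mul a _ h).const_mul _]
  simp_rw [integral_const_mul, ← inner_zonalPow]
  rw [Finset.sum_range_succ, coeff_zonalAverage, Finset.sum_eq_zero fun k hk => ?_, zero_add]
  rw [hlow k (Finset.mem_range.mp hk), mul_zero]

/-- Funk–Hecke: translations act on the part of degree exactly `2 * (n + 1)` through the Legendre
polynomial of that degree. -/
lemma inner_rightTranslation_of_mem_zonalSpan {n : ℕ} (S : OrthGroup (Euc 3))
    {F h : OrthL2 (Euc 3)} (hF : F ∈ zonalSpan (n + 1)) (hax : IsAxisInvariant h)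
    (hh : h ∈ (zonalSpan n)ᗮ) :
    ⟪OrthL2.rightTranslation S F, h⟫ = evenLegendre (n + 1) ⟪S • pole, pole⟫ * ⟪F, h⟫ := by
  rw [mem_zonalSpan_orthogonal] at hh
  rw [real_inner_comm, real_inner_comm h F]
  refine eq_of_mem_zonalSpan
    (Φ := innerSL ℝ h ∘L (OrthL2.rightTranslation S).toContinuousLinearMap)
    (Ψ := evenLegendre (n + 1) ⟪S • pole, pole⟫ • innerSL ℝ h) (fun a k hk => ?_) hF
  simp only [ContinuousLinearMap.comp_apply, LinearIsometry.coe_toContinuousLinearMap,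
    innerSL_apply_apply, smul_apply, smul_eq_mul]
  rw [real_inner_comm, real_inner_comm _ h, inner_rightTranslation_zonalPow k S a hax
    fun j hj => hh a j (by omega)]
  rcases hk.eq_or_lt with rfl | hlt
  · rfl
  · rw [hh a k (by omega), mul_zero, mul_zero]

/-! ### The spectral gap of the face-centred cubic configuration -/

/-- Integer coordinates of `fcc`. -/
def fccInt : Fin 6 → Fin 3 → ℤ :=
  ![![1, 1, 0], ![1, -1, 0], ![1, 0, 1], ![1, 0, -1], ![0, 1, 1], ![0, 1, -1]]

/-- One vector of each antipodal pair of minimal vectors of the face-centred cubic lattice,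
normalised to length one. -/
def fcc (j : Fin 6) : Euc 3 := WithLp.toLp 2 fun i => (fccInt j i : ℝ) / Real.sqrt 2

lemma fcc_apply (j : Fin 6) (i : Fin 3) : fcc j i = (fccInt j i : ℝ) / Real.sqrt 2 := rfl

lemma inner_fcc_fcc (j l : Fin 6) :
    ⟪fcc j, fcc l⟫ = ((∑ i, fccInt j i * fccInt l i : ℤ) : ℝ) / 2 := by
  rw [PiLp.inner_apply]
  simp only [fcc_apply, RCLike.inner_apply, conj_trivial]
  push_cast
  rw [Finset.sum_div]
  refine Finset.sum_congr rfl fun i _ => ?_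
  rw [div_mul_div_comm, Real.mul_self_sqrt zero_le_two, mul_comm]

lemma norm_fcc (j : Fin 6) : ‖fcc j‖ = 1 := by
  have hint : ∑ i, fccInt j i * fccInt j i = 2 := by revert j; decide
  rw [norm_eq_sqrt_real_inner, inner_fcc_fcc, hint]
  norm_num

lemma sum_evenLegendre_inner_fcc (n : ℕ) (l : Fin 6) :
    ∑ j, evenLegendre n ⟪fcc j, fcc l⟫ = fccEigenvalue n := by
  have hgram : ∀ l, (Finset.univ.val.map fun j => |∑ i, fccInt j i * fccInt l i|) =
      {2, 1, 1, 1, 1, 0} := by decide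
  have habs (z : ℤ) : evenLegendre n (z / 2) = evenLegendre n ((|z| : ℤ) / 2) := by
    rcases abs_choice z with h | h <;> rw [h]
    rw [Int.cast_neg, neg_div, evenLegendre_neg]
  have h := congrArg (fun s => (s.map fun z : ℤ => evenLegendre n (z / 2)).sum) (hgram l)
  simp only [Multiset.map_map, Function.comp_def, ← habs, ← inner_fcc_fcc] at h
  refine Eq.trans h ?_
  simp [fccEigenvalue, evenLegendre_one]
  ring

lemma exists_smul_pole_eq_fcc (j : Fin 6) : ∃ S : OrthGroup (Euc 3), S • pole = fcc j :=
  OrthGroup.exists_smul_eq (norm_pole.trans (norm_fcc j).symm)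

/-- The operator sending `R ↦ f (R • pole)` to `R ↦ ∑ j, f (R • fcc j)`. -/
def fccOperator : OrthL2 (Euc 3) →L[ℝ] OrthL2 (Euc 3) :=
  ∑ j, (OrthL2.rightTranslation (exists_smul_pole_eq_fcc j).choose).toContinuousLinearMap

lemma fccOperator_apply (F : OrthL2 (Euc 3)) : fccOperator F =
    ∑ j, OrthL2.rightTranslation (exists_smul_pole_eq_fcc j).choose F := by
  simp [fccOperator]

lemma inner_fccOperator_fccOperator {n : ℕ} {F h : OrthL2 (Euc 3)} (hF : F ∈ zonalSpan (n + 1))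
    (hax : IsAxisInvariant h) (hh : h ∈ (zonalSpan n)ᗮ) :
    ⟪fccOperator F, fccOperator h⟫ = 6 * fccEigenvalue (n + 1) * ⟪F, h⟫ := by
  have hterm (j l : Fin 6) : ⟪OrthL2.rightTranslation (exists_smul_pole_eq_fcc j).choose F,
      OrthL2.rightTranslation (exists_smul_pole_eq_fcc l).choose h⟫ =
      evenLegendre (n + 1) ⟪fcc j, fcc l⟫ * ⟪F, h⟫ := by
    rw [OrthL2.inner_rightTranslation_rightTranslation,
      inner_rightTranslation_of_mem_zonalSpan _ hF hax hh, mul_smul, OrthGroup.inner_smul_left,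
      inv_inv, (exists_smul_pole_eq_fcc j).choose_spec, (exists_smul_pole_eq_fcc l).choose_spec]
  simp_rw [fccOperator_apply, sum_inner, inner_sum, hterm]
  rw [Finset.sum_comm]
  simp_rw [← Finset.sum_mul, sum_evenLegendre_inner_fcc]
  simp

lemma starProjection_mem_orthogonal {V : Type*} [NormedAddCommGroup V] [InnerProductSpace ℝ V]
    {K L : Submodule ℝ V} [K.HasOrthogonalProjection] (hLK : L ≤ K) {x : V} (hx : x ∈ Lᗮ) :
    K.starProjection x ∈ Lᗮ := by
  rw [← sub_sub_cancel x (K.starProjection x)]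
  exact Submodule.sub_mem _ hx
    (Submodule.orthogonal_le hLK (Submodule.sub_starProjection_mem_orthogonal x))

/-- The eigenvalue on the components of each degree is `6 * fccEigenvalue`; components of
different degrees stay orthogonal under `fccOperator`. -/
lemma mul_norm_sq_le_norm_fccOperator_sq {c : ℝ} (hc : ∀ n, 2 ≤ n → c ≤ |fccEigenvalue n|)
    {n : ℕ} (hn : 1 ≤ n) {F : OrthL2 (Euc 3)} (hF : F ∈ zonalSpan n)
    (hF1 : F ∈ (zonalSpan 1)ᗮ) : 6 * c * ‖F‖ ^ 2 ≤ ‖fccOperator F‖ ^ 2 := by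
  induction n, hn using Nat.le_induction generalizing F with
  | base =>
    have hzero : F = 0 := inner_self_eq_zero.mp (hF1 F hF)
    simp [hzero]
  | succ n hn ih =>
    obtain ⟨L, hL, p, hp, rfl⟩ := (zonalSpan n).exists_add_mem_mem_orthogonal F
    have hL' : L ∈ zonalSpan (n + 1) := zonalSpan_mono n.le_succ hL
    have hp' : p ∈ zonalSpan (n + 1) := by simpa using Submodule.sub_mem _ hF hL'
    have hL1 : L ∈ (zonalSpan 1)ᗮ := by
      simpa using Submodule.sub_mem _ hF1 (Submodule.orthogonal_le (zonalSpan_mono hn) hp)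
    have hax : IsAxisInvariant p := isAxisInvariant_of_mem_zonalSpan hp'
    have horth : ⟪L, p⟫ = 0 := hp L hL
    have hcross : ⟪fccOperator L, fccOperator p⟫ = 0 := by
      rw [inner_fccOperator_fccOperator hL' hax hp, horth, mul_zero]
    have hlow : 6 * c * ‖L‖ ^ 2 ≤ ‖fccOperator L‖ ^ 2 :=
      ih hL hL1
    have hhigh : 6 * c * ‖p‖ ^ 2 ≤ ‖fccOperator p‖ ^ 2 := by
      have heig : ‖fccOperator p‖ ^ 2 = 6 * fccEigenvalue (n + 1) * ‖p‖ ^ 2 := by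
        rw [← real_inner_self_eq_norm_sq, inner_fccOperator_fccOperator hp' hax hp,
          real_inner_self_eq_norm_sq]
      calc 6 * c * ‖p‖ ^ 2 ≤ 6 * |fccEigenvalue (n + 1)| * ‖p‖ ^ 2 := by
            gcongr
            exact hc (n + 1) (by omega)
        _ = |6 * fccEigenvalue (n + 1) * ‖p‖ ^ 2| := by simp [abs_mul]
        _ = ‖fccOperator p‖ ^ 2 := by rw [← heig, abs_sq]
    rw [map_add, norm_add_sq_real, norm_add_sq_real, hcross, horth]
    linarith

section Density

variable {E : Type*} [NormedAddCommGroup E] [InnerProductSpace ℝ E]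

/-- The exponential `x ↦ exp ⟪x, a⟫` on a subset of an inner product space. -/
def expInner (K : Set E) (a : E) : C(K, ℝ) := ⟨fun x => Real.exp ⟪(x : E), a⟫, by fun_prop⟩

lemma expInner_apply (K : Set E) (a : E) (x : K) : expInner K a x = Real.exp ⟪(x : E), a⟫ := rfl

lemma adjoin_range_expInner (K : Set E) :
    (Algebra.adjoin ℝ (Set.range (expInner K))).toSubmodule =
      Submodule.span ℝ (Set.range (expInner K)) := by
  let M : Submonoid C(K, ℝ) :=
    { carrier := Set.range (expInner K)
      one_mem' := ⟨0, by ext x; simp [expInner_apply]⟩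
      mul_mem' := by
        rintro _ _ ⟨a, rfl⟩ ⟨b, rfl⟩
        exact ⟨a + b, by ext x; simp [expInner_apply, inner_add_right, Real.exp_add]⟩ }
  rw [Algebra.adjoin_eq_span, show Set.range (expInner K) = M from rfl, Submonoid.closure_eq]

lemma separatesPoints_adjoin_expInner (K : Set E) :
    (Algebra.adjoin ℝ (Set.range (expInner K))).SeparatesPoints := by
  intro x y hxy
  refine ⟨_, ⟨expInner K (x - y), Algebra.subset_adjoin ⟨_, rfl⟩, rfl⟩, fun h => hxy ?_⟩
  have hinner : ⟪(x : E), (x : E) - y⟫ = ⟪(y : E), (x : E) - y⟫ := Real.exp_injective h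
  have hself : ⟪(x : E) - y, (x : E) - y⟫ = 0 := by rw [inner_sub_left, hinner, sub_self]
  exact Subtype.ext (sub_eq_zero.mp (inner_self_eq_zero.mp hself))

lemma topologicalClosure_span_expInner (K : Set E) [CompactSpace K] :
    (Submodule.span ℝ (Set.range (expInner K))).topologicalClosure = ⊤ := by
  have h := ContinuousMap.subalgebra_topologicalClosure_eq_top_of_separatesPoints _
    (separatesPoints_adjoin_expInner K)
  rw [← adjoin_range_expInner]
  exact SetLike.ext' (congrArg (fun A : Subalgebra ℝ C(K, ℝ) => (A : Set C(K, ℝ))) h)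

end Density

/-- The map `R ↦ R • x` to the unit sphere. -/
def orbitMap (x : sphere (0 : Euc 3) 1) : C(OrthGroup (Euc 3), sphere (0 : Euc 3) 1) :=
  ⟨fun R => ⟨R • (x : Euc 3), by simp [OrthGroup.norm_smul]⟩, by fun_prop⟩

/-- The unit vector `pole` as a point of the sphere. -/
def spherePole : sphere (0 : Euc 3) 1 := ⟨pole, by simp [norm_pole]⟩

/-- The function `R ↦ f (R • pole) + f (-(R • pole))` in `L²`. -/
def evenLift : C(sphere (0 : Euc 3) 1, ℝ) →L[ℝ] OrthL2 (Euc 3) :=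
  OrthL2.ofContinuous ∘L
    ⟨(ContinuousMap.compRightAlgHom ℝ ℝ (orbitMap spherePole)).toLinearMap +
      (ContinuousMap.compRightAlgHom ℝ ℝ (orbitMap (-spherePole))).toLinearMap,
      (ContinuousMap.continuous_precomp _).add (ContinuousMap.continuous_precomp _)⟩

lemma evenLift_apply (f : C(sphere (0 : Euc 3) 1, ℝ)) : evenLift f =
    OrthL2.ofContinuous (f.comp (orbitMap spherePole) + f.comp (orbitMap (-spherePole))) := rfl

lemma exp_continuousMap_apply {X : Type*} [TopologicalSpace X] [CompactSpace X] (F : C(X, ℝ))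
    (x : X) : NormedSpace.exp F x = Real.exp (F x) := by
  rw [Real.exp_eq_exp_ℝ]
  exact NormedSpace.map_exp (ContinuousMap.evalAlgHom ℝ ℝ x)
    (ContinuousEvalConst.continuous_eval_const x) F

lemma zonalPow_mem_closure_iSup (a : Euc 3) (k : ℕ) :
    zonalPow a k ∈ (⨆ n, zonalSpan n).topologicalClosure :=
  Submodule.le_topologicalClosure _
    (Submodule.mem_iSup_of_mem k (zonalPow_mem_zonalSpan le_rfl))

lemma zonal_pow_add_neg_pow_mem_closure_iSup (a : Euc 3) (c : ℝ) (m : ℕ) :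
    OrthL2.ofContinuous (c • zonal a ^ m + c • (-zonal a) ^ m) ∈
      (⨆ n, zonalSpan n).topologicalClosure := by
  obtain ⟨d, k, h⟩ : ∃ (d : ℝ) (k : ℕ),
      c • zonal a ^ m + c • (-zonal a) ^ m = d • zonal a ^ (2 * k) := by
    rcases Nat.even_or_odd' m with ⟨k, rfl | rfl⟩
    · exact ⟨2 * c, k, by ext R; simp [two_mul, add_mul]⟩
    · exact ⟨0, k, by ext R; simp [pow_succ]⟩
  rw [h, map_smul]
  exact Submodule.smul_mem _ _ (zonalPow_mem_closure_iSup a k)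

lemma evenLift_expInner_mem (a : Euc 3) :
    evenLift (expInner _ a) ∈ (⨆ n, zonalSpan n).topologicalClosure := by
  have hexp : (expInner _ a).comp (orbitMap spherePole) +
      (expInner _ a).comp (orbitMap (-spherePole)) =
      NormedSpace.exp (zonal a) + NormedSpace.exp (-zonal a) := by
    ext R
    simp [exp_continuousMap_apply, expInner_apply, orbitMap, spherePole, zonal_apply]
  have hseries := ((NormedSpace.exp_series_hasSum_exp' (𝕂 := ℝ) (zonal a)).add
    (NormedSpace.exp_series_hasSum_exp' (𝕂 := ℝ) (-zonal a))).mapL OrthL2.ofContinuous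
  rw [evenLift_apply, hexp]
  exact (Submodule.isClosed_topologicalClosure _).mem_of_tendsto hseries
    (.of_forall fun s => Submodule.sum_mem _ fun m _ =>
      zonal_pow_add_neg_pow_mem_closure_iSup a _ m)

lemma evenLift_mem (f : C(sphere (0 : Euc 3) 1, ℝ)) :
    evenLift f ∈ (⨆ n, zonalSpan n).topologicalClosure := by
  have hle : (Submodule.span ℝ (Set.range (expInner _))).topologicalClosure ≤
      (⨆ n, zonalSpan n).topologicalClosure.comap evenLift.toLinearMap :=
    Submodule.topologicalClosure_minimal _
      (Submodule.span_le.mpr (Set.range_subset_iff.mpr evenLift_expInner_mem))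
      ((Submodule.isClosed_topologicalClosure (⨆ n, zonalSpan n)).preimage evenLift.continuous)
  rw [topologicalClosure_span_expInner] at hle
  exact hle Submodule.mem_top

lemma sphereMean_eq_zero_of_mul_inner_sq {E : Type*} [NormedAddCommGroup E]
    [InnerProductSpace ℝ E] [CompleteSpace E] [FiniteDimensional ℝ E] [Nontrivial E] {f : E → ℝ}
    (hf : ContinuousOn f (sphere 0 1)) (h : ∀ a, sphereMean (fun x => f x * ⟪x, a⟫ ^ 2) = 0) :
    sphereMean f = 0 := by
  have hsum : sphereMean f = sphereMean fun x =>
      ∑ i, f x * ⟪x, stdOrthonormalBasis ℝ E i⟫ ^ 2 := by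
    refine sphereMean_congr fun x hx => ?_
    rw [← Finset.mul_sum, OrthonormalBasis.sum_sq_inner_left, hx, one_pow, mul_one]
  rw [hsum, sphereMean_finsetSum _ fun i _ => by fun_prop]
  exact Finset.sum_eq_zero fun i _ => h _

lemma mul_norm_sq_le_norm_fccOperator_sq_of_mem_closure {c : ℝ}
    (hc : ∀ n, 2 ≤ n → c ≤ |fccEigenvalue n|) {F : OrthL2 (Euc 3)}
    (hF : F ∈ (⨆ n, zonalSpan n).topologicalClosure) (hF1 : F ∈ (zonalSpan 1)ᗮ) :
    6 * c * ‖F‖ ^ 2 ≤ ‖fccOperator F‖ ^ 2 := by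
  have hlim := Submodule.starProjection_tendsto_closure_iSup zonalSpan zonalSpan_mono F
  rw [Submodule.starProjection_eq_self_iff.mpr hF] at hlim
  refine le_of_tendsto_of_tendsto ((hlim.norm.pow 2).const_mul (6 * c))
    (((fccOperator.continuous.tendsto F).comp hlim).norm.pow 2) ?_
  filter_upwards [Filter.eventually_ge_atTop 1] with n hn
  exact mul_norm_sq_le_norm_fccOperator_sq hc hn (Submodule.starProjection_apply_mem _ _)
    (starProjection_mem_orthogonal (zonalSpan_mono hn) hF1)

/-- The class in `L²` of `R ↦ f (R • pole)`. -/
def poleLift (f : C(sphere (0 : Euc 3) 1, ℝ)) : OrthL2 (Euc 3) :=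
  OrthL2.ofContinuous (f.comp (orbitMap spherePole))

lemma poleLift_mem_closure_iSup {f : C(sphere (0 : Euc 3) 1, ℝ)} (heven : ∀ x, f (-x) = f x) :
    poleLift f ∈ (⨆ n, zonalSpan n).topologicalClosure := by
  have hhalf : poleLift f = (1 / 2 : ℝ) • evenLift f := by
    rw [evenLift_apply, poleLift, ← map_smul]
    congr 1
    ext R
    have : orbitMap (-spherePole) R = -orbitMap spherePole R :=
      Subtype.ext (by simp [orbitMap])
    simp only [ContinuousMap.coe_smul, ContinuousMap.coe_add, Pi.smul_apply, Pi.add_apply,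
      ContinuousMap.comp_apply, this, heven, smul_eq_mul]
    ring
  rw [hhalf]
  exact Submodule.smul_mem _ _ (evenLift_mem f)

lemma exists_sphereMean_sq_le_integral_sum_fcc : ∃ c > (0 : ℝ), ∀ f : Euc 3 → ℝ,
    ContinuousOn f (sphere 0 1) → (∀ x, f (-x) = f x) →
    (∀ a, sphereMean (fun x => f x * ⟪x, a⟫ ^ 2) = 0) →
    c * sphereMean (fun x => f x ^ 2) ≤
      ∫ R : OrthGroup (Euc 3), (∑ j, f (R • fcc j)) ^ 2 ∂OrthGroup.haar := by
  obtain ⟨c, hc, hceig⟩ := exists_forall_le_abs_fccEigenvalue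
  refine ⟨6 * c, by positivity, fun f hf heven hmom => ?_⟩
  let φ : C(sphere (0 : Euc 3) 1, ℝ) := ⟨fun x => f x, hf.domRestrict⟩
  have hmem : poleLift φ ∈ (⨆ n, zonalSpan n).topologicalClosure :=
    poleLift_mem_closure_iSup fun x => heven x
  have hlow : poleLift φ ∈ (zonalSpan 1)ᗮ := by
    refine mem_zonalSpan_orthogonal.mpr fun a k hk => ?_
    rw [real_inner_comm, poleLift, zonalPow, OrthL2.inner_ofContinuous_ofContinuous]
    change ∫ R : OrthGroup (Euc 3), f (R • pole) * ⟪R • pole, a⟫ ^ (2 * k) ∂OrthGroup.haar = 0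
    rw [integral_comp_smul_of_norm_eq_one (fun x => f x * ⟪x, a⟫ ^ (2 * k)) norm_pole]
    interval_cases k
    · simpa using sphereMean_eq_zero_of_mul_inner_sq hf hmom
    · exact hmom a
  have hgap := mul_norm_sq_le_norm_fccOperator_sq_of_mem_closure hceig hmem hlow
  simp_rw [fccOperator_apply, poleLift, OrthL2.rightTranslation_ofContinuous, ← map_sum,
    OrthL2.norm_ofContinuous_sq, ContinuousMap.sum_apply] at hgap
  rw [← integral_comp_smul_of_norm_eq_one _ norm_pole]
  have hsum (R : OrthGroup (Euc 3)) : ∑ j, f (R • fcc j) =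
      ∑ j, ((φ.comp (orbitMap spherePole)).comp
        (.mulRight (exists_smul_pole_eq_fcc j).choose)) R := by
    refine Finset.sum_congr rfl fun j _ => ?_
    change _ = f ((R * _) • pole)
    rw [mul_smul, (exists_smul_pole_eq_fcc j).choose_spec]
  simp_rw [hsum]
  exact hgap

/-! ### Polar coordinates -/

section Polar

variable {E : Type*} [NormedAddCommGroup E] [InnerProductSpace ℝ E] [FiniteDimensional ℝ E]
  [MeasurableSpace E] [BorelSpace E]

lemma volume_real_ball_pos : 0 < volume.real (ball (0 : E) 1) :=
  ENNReal.toReal_pos (measure_ball_pos volume _ one_pos).ne' measure_ball_lt_top.ne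

/- Averaging over `R` the invariance of Lebesgue measure under `R`, exchange the two integrals:
the average over `R` only depends on `‖y‖`. -/
lemma integral_eq_integral_integral_norm_smul {F : E → ℝ} (hF : Measurable F) {C r : ℝ}
    (hC : ∀ x, |F x| ≤ (closedBall 0 r).indicator (fun _ => C) x) {e : E} (he : ‖e‖ = 1) :
    ∫ x, F x = ∫ R : OrthGroup E, (∫ y : E, F (‖y‖ • R • e)) ∂OrthGroup.haar := by
  have hdom : Integrable (fun p : OrthGroup E × E => (closedBall 0 r).indicator (fun _ => C) p.2)
      (OrthGroup.haar.prod volume) :=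
    Integrable.comp_snd ((integrable_indicator_iff measurableSet_closedBall).mpr
      (integrableOn_const measure_closedBall_lt_top.ne)) _
  have hint : ∀ g : OrthGroup E × E → E, Continuous g → (∀ p, ‖g p‖ = ‖p.2‖) →
      Integrable (fun p => F (g p)) (OrthGroup.haar.prod volume) := fun g hg hnorm =>
    hdom.mono' (hF.comp hg.measurable).aestronglyMeasurable <| .of_forall fun p =>
      (hC (g p)).trans_eq (by simp [Set.indicator, hnorm])
  have hrot : ∀ R : OrthGroup E, ∫ y, F (R • y) = ∫ x, F x := fun R =>
    (Unitary.linearIsometryEquiv R).measurePreserving.integral_comp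
      (Unitary.linearIsometryEquiv R).toHomeomorph.measurableEmbedding F
  calc ∫ x, F x = ∫ R : OrthGroup E, (∫ y : E, F (R • y)) ∂OrthGroup.haar := by simp [hrot]
    _ = ∫ y : E, (∫ R : OrthGroup E, F (R • y) ∂OrthGroup.haar) :=
      integral_integral_swap
        (hint (fun p => p.1 • p.2) continuous_smul fun p => OrthGroup.norm_smul _ _)
    _ = ∫ y : E, (∫ R : OrthGroup E, F (‖y‖ • R • e) ∂OrthGroup.haar) := by
      simp_rw [smul_comm ‖_‖ (_ : OrthGroup E) e]
      exact integral_congr_ae <| .of_forall fun y =>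
        OrthGroup.integral_comp_smul_eq_of_norm_eq F (by simp [norm_smul, he])
    _ = ∫ R : OrthGroup E, (∫ y : E, F (‖y‖ • R • e)) ∂OrthGroup.haar :=
      (integral_integral_swap (hint (fun p => ‖p.2‖ • p.1 • e) (by fun_prop)
        fun p => by simp [norm_smul, OrthGroup.norm_smul, he])).symm

omit [MeasurableSpace E] [BorelSpace E] in
lemma exists_pos_mul_norm_le_of_homogeneous {ρ : E → ℝ} (hρ : Continuous ρ)
    (hhom : ∀ r : ℝ, 0 < r → ∀ x, ρ (r • x) = r * ρ x) (hpos : ∀ x, x ≠ 0 → 0 < ρ x) :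
    ∃ m > 0, ∀ x, x ≠ 0 → m * ‖x‖ ≤ ρ x := by
  cases subsingleton_or_nontrivial E
  · exact ⟨1, one_pos, fun x hx => (hx (Subsingleton.elim _ _)).elim⟩
  obtain ⟨u, hu, hmin⟩ := (isCompact_sphere (0 : E) 1).exists_isMinOn
    (NormedSpace.sphere_nonempty.mpr zero_le_one) hρ.continuousOn
  refine ⟨ρ u, hpos u (ne_zero_of_mem_unit_sphere ⟨u, hu⟩), fun x hx => ?_⟩
  have hmem : ‖x‖⁻¹ • x ∈ sphere (0 : E) 1 := by simp [norm_smul, hx]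
  have hle : ρ u ≤ ‖x‖⁻¹ * ρ x := by
    simpa [hhom _ (inv_pos.mpr (norm_pos_iff.mpr hx))] using hmin hmem
  rwa [inv_mul_eq_div, le_div_iff₀ (norm_pos_iff.mpr hx)] at hle

variable [Nontrivial E]

lemma setIntegral_sublevel_of_homogeneous {φ : E → ℝ} (hφ : Measurable φ) {C : ℝ}
    (hC : ∀ x, |φ x| ≤ C) (hφhom : ∀ r : ℝ, 0 < r → ∀ x, φ (r • x) = φ x) {ρ : E → ℝ}
    (hρ : Continuous ρ) (hρhom : ∀ r : ℝ, 0 < r → ∀ x, ρ (r • x) = r * ρ x)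
    (hpos : ∀ x, x ≠ 0 → 0 < ρ x) :
    ∫ x in {x | ρ x ≤ 1}, φ x = volume.real (ball (0 : E) 1) *
      sphereMean fun x => φ x / ρ x ^ Module.finrank ℝ E := by
  obtain ⟨m, hm, hmle⟩ := exists_pos_mul_norm_le_of_homogeneous hρ hρhom hpos
  have hmeas : MeasurableSet {x | ρ x ≤ 1} := (isClosed_le hρ continuous_const).measurableSet
  have hbound : ∀ x, |{x | ρ x ≤ 1}.indicator φ x| ≤
      (closedBall 0 m⁻¹).indicator (fun _ => C) x := by
    intro x
    by_cases hx : ρ x ≤ 1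
    · have hball : x ∈ closedBall 0 m⁻¹ := by
        rw [mem_closedBall_zero_iff, ← one_div, le_div_iff₀' hm]
        rcases eq_or_ne x 0 with rfl | h0
        · simp
        · exact (hmle x h0).trans hx
      simp [Set.indicator_of_mem (show x ∈ {x | ρ x ≤ 1} from hx), hball, hC]
    · simp [hx, Set.indicator_nonneg fun _ _ => (abs_nonneg _).trans (hC 0)]
  obtain ⟨e, he⟩ := exists_norm_eq E zero_le_one
  rw [← integral_indicator hmeas, ← integral_comp_smul_of_norm_eq_one _ he,
    integral_eq_integral_integral_norm_smul (hφ.indicator hmeas) hbound he, ← integral_const_mul]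
  refine integral_congr_ae (.of_forall fun R => ?_)
  have hρe : 0 < ρ (R • e) := hpos _ (norm_pos_iff.mp (by simp [OrthGroup.norm_smul, he]))
  calc ∫ y, {x | ρ x ≤ 1}.indicator φ (‖y‖ • R • e)
      = ∫ y, (closedBall (0 : E) (ρ (R • e))⁻¹).indicator (fun _ => φ (R • e)) y := by
        refine integral_congr_ae ?_
        filter_upwards [Measure.ae_ne volume (0 : E)] with y hy
        have hy' : 0 < ‖y‖ := norm_pos_iff.mpr hy
        simp only [Set.indicator, Set.mem_ofPred_eq, hρhom _ hy', hφhom _ hy',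
          mem_closedBall_zero_iff, ← one_div, le_div_iff₀ hρe]
    _ = volume.real (ball (0 : E) 1) * (φ (R • e) / ρ (R • e) ^ Module.finrank ℝ E) := by
        rw [integral_indicator measurableSet_closedBall, setIntegral_const,
          Measure.addHaar_real_closedBall _ _ (by positivity), smul_eq_mul, inv_pow]
        ring

lemma volume_real_sublevel_of_homogeneous {ρ : E → ℝ} (hρ : Continuous ρ)
    (hhom : ∀ r : ℝ, 0 < r → ∀ x, ρ (r • x) = r * ρ x) (hpos : ∀ x, x ≠ 0 → 0 < ρ x) :
    volume.real {x | ρ x ≤ 1} =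
      volume.real (ball (0 : E) 1) * sphereMean fun x => 1 / ρ x ^ Module.finrank ℝ E := by
  simpa using setIntegral_sublevel_of_homogeneous (φ := fun _ => 1) measurable_const
    (fun _ => abs_one.le) (fun _ _ _ => rfl) hρ hhom hpos

lemma sphereMean_eq_abs_det_mul {ψ : E → ℝ} (hψ : ContinuousOn ψ {0}ᶜ)
    (hhom : ∀ r : ℝ, 0 < r → ∀ x, ψ (r • x) = ψ x) (T : E ≃ₗ[ℝ] E) :
    sphereMean ψ = |LinearMap.det (T : E →ₗ[ℝ] E)| *
      sphereMean fun x => ψ (T x) / ‖T x‖ ^ Module.finrank ℝ E := by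
  have hψm : Measurable ψ := measurable_of_continuousOn_compl_singleton 0 hψ
  have hT : Continuous T := (T : E →ₗ[ℝ] E).continuous_of_finiteDimensional
  have hdet : LinearMap.det (T : E →ₗ[ℝ] E) ≠ 0 := T.isUnit_det'.ne_zero
  obtain ⟨C, hC⟩ : ∃ C, ∀ x, |ψ x| ≤ C := by
    obtain ⟨C, hC⟩ := (isCompact_sphere (0 : E) 1).exists_bound_of_continuousOn
      (hψ.mono fun x hx => ne_zero_of_mem_unit_sphere ⟨x, hx⟩)
    refine ⟨max C |ψ 0|, fun x => ?_⟩
    rcases eq_or_ne x 0 with rfl | hx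
    · exact le_max_right _ _
    · rw [← hhom _ (inv_pos.mpr (norm_pos_iff.mpr hx))]
      exact (hC _ (by simp [norm_smul, hx])).trans (le_max_left _ _)
  have hball := setIntegral_sublevel_of_homogeneous hψm hC hhom continuous_norm
    (fun r hr x => by rw [norm_smul, Real.norm_of_nonneg hr.le]) fun x => norm_pos_iff.mpr
  have hellipsoid := setIntegral_sublevel_of_homogeneous (hψm.comp hT.measurable)
    (fun x => hC (T x)) (fun r hr x => by simp [hhom r hr]) hT.norm
    (fun r hr x => by rw [map_smul, norm_smul, Real.norm_of_nonneg hr.le])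
    fun x hx => norm_pos_iff.mpr (by simpa using hx)
  have hchange : ∫ x in {x | ‖T x‖ ≤ 1}, ψ (T x) =
      |(LinearMap.det (T : E →ₗ[ℝ] E))⁻¹| * ∫ x in {x | ‖x‖ ≤ 1}, ψ x := by
    have hmap := Measure.map_linearMap_addHaar_eq_smul_addHaar (volume : Measure E) hdet
    rw [← ENNReal.toReal_ofReal (abs_nonneg (LinearMap.det (T : E →ₗ[ℝ] E))⁻¹), ← smul_eq_mul,
      ← integral_smul_measure, ← Measure.restrict_smul, ← hmap]
    exact (setIntegral_map (measurableSet_le measurable_norm measurable_const)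
      hψm.aestronglyMeasurable hT.aemeasurable).symm
  have hone : sphereMean (fun x : E => ψ x / ‖x‖ ^ Module.finrank ℝ E) = sphereMean ψ :=
    sphereMean_congr fun x hx => by simp [hx]
  simp only [Function.comp_apply] at hellipsoid
  rw [hchange, hball, hone, mul_left_comm, mul_right_inj' volume_real_ball_pos.ne',
    abs_inv] at hellipsoid
  rw [← hellipsoid, mul_inv_cancel_left₀ (abs_ne_zero.mpr hdet)]

end Polar

section Caps

variable {E : Type*} [NormedAddCommGroup E] [InnerProductSpace ℝ E]

/-- The linear map fixing `e` and contracting its orthogonal complement by the factor `s`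
(for a unit vector `e`). -/
def squeeze (e : E) (s : ℝ) : E →ₗ[ℝ] E :=
  s • LinearMap.id + (1 - s) • (innerₗ E e).smulRight e

lemma squeeze_apply (e : E) (s : ℝ) (x : E) :
    squeeze e s x = s • x + (1 - s) • ⟪e, x⟫ • e := rfl

lemma det_squeeze [FiniteDimensional ℝ E] {e : E} (he : ‖e‖ = 1) {s : ℝ} (hs : 0 < s) :
    LinearMap.det (squeeze e s) = s ^ (Module.finrank ℝ E - 1) := by
  have : Nontrivial E := ⟨e, 0, norm_ne_zero_iff.mp (by simp [he])⟩
  have hsq : squeeze e s = s • LinearMap.transvection (((1 - s) / s) • innerₗ E e) e := by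
    ext x
    simp [squeeze_apply, LinearMap.transvection.apply, smul_smul, ← mul_assoc,
      mul_div_cancel₀ _ hs.ne']
  rw [hsq, LinearMap.det_smul, LinearMap.transvection.det,
    ← Nat.sub_add_cancel (Module.finrank_pos (R := ℝ) (M := E)), pow_succ]
  simp [he]
  field_simp
  ring

lemma squeeze_mem_cone {e : E} (he : ‖e‖ = 1) {s : ℝ} (hs : 0 ≤ s) (hs1 : s ≤ 1) {x : E}
    (hx : x ∈ closedBall ((5 / 8 : ℝ) • e) (1 / 8)) :
    ‖squeeze e s x‖ ≤ 1 ∧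
      ‖squeeze e s x - ‖squeeze e s x‖ • e‖ ≤ s * ‖squeeze e s x‖ := by
  set t : ℝ := ⟪e, x⟫
  set w : E := x - t • e
  have hee : ⟪e, e⟫ = (1 : ℝ) := by rw [real_inner_self_eq_norm_sq, he, one_pow]
  have hsplit : squeeze e s x = t • e + s • w := by rw [squeeze_apply]; module
  have hz : ‖x - (5 / 8 : ℝ) • e‖ ≤ 1 / 8 := mem_closedBall_iff_norm.mp hx
  have ht : |t - 5 / 8| ≤ 1 / 8 := by
    have h := (abs_real_inner_le_norm e (x - (5 / 8 : ℝ) • e)).trans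
      (mul_le_mul_of_nonneg_left hz (norm_nonneg e))
    simpa [inner_sub_right, inner_smul_right, hee, he] using h
  obtain ⟨ht1, ht2⟩ := abs_le.mp ht
  have hw : ‖w‖ ≤ 1 / 4 := by
    have h := norm_sub_le (x - (5 / 8 : ℝ) • e) ((t - 5 / 8) • e)
    rw [norm_smul, he, mul_one, Real.norm_eq_abs] at h
    have hw' : w = x - (5 / 8 : ℝ) • e - (t - 5 / 8) • e := by simp only [w]; module
    rw [hw']
    linarith
  have hsw : ‖s • w‖ ≤ s / 4 := by
    rw [norm_smul, Real.norm_of_nonneg hs]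
    nlinarith
  have hte : ‖t • e‖ = t := by rw [norm_smul, he, mul_one, Real.norm_of_nonneg (by linarith)]
  have hupper : ‖squeeze e s x‖ ≤ t + s / 4 := by
    rw [hsplit]
    exact (norm_add_le _ _).trans (by linarith)
  have hlower : t ≤ ‖squeeze e s x‖ := by
    have h := (le_abs_self _).trans (abs_real_inner_le_norm e (squeeze e s x))
    simpa [hsplit, w, inner_add_right, inner_sub_right, inner_smul_right, hee, he, t] using h
  refine ⟨by linarith, ?_⟩
  calc ‖squeeze e s x - ‖squeeze e s x‖ • e‖
      = ‖s • w - (‖squeeze e s x‖ - t) • e‖ := by congr 1; rw [hsplit]; module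
    _ ≤ s / 4 + s / 4 := by
      refine (norm_sub_le _ _).trans (add_le_add hsw ?_)
      rw [norm_smul, he, mul_one, Real.norm_of_nonneg (by linarith)]
      linarith
    _ ≤ s * ‖squeeze e s x‖ := by nlinarith

/- The cone over the cap contains the image under `squeeze e s` of a fixed ball. -/
lemma mul_pow_le_haar_cap [FiniteDimensional ℝ E] {e p : E} (he : ‖e‖ = 1) (hp : ‖p‖ = 1)
    {s : ℝ} (hs : 0 < s) (hs1 : s ≤ 1) :
    (1 / 8) ^ Module.finrank ℝ E * s ^ (Module.finrank ℝ E - 1) ≤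
      OrthGroup.haar.real {R : OrthGroup E | ‖R • e - p‖ ≤ s} := by
  borelize E
  have : Nontrivial E := ⟨e, 0, norm_ne_zero_iff.mp (by simp [he])⟩
  let cone : Set E := {x | ‖x - ‖x‖ • p‖ ≤ s * ‖x‖}
  have hcone : MeasurableSet cone := (isClosed_le (by fun_prop) (by fun_prop)).measurableSet
  have hhom : ∀ r : ℝ, 0 < r → ∀ x, cone.indicator (1 : E → ℝ) (r • x) = cone.indicator 1 x := by
    intro r hr x
    have hmem : r • x ∈ cone ↔ x ∈ cone := by
      simp only [cone, Set.mem_ofPred_eq, norm_smul, Real.norm_of_nonneg hr.le, mul_smul,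
        ← smul_sub, mul_left_comm s, mul_le_mul_iff_right₀ hr]
    simp [Set.indicator, hmem]
  have hpolar := setIntegral_sublevel_of_homogeneous (φ := cone.indicator 1) (C := 1)
    (measurable_one.indicator hcone) (fun x => by by_cases hx : x ∈ cone <;> simp [hx]) hhom
    continuous_norm (fun r hr x => by rw [norm_smul, Real.norm_of_nonneg hr.le])
    fun x => norm_pos_iff.mpr
  have hcap : MeasurableSet {R : OrthGroup E | ‖R • e - p‖ ≤ s} :=
    (isClosed_le (by fun_prop) (by fun_prop)).measurableSet
  have hmean : sphereMean (fun x : E => cone.indicator 1 x / ‖x‖ ^ Module.finrank ℝ E) =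
      OrthGroup.haar.real {R : OrthGroup E | ‖R • e - p‖ ≤ s} := by
    rw [← integral_comp_smul_of_norm_eq_one _ he, ← integral_indicator_one hcap]
    refine integral_congr_ae (.of_forall fun R => ?_)
    simp [cone, Set.indicator, OrthGroup.norm_smul, he]
  rw [hmean, integral_indicator_one hcone, measureReal_restrict_apply hcone] at hpolar
  have hsub : squeeze p s '' closedBall ((5 / 8 : ℝ) • p) (1 / 8) ⊆ cone ∩ {x | ‖x‖ ≤ 1} := by
    rintro _ ⟨x, hx, rfl⟩
    exact (squeeze_mem_cone hp hs.le hs1 hx).symm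
  have hvol : volume.real (squeeze p s '' closedBall ((5 / 8 : ℝ) • p) (1 / 8)) =
      volume.real (ball (0 : E) 1) *
        ((1 / 8) ^ Module.finrank ℝ E * s ^ (Module.finrank ℝ E - 1)) := by
    rw [measureReal_def, Measure.addHaar_image_linearMap, ENNReal.toReal_mul,
      ← measureReal_def, Measure.addHaar_real_closedBall _ _ (by norm_num), det_squeeze hp hs,
      ENNReal.toReal_ofReal (abs_nonneg _), abs_of_pos (by positivity)]
    ring
  have hfinite : volume (cone ∩ {x | ‖x‖ ≤ 1}) ≠ ⊤ :=
    ne_top_of_le_ne_top (measure_closedBall_lt_top (x := (0 : E)) (r := 1)).ne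
      (measure_mono fun x hx => mem_closedBall_zero_iff.mpr hx.2)
  exact le_of_mul_le_mul_left (hvol ▸ hpolar ▸ measureReal_mono hsub hfinite)
    volume_real_ball_pos

end Caps

/-! ### Moments and the quadratic part of a function on the sphere -/

section Moments

variable {E : Type*} [NormedAddCommGroup E] [InnerProductSpace ℝ E] [FiniteDimensional ℝ E]
  [Nontrivial E]

lemma sphereMean_inner_pow (k : ℕ) (a : E) {e : E} (he : ‖e‖ = 1) :
    sphereMean (fun x => ⟪x, a⟫ ^ k) = ‖a‖ ^ k * sphereMean fun x => ⟪x, e⟫ ^ k := by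
  obtain ⟨Q, hQ⟩ := OrthGroup.exists_smul_eq (x := ‖a‖ • e) (y := a) (by simp [norm_smul, he])
  rw [← sphereMean_comp_smul _ Q, ← sphereMean_const_mul]
  congr 1 with x
  nth_rw 1 [← hQ]
  rw [OrthGroup.inner_smul_smul, real_inner_smul_right, mul_pow]

lemma sphereMean_inner_sq (a : E) :
    sphereMean (fun x => ⟪x, a⟫ ^ 2) = ‖a‖ ^ 2 / Module.finrank ℝ E := by
  obtain ⟨e, he⟩ := exists_norm_eq E zero_le_one
  let b := stdOrthonormalBasis ℝ E
  have hsum : sphereMean (fun x => ∑ i, ⟪x, b i⟫ ^ 2) = 1 := by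
    rw [← sphereMean_const (E := E) 1]
    exact sphereMean_congr fun x hx => by simpa [hx] using b.sum_sq_norm_inner_left x
  rw [sphereMean_finsetSum _ fun i _ => by fun_prop] at hsum
  simp only [sphereMean_inner_pow 2 (b _) he, b.norm_eq_one, one_pow, one_mul, Finset.sum_const,
    Finset.card_univ, Fintype.card_fin, nsmul_eq_mul] at hsum
  rw [sphereMean_inner_pow 2 a he, eq_div_of_mul_eq (left_ne_zero_of_mul_eq_one hsum)
    ((mul_comm _ _).trans hsum), mul_one_div]

lemma sphereMean_inner_sq_mul_inner_sq_eq_mul (a b : E) {e : E} (he : ‖e‖ = 1) :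
    sphereMean (fun x => ⟪x, a⟫ ^ 2 * ⟪x, b⟫ ^ 2) =
      (‖a‖ ^ 2 * ‖b‖ ^ 2 + 2 * ⟪a, b⟫ ^ 2) / 3 * sphereMean fun x => ⟪x, e⟫ ^ 4 := by
  have hpolarize : ∀ x, ⟪x, a⟫ ^ 2 * ⟪x, b⟫ ^ 2 = 1 / 12 * (⟪x, a + b⟫ ^ 4 + ⟪x, a - b⟫ ^ 4 -
      2 * ⟪x, a⟫ ^ 4 - 2 * ⟪x, b⟫ ^ 4) := fun x => by
    rw [inner_add_right, inner_sub_right]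
    ring
  simp_rw [hpolarize]
  rw [sphereMean_const_mul, sphereMean_sub (by fun_prop) (by fun_prop),
    sphereMean_sub (by fun_prop) (by fun_prop), sphereMean_add (by fun_prop) (by fun_prop),
    sphereMean_const_mul, sphereMean_const_mul, sphereMean_inner_pow 4 (a + b) he,
    sphereMean_inner_pow 4 (a - b) he, sphereMean_inner_pow 4 a he, sphereMean_inner_pow 4 b he]
  linear_combination (1 / 12 * sphereMean fun x => ⟪x, e⟫ ^ 4) *
    ((‖a + b‖ ^ 2 + ‖a‖ ^ 2 + 2 * ⟪a, b⟫ + ‖b‖ ^ 2) * norm_add_sq_real a b +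
      (‖a - b‖ ^ 2 + ‖a‖ ^ 2 - 2 * ⟪a, b⟫ + ‖b‖ ^ 2) * norm_sub_sq_real a b)

lemma sphereMean_inner_sq_mul_inner_sq (a b : E) :
    sphereMean (fun x => ⟪x, a⟫ ^ 2 * ⟪x, b⟫ ^ 2) = (‖a‖ ^ 2 * ‖b‖ ^ 2 + 2 * ⟪a, b⟫ ^ 2) /
      (Module.finrank ℝ E * (Module.finrank ℝ E + 2)) := by
  obtain ⟨e, he⟩ := exists_norm_eq E zero_le_one
  let u := stdOrthonormalBasis ℝ E
  have hd : (Module.finrank ℝ E : ℝ) ≠ 0 := by exact_mod_cast Module.finrank_pos.ne'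
  have hsum : ∑ i, sphereMean (fun x => ⟪x, u i⟫ ^ 2 * ⟪x, e⟫ ^ 2) =
      1 / Module.finrank ℝ E := by
    rw [← sphereMean_finsetSum _ fun i _ => by fun_prop, ← one_pow 2, ← he,
      ← sphereMean_inner_sq e]
    refine sphereMean_congr fun x hx => ?_
    have hux : ∑ i, ⟪x, u i⟫ ^ 2 = 1 := by simpa [hx] using u.sum_sq_norm_inner_left x
    rw [← Finset.sum_mul, hux, one_mul]
  have hfourth : (Module.finrank ℝ E + 2) / 3 * sphereMean (fun x => ⟪x, e⟫ ^ 4) =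
      1 / Module.finrank ℝ E := by
    have hue : ∑ i, ⟪u i, e⟫ ^ 2 = 1 := by simpa [he] using u.sum_sq_norm_inner_right e
    rw [← hsum]
    simp_rw [sphereMean_inner_sq_mul_inner_sq_eq_mul _ e he, ← Finset.sum_mul,
      ← Finset.sum_div, Finset.sum_add_distrib, ← Finset.mul_sum, hue]
    simp [he]
  rw [sphereMean_inner_sq_mul_inner_sq_eq_mul a b he]
  field_simp at hfourth ⊢
  linear_combination (‖a‖ ^ 2 * ‖b‖ ^ 2 + 2 * ⟪a, b⟫ ^ 2) * hfourth

/-- The quadratic form with the same second moments over the unit sphere as `v`, see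
`sphereMean_quadraticPart_mul_inner_sq`. -/
def quadraticPart (v : E → ℝ) (x : E) : ℝ :=
  (Module.finrank ℝ E * (Module.finrank ℝ E + 2) * sphereMean (fun y => v y * ⟪y, x⟫ ^ 2) -
    Module.finrank ℝ E * ‖x‖ ^ 2 * sphereMean v) / 2

lemma quadraticPart_neg (v : E → ℝ) (x : E) : quadraticPart v (-x) = quadraticPart v x := by
  simp [quadraticPart]

variable {v : E → ℝ}

lemma continuous_sphereMean_mul_inner_sq (hv : ContinuousOn v (sphere 0 1)) :
    Continuous fun x => sphereMean fun y => v y * ⟪y, x⟫ ^ 2 := by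
  obtain ⟨e, he⟩ := exists_norm_eq E zero_le_one
  simp_rw [← integral_comp_smul_of_norm_eq_one _ he]
  have hvR := OrthGroup.continuous_comp_smul hv he
  simpa using continuous_parametric_integral_of_continuous
    (f := fun (x : E) (R : OrthGroup E) => v (R • e) * ⟪R • e, x⟫ ^ 2)
    (μ := OrthGroup.haar) (s := Set.univ)
    ((hvR.comp continuous_snd).mul (by fun_prop)) isCompact_univ

lemma continuous_quadraticPart (hv : ContinuousOn v (sphere 0 1)) :
    Continuous (quadraticPart v) := by
  have := continuous_sphereMean_mul_inner_sq hv
  unfold quadraticPart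
  fun_prop

lemma sphereMean_sphereMean_mul_inner_sq (hv : ContinuousOn v (sphere 0 1)) (a : E) :
    sphereMean (fun x => sphereMean (fun y => v y * ⟪y, x⟫ ^ 2) * ⟪x, a⟫ ^ 2) =
      (‖a‖ ^ 2 * sphereMean v + 2 * sphereMean fun y => v y * ⟪y, a⟫ ^ 2) /
        (Module.finrank ℝ E * (Module.finrank ℝ E + 2)) := by
  obtain ⟨e, he⟩ := exists_norm_eq E zero_le_one
  have hvR := OrthGroup.continuous_comp_smul hv he
  have hswap : sphereMean (fun x => sphereMean fun y => v y * ⟪y, x⟫ ^ 2 * ⟪x, a⟫ ^ 2) =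
      sphereMean fun y => sphereMean fun x => v y * ⟪y, x⟫ ^ 2 * ⟪x, a⟫ ^ 2 := by
    simp_rw [← integral_comp_smul_of_norm_eq_one _ he]
    refine integral_integral_swap (f := fun R S : OrthGroup E =>
      v (S • e) * ⟪S • e, R • e⟫ ^ 2 * ⟪R • e, a⟫ ^ 2) ?_
    exact (((hvR.comp continuous_snd).mul (by fun_prop)).mul
      (by fun_prop)).integrable_of_hasCompactSupport (HasCompactSupport.of_compactSpace _)
  calc sphereMean (fun x => sphereMean (fun y => v y * ⟪y, x⟫ ^ 2) * ⟪x, a⟫ ^ 2)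
      = sphereMean fun x => sphereMean fun y => v y * ⟪y, x⟫ ^ 2 * ⟪x, a⟫ ^ 2 := by
        simp_rw [sphereMean, integral_mul_const]
    _ = sphereMean fun y => (Module.finrank ℝ E * (Module.finrank ℝ E + 2) : ℝ)⁻¹ *
          (‖a‖ ^ 2 * v y + 2 * (v y * ⟪y, a⟫ ^ 2)) := by
        refine hswap.trans (sphereMean_congr fun y hy => ?_)
        simp_rw [mul_assoc (v y), real_inner_comm _ y, sphereMean_const_mul]
        rw [sphereMean_inner_sq_mul_inner_sq, hy, real_inner_comm]
        ring
    _ = _ := by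
        rw [sphereMean_const_mul, sphereMean_add (by fun_prop) (by fun_prop),
          sphereMean_const_mul, sphereMean_const_mul]
        ring

lemma sphereMean_quadraticPart_mul_inner_sq (hv : ContinuousOn v (sphere 0 1)) (a : E) :
    sphereMean (fun x => quadraticPart v x * ⟪x, a⟫ ^ 2) =
      sphereMean fun x => v x * ⟪x, a⟫ ^ 2 := by
  have hd : (Module.finrank ℝ E : ℝ) ≠ 0 := by exact_mod_cast Module.finrank_pos.ne'
  have hcont := continuous_sphereMean_mul_inner_sq hv
  calc sphereMean (fun x => quadraticPart v x * ⟪x, a⟫ ^ 2)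
      = sphereMean fun x => Module.finrank ℝ E * (Module.finrank ℝ E + 2) / 2 *
            (sphereMean (fun y => v y * ⟪y, x⟫ ^ 2) * ⟪x, a⟫ ^ 2) -
          Module.finrank ℝ E / 2 * sphereMean v * ⟪x, a⟫ ^ 2 := by
        refine sphereMean_congr fun x hx => ?_
        rw [quadraticPart, hx]
        ring
    _ = sphereMean fun x => v x * ⟪x, a⟫ ^ 2 := by
        rw [sphereMean_sub (by fun_prop) (by fun_prop), sphereMean_const_mul,
          sphereMean_const_mul, sphereMean_sphereMean_mul_inner_sq hv, sphereMean_inner_sq]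
        field_simp
        ring

end Moments

lemma sum_inner_fcc_sq (x : Euc 3) : ∑ j, ⟪x, fcc j⟫ ^ 2 = 2 * ‖x‖ ^ 2 := by
  have hinner : ∀ j, ⟪x, fcc j⟫ ^ 2 =
      (x 0 * fccInt j 0 + x 1 * fccInt j 1 + x 2 * fccInt j 2) ^ 2 / 2 := fun j => by
    rw [PiLp.inner_apply, Fin.sum_univ_three, ← Real.sq_sqrt (zero_le_two (α := ℝ)), ← div_pow]
    simp [fcc_apply]
    ring
  simp_rw [hinner, EuclideanSpace.real_norm_sq_eq]
  simp [Fin.sum_univ_six, Fin.sum_univ_three, fccInt]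
  ring

lemma sum_quadraticPart_smul_fcc {v : Euc 3 → ℝ} (hv : ContinuousOn v (sphere 0 1))
    (R : OrthGroup (Euc 3)) : ∑ j, quadraticPart v (R • fcc j) = 6 * sphereMean v := by
  have hsum : ∑ j, sphereMean (fun y => v y * ⟪y, R • fcc j⟫ ^ 2) = 2 * sphereMean v := by
    rw [← sphereMean_finsetSum _ fun j _ => by fun_prop, ← sphereMean_const_mul]
    refine sphereMean_congr fun y hy => ?_
    simp_rw [← Finset.mul_sum, real_inner_comm _ y, OrthGroup.inner_smul_left,
      real_inner_comm _ (fcc _), sum_inner_fcc_sq, OrthGroup.norm_smul, hy]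
    ring
  simp_rw [quadraticPart, ← Finset.sum_div, Finset.sum_sub_distrib, ← Finset.mul_sum, hsum,
    OrthGroup.norm_smul, norm_fcc]
  simp
  ring

/-! ### Deformations of the face-centred cubic configuration -/

/-- The vectors of an orthonormal basis with first vector `fcc i`. Its second vector is again one of
the vectors `fcc j`, its third one is a coordinate vector. -/
def fccFrameVec (i : Fin 6) : Fin 3 → Euc 3 :=
  ![fcc i, fcc (![1, 0, 3, 2, 5, 4] i), EuclideanSpace.single (![2, 2, 1, 1, 0, 0] i) 1]

lemma orthonormal_fccFrameVec (i : Fin 6) : Orthonormal ℝ (fccFrameVec i) := by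
  have h01 : ⟪fcc i, fcc (![1, 0, 3, 2, 5, 4] i)⟫ = 0 := by
    rw [inner_fcc_fcc, show ∑ l, fccInt i l * fccInt (![1, 0, 3, 2, 5, 4] i) l = 0 by
      revert i; decide]
    simp
  have hfcc (j : Fin 6) (hj : fccInt j (![2, 2, 1, 1, 0, 0] i) = 0) :
      ⟪fcc j, EuclideanSpace.single (![2, 2, 1, 1, 0, 0] i) (1 : ℝ)⟫ = 0 := by
    simp [EuclideanSpace.inner_single_right, fcc_apply, hj]
  have h02 := hfcc i (by clear * -; revert i; decide)
  have h12 := hfcc (![1, 0, 3, 2, 5, 4] i) (by clear * -; revert i; decide)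
  refine ⟨fun k => ?_, fun k l hkl => ?_⟩
  · fin_cases k <;> simp [fccFrameVec, norm_fcc]
  · rcases lt_or_gt_of_ne hkl with h | h <;> fin_cases k <;> fin_cases l <;>
      first
      | exact absurd h (by decide)
      | exact h01
      | exact h02
      | exact h12
      | exact (real_inner_comm _ _).trans h01
      | exact (real_inner_comm _ _).trans h02
      | exact (real_inner_comm _ _).trans h12

/-- The orthonormal basis with vectors `fccFrameVec i`. -/
def fccFrame (i : Fin 6) : OrthonormalBasis (Fin 3) ℝ (Euc 3) :=
  (basisOfOrthonormalOfCardEqFinrank (orthonormal_fccFrameVec i) (by simp)).toOrthonormalBasis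
    (by simpa using orthonormal_fccFrameVec i)

lemma fccFrame_apply (i : Fin 6) (k : Fin 3) : fccFrame i k = fccFrameVec i k := by
  simp [fccFrame]

lemma fccFrame_zero (i : Fin 6) : fccFrame i 0 = fcc i := fccFrame_apply i 0

/-- The symmetric map `A` with `⟪fcc i, A (fcc i)⟫ = η i` for all `i`. It is a combination of the
basis of the space of symmetric maps that is dual to the projections onto the vectors `fcc i`. -/
def fccDeformation (η : Fin 6 → ℝ) : Euc 3 →ₗ[ℝ] Euc 3 :=
  ∑ i, η i • (projMap (fcc i) - (1 / 2 : ℝ) • projMap (fccFrame i 2))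

lemma fccDeformation_apply (η : Fin 6 → ℝ) (x : Euc 3) : fccDeformation η x =
    ∑ i, η i • (⟪x, fcc i⟫ • fcc i - (1 / 2 : ℝ) • ⟪x, fccFrame i 2⟫ • fccFrame i 2) := by
  simp [fccDeformation, projMap]

lemma inner_fcc_fccDeformation (η : Fin 6 → ℝ) (j : Fin 6) :
    ⟪fcc j, fccDeformation η (fcc j)⟫ = η j := by
  have hdual (i : Fin 6) :
      ⟪fcc j, fcc i⟫ ^ 2 - 1 / 2 * ⟪fcc j, fccFrame i 2⟫ ^ 2 = if i = j then 1 else 0 := by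
    have hint : ((∑ l, fccInt j l * fccInt i l) ^ 2 - fccInt j (![2, 2, 1, 1, 0, 0] i) ^ 2 : ℤ) =
        if i = j then 4 else 0 := by
      revert i j; decide
    have hnormal : ⟪fcc j, fccFrame i 2⟫ ^ 2 = (fccInt j (![2, 2, 1, 1, 0, 0] i) : ℝ) ^ 2 / 2 := by
      simp [fccFrame_apply, fccFrameVec, EuclideanSpace.inner_single_right, fcc_apply, div_pow]
    rw [hnormal, inner_fcc_fcc]
    have hreal := congrArg (Int.cast : ℤ → ℝ) hint
    split_ifs at hreal ⊢ <;> push_cast at hreal ⊢ <;> linarith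
  have hterm (i : Fin 6) : ⟪fcc j, η i • (⟪fcc j, fcc i⟫ • fcc i -
      (1 / 2 : ℝ) • ⟪fcc j, fccFrame i 2⟫ • fccFrame i 2)⟫ = if i = j then η i else 0 := by
    rw [← mul_one (η i), ← mul_ite_zero, ← hdual i]
    simp only [inner_sub_right, real_inner_smul_right]
    ring
  rw [fccDeformation_apply, inner_sum, Finset.sum_congr rfl fun i _ => hterm i]
  simp

lemma norm_fccDeformation_le (η : Fin 6 → ℝ) (x : Euc 3) :
    ‖fccDeformation η x‖ ≤ 3 / 2 * (∑ i, |η i|) * ‖x‖ := by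
  have hproj {p : Euc 3} (hp : ‖p‖ = 1) : ‖⟪x, p⟫ • p‖ ≤ ‖x‖ := by
    simpa [norm_smul, hp] using abs_real_inner_le_norm x p
  rw [fccDeformation_apply, mul_right_comm, Finset.mul_sum]
  refine norm_sum_le_of_le _ fun i _ => ?_
  rw [norm_smul, Real.norm_eq_abs, mul_comm]
  refine mul_le_mul_of_nonneg_right ((norm_sub_le _ _).trans ?_) (abs_nonneg _)
  rw [norm_smul (1 / 2 : ℝ), Real.norm_of_nonneg one_half_pos.le]
  linarith [hproj (norm_fcc i), hproj ((fccFrame i).norm_eq_one 2)]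

lemma trace_fccDeformation (η : Fin 6 → ℝ) :
    LinearMap.trace ℝ (Euc 3) (fccDeformation η) = (∑ i, η i) / 2 := by
  have hproj {p : Euc 3} (hp : ‖p‖ = 1) : LinearMap.trace ℝ (Euc 3) (projMap p) = 1 := by
    rw [show projMap p = (innerₗ (Euc 3) p).smulRight p by
      ext x : 1; simp [projMap, real_inner_comm], LinearMap.trace_smulRight]
    simp [hp]
  simp only [fccDeformation, map_sum, map_smul, map_sub, hproj (norm_fcc _),
    hproj ((fccFrame _).norm_eq_one 2), smul_eq_mul, ← Finset.sum_mul]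
  ring

lemma abs_det_one_add_sub_one_sub_trace_le {A : Euc 3 →ₗ[ℝ] Euc 3} {s : ℝ} (hs : s ≤ 1 / 20)
    (hA : ∀ x, ‖A x‖ ≤ s * ‖x‖) :
    |LinearMap.det (1 + A) - 1 - LinearMap.trace ℝ (Euc 3) A| ≤ 7 * s ^ 2 := by
  let b := EuclideanSpace.basisFun (Fin 3) ℝ
  have hentry (i j : Fin 3) : |⟪b i, A (b j)⟫| ≤ s :=
    (abs_real_inner_le_norm _ _).trans (by simpa [b] using hA (b j))
  have hs0 : 0 ≤ s := (abs_nonneg _).trans (hentry 0 0)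
  have hmul {x y : ℝ} (hx : |x| ≤ s) (hy : |y| ≤ s) : |x * y| ≤ s ^ 2 := by
    rw [abs_mul, sq]; gcongr
  have hmul' {x y z : ℝ} (hx : |x| ≤ s) (hy : |y| ≤ s) (hz : |z| ≤ s) :
      |x * (y * z)| ≤ s ^ 2 * (1 / 20) := by
    rw [abs_mul, mul_comm]
    gcongr
    exacts [hmul hy hz, hx.trans hs]
  have hdet : LinearMap.det (1 + A) = (1 + Matrix.of fun i j => ⟪b i, A (b j)⟫).det := by
    rw [← LinearMap.det_toMatrix b.toBasis, map_add]
    congr 2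
    · exact LinearMap.toMatrix_one _
    · ext i j; simp [LinearMap.toMatrix_apply, OrthonormalBasis.repr_apply_apply]
  rw [hdet, LinearMap.trace_eq_sum_inner A b, Matrix.det_fin_three, Fin.sum_univ_three]
  simp only [Matrix.add_apply, Matrix.of_apply, Matrix.one_apply, Fin.reduceEq, if_true, if_false]
  have h2 (i j k l : Fin 3) := abs_le.mp (hmul (hentry i j) (hentry k l))
  have h3 (i j k l m n : Fin 3) := abs_le.mp (hmul' (hentry i j) (hentry k l) (hentry m n))
  rw [abs_le]
  constructor <;>
    nlinarith [h2 0 0 1 1, h2 0 0 2 2, h2 1 1 2 2, h2 0 1 1 0, h2 0 2 2 0, h2 1 2 2 1,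
      h3 0 0 1 1 2 2, h3 0 0 1 2 2 1, h3 0 1 1 0 2 2, h3 0 1 1 2 2 0, h3 0 2 1 0 2 1,
      h3 0 2 1 1 2 0, sq_nonneg s]

/-! ### Nearly Euclidean seminorms -/

section NearEuclidean

variable {E : Type*} [NormedAddCommGroup E] [InnerProductSpace ℝ E]

/-- The difference of the squares of a seminorm and of the Euclidean norm: the first-order
perturbation of the ball in the whole argument. -/
def sqDefect (f : Seminorm ℝ E) (x : E) : ℝ := f x ^ 2 - ‖x‖ ^ 2

/-- A seminorm whose square is within relative error `ε` of the square of the Euclidean norm. -/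
def IsNearEuclidean (f : Seminorm ℝ E) (ε : ℝ) : Prop := ∀ x, |sqDefect f x| ≤ ε * ‖x‖ ^ 2

lemma sqDefect_smul (f : Seminorm ℝ E) (c : ℝ) (x : E) :
    sqDefect f (c • x) = c ^ 2 * sqDefect f x := by
  simp only [sqDefect, map_smul_eq_mul, norm_smul, mul_pow, Real.norm_eq_abs, sq_abs]
  ring

lemma sqDefect_neg (f : Seminorm ℝ E) (x : E) : sqDefect f (-x) = sqDefect f x := by
  simp [sqDefect]

/-- The seminorm `x ↦ f (R • x)`. -/
def rotatedSeminorm [CompleteSpace E] (f : Seminorm ℝ E) (R : OrthGroup E) : Seminorm ℝ E :=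
  f.comp ((R : E →L[ℝ] E) : E →ₗ[ℝ] E)

lemma rotatedSeminorm_apply [CompleteSpace E] (f : Seminorm ℝ E) (R : OrthGroup E) (x : E) :
    rotatedSeminorm f R x = f (R • x) := rfl

lemma sqDefect_rotatedSeminorm [CompleteSpace E] (f : Seminorm ℝ E) (R : OrthGroup E) (x : E) :
    sqDefect (rotatedSeminorm f R) x = sqDefect f (R • x) := by
  rw [sqDefect, sqDefect, rotatedSeminorm_apply, OrthGroup.norm_smul]

/-- The larger of the two increments of `f` at `x` along `w` and `-w`; it is half the second
difference of `f` up to the antisymmetric part. -/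
def symmExcess (f : Seminorm ℝ E) (x w : E) : ℝ := max (f (x + w)) (f (x - w)) - f x

lemma symmExcess_le_iff {f : Seminorm ℝ E} {x w : E} {c : ℝ} :
    symmExcess f x w ≤ c ↔ f (x + w) ≤ f x + c ∧ f (x - w) ≤ f x + c := by
  rw [symmExcess, sub_le_iff_le_add', max_le_iff]

lemma symmExcess_nonneg (f : Seminorm ℝ E) (x w : E) : 0 ≤ symmExcess f x w := by
  have hmid : f ((2 : ℝ) • x) ≤ f (x + w) + f (x - w) := by
    rw [show (2 : ℝ) • x = (x + w) + (x - w) by module]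
    exact map_add_le_add _ _ _
  rw [map_smul_eq_mul, Real.norm_ofNat] at hmid
  have hle := symmExcess_le_iff.mp (le_refl (symmExcess f x w))
  linarith

lemma apply_add_smul_sub_le (f : Seminorm ℝ E) {h t : ℝ} (h0 : 0 ≤ h) (ht : 0 < t) (hht : h ≤ t)
    (x u : E) : f (x + h • u) - f x ≤ h / t * (f (x + t • u) - f x) := by
  have hcomb : x + h • u = (1 - h / t) • x + (h / t) • (x + t • u) := by
    rw [smul_add, smul_smul, div_mul_cancel₀ _ ht.ne']
    module
  have hle := f.convexOn.2 (Set.mem_univ x) (Set.mem_univ (x + t • u))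
    (sub_nonneg.mpr ((div_le_one ht).mpr hht)) (div_nonneg h0 ht.le) (sub_add_cancel 1 (h / t))
  rw [← hcomb, smul_eq_mul, smul_eq_mul] at hle
  linarith

/-- Convexity along the segments joining `x + η • x + ∑ k, a k • u k` to points `x ± h • u k`. -/
lemma mul_sub_sum_symmExcess_le {ι : Type*} [Fintype ι] (f : Seminorm ℝ E) {h : ℝ} (h0 : 0 < h)
    (x : E) (u : ι → E) (η : ℝ) (a : ι → ℝ) :
    (1 + η) * f x - ∑ k, |a k| / h * symmExcess f x (h • u k) ≤
      f (x + (η • x + ∑ k, a k • u k)) := by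
  have hz (k : ι) : ∃ z, (|a k| / h) • z = (|a k| / h) • x - a k • u k ∧
      f z ≤ f x + symmExcess f x (h • u k) := by
    rcases le_total 0 (a k) with hk | hk
    · refine ⟨x - h • u k, ?_, (symmExcess_le_iff.mp le_rfl).2⟩
      rw [abs_of_nonneg hk, smul_sub, smul_smul, div_mul_cancel₀ _ h0.ne']
    · refine ⟨x + h • u k, ?_, (symmExcess_le_iff.mp le_rfl).1⟩
      rw [abs_of_nonpos hk, smul_add, smul_smul, div_mul_cancel₀ _ h0.ne']
      module
  choose z hz hfz using hz
  have hcomb : (1 + η + ∑ k, |a k| / h) • x =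
      (x + (η • x + ∑ k, a k • u k)) + ∑ k, (|a k| / h) • z k := by
    simp only [hz, Finset.sum_sub_distrib, ← Finset.sum_smul]
    module
  have hsum : f (∑ k, (|a k| / h) • z k) ≤
      ∑ k, |a k| / h * (f x + symmExcess f x (h • u k)) := by
    refine (Finset.le_sum_of_subadditive f (map_zero f).le (map_add_le_add f) _ _).trans
      (Finset.sum_le_sum fun k _ => ?_)
    rw [map_smul_eq_mul, Real.norm_of_nonneg (by positivity)]
    exact mul_le_mul_of_nonneg_left (hfz k) (by positivity)
  have htotal := map_add_le_add f (x + (η • x + ∑ k, a k • u k)) (∑ k, (|a k| / h) • z k)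
  rw [← hcomb, map_smul_eq_mul] at htotal
  have habs := mul_le_mul_of_nonneg_right (le_abs_self (1 + η + ∑ k, |a k| / h)) (apply_nonneg f x)
  simp only [mul_add, Finset.sum_add_distrib, ← Finset.sum_mul] at hsum
  rw [Real.norm_eq_abs] at htotal
  linarith

namespace IsNearEuclidean

variable {f : Seminorm ℝ E} {ε δ : ℝ}

lemma mono (hf : IsNearEuclidean f ε) (hεδ : ε ≤ δ) : IsNearEuclidean f δ := fun x =>
  (hf x).trans (by gcongr)

lemma continuous (hf : IsNearEuclidean f ε) : Continuous f := by
  have hbound (x : E) : f x ≤ √((1 + ε) * ‖x‖ ^ 2) := by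
    refine Real.le_sqrt_of_sq_le ?_
    have hx := (abs_le.mp (hf x)).2
    rw [sqDefect] at hx
    linarith
  refine Seminorm.continuous_of_continuousAt_zero ?_
  have hlim : Filter.Tendsto (fun x : E => √((1 + ε) * ‖x‖ ^ 2)) (nhds 0) (nhds 0) := by
    have hcont : Continuous fun x : E => √((1 + ε) * ‖x‖ ^ 2) := by fun_prop
    simpa using hcont.tendsto 0
  rw [ContinuousAt, map_zero]
  exact squeeze_zero (apply_nonneg f) hbound hlim

lemma continuous_sqDefect (hf : IsNearEuclidean f ε) : Continuous (sqDefect f) :=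
  (hf.continuous.pow 2).sub (continuous_norm.pow 2)

lemma rotated [CompleteSpace E] (hf : IsNearEuclidean f ε) (R : OrthGroup E) :
    IsNearEuclidean (rotatedSeminorm f R) ε := fun x => by
  rw [sqDefect_rotatedSeminorm, ← OrthGroup.norm_smul R x]
  exact hf _

lemma abs_sqDefect_le (hf : IsNearEuclidean f ε) {x : E} (hx : ‖x‖ = 1) : |sqDefect f x| ≤ ε := by
  simpa [hx] using hf x

lemma one_sub_le (hf : IsNearEuclidean f ε) (hε : ε ≤ 1) {x : E} (hx : ‖x‖ = 1) :
    1 - ε ≤ f x := by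
  have hle := abs_le.mp (hf.abs_sqDefect_le hx)
  rw [sqDefect, hx] at hle
  refine abs_le_of_sq_le_sq' ?_ (apply_nonneg f x) |>.2
  nlinarith

lemma le_one_add (hf : IsNearEuclidean f ε) {x : E} (hx : ‖x‖ ^ 2 ≤ 1 + ε) : f x ≤ 1 + ε := by
  have hle := (abs_le.mp (hf x)).2
  rw [sqDefect] at hle
  have hε : 0 ≤ 1 + ε := (sq_nonneg _).trans hx
  refine abs_le_of_sq_le_sq' ?_ hε |>.2
  nlinarith

lemma apply_add_smul_sub_le (hf : IsNearEuclidean f (δ ^ 2)) (hδ : 0 < δ) (hδ1 : δ ≤ 1) {x u : E}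
    (hx : ‖x‖ = 1) (hu : ‖u‖ = 1) (hxu : ⟪x, u⟫ ≤ 0) {h : ℝ} (h0 : 0 ≤ h) (hh : h ≤ δ) :
    f (x + h • u) - f x ≤ 2 * δ * h := by
  have hnorm : ‖x + δ • u‖ ^ 2 ≤ 1 + δ ^ 2 := by
    rw [norm_add_sq_real, hx, norm_smul, hu, real_inner_smul_right, Real.norm_of_nonneg hδ.le]
    nlinarith
  have hup := hf.le_one_add hnorm
  have hlow := hf.one_sub_le (pow_le_one₀ hδ.le hδ1) hx
  calc f (x + h • u) - f x ≤ h / δ * (f (x + δ • u) - f x) :=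
        _root_.apply_add_smul_sub_le f h0 hδ hh x u
    _ ≤ h / δ * (2 * δ ^ 2) := by gcongr; linarith
    _ = 2 * δ * h := by field_simp

lemma sub_le (hf : IsNearEuclidean f (δ ^ 2)) (hδ : 0 < δ) (hδ1 : δ ≤ 1) {x y : E} (hx : ‖x‖ = 1)
    (hy : ‖y‖ = 1) (hxy : ‖y - x‖ ≤ δ) : f y - f x ≤ 2 * δ * ‖y - x‖ := by
  rcases eq_or_ne y x with rfl | hne
  · simp
  have hd : 0 < ‖y - x‖ := norm_pos_iff.mpr (sub_ne_zero.mpr hne)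
  have hxy0 : ⟪x, ‖y - x‖⁻¹ • (y - x)⟫ ≤ 0 := by
    rw [real_inner_smul_right, inner_sub_right, real_inner_self_eq_norm_sq, hx]
    refine mul_nonpos_of_nonneg_of_nonpos (by positivity) ?_
    simpa [hx, hy] using real_inner_le_norm x y
  have hle := hf.apply_add_smul_sub_le hδ hδ1 hx
    (by rw [norm_smul, norm_inv, norm_norm, inv_mul_cancel₀ hd.ne']) hxy0 hd.le hxy
  rwa [smul_inv_smul₀ hd.ne', add_sub_cancel] at hle

lemma abs_sqDefect_sub_le (hf : IsNearEuclidean f (δ ^ 2)) (hδ : 0 < δ) (hδ1 : δ ≤ 1 / 2) {x y : E}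
    (hx : ‖x‖ = 1) (hy : ‖y‖ = 1) (hxy : ‖y - x‖ ≤ δ) :
    |sqDefect f y - sqDefect f x| ≤ 6 * δ * ‖y - x‖ := by
  have hup {z : E} (hz : ‖z‖ = 1) : f z ≤ 3 / 2 := by
    have hle := hf.le_one_add (x := z) (by rw [hz]; nlinarith)
    nlinarith
  have hsub : |f y - f x| ≤ 2 * δ * ‖y - x‖ := by
    have hyx := hf.sub_le hδ (by linarith) hy hx (by rwa [norm_sub_rev])
    rw [norm_sub_rev] at hyx
    exact abs_le.mpr ⟨by linarith, hf.sub_le hδ (by linarith) hx hy hxy⟩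
  have hfactor : sqDefect f y - sqDefect f x = (f y - f x) * (f y + f x) := by
    rw [sqDefect, sqDefect, hx, hy]; ring
  have hsum : 0 ≤ f y + f x := add_nonneg (apply_nonneg f y) (apply_nonneg f x)
  rw [hfactor, abs_mul, abs_of_nonneg hsum]
  calc |f y - f x| * (f y + f x) ≤ 2 * δ * ‖y - x‖ * 3 := by
        gcongr; linarith [hup hx, hup hy]
    _ = 6 * δ * ‖y - x‖ := by ring

lemma symmExcess_le (hf : IsNearEuclidean f (δ ^ 2)) (hδ : 0 < δ) (hδ1 : δ ≤ 1) {x u : E}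
    (hx : ‖x‖ = 1) (hu : ‖u‖ = 1) (hxu : ⟪x, u⟫ = 0) {h : ℝ} (h0 : 0 ≤ h) (hh : h ≤ δ) :
    symmExcess f x (h • u) ≤ 2 * δ * h := by
  have hplus := hf.apply_add_smul_sub_le hδ hδ1 hx hu hxu.le h0 hh
  have hminus := hf.apply_add_smul_sub_le hδ hδ1 hx (u := -u) (by rwa [norm_neg])
    (by rw [inner_neg_right, hxu, neg_zero]) h0 hh
  rw [smul_neg, ← sub_eq_add_neg] at hminus
  rw [symmExcess_le_iff]
  constructor <;> linarith

lemma symmExcess_le_abs_sqDefect (hf : IsNearEuclidean f ε) (hε : ε ≤ 1 / 4) {x w : E}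
    (hx : ‖x‖ = 1) (hxw : ⟪x, w⟫ = 0) : symmExcess f x w ≤
      |sqDefect f (x + w)| + |sqDefect f (x - w)| + |sqDefect f x| + ‖w‖ ^ 2 := by
  have hlow := hf.one_sub_le (by linarith) hx
  have hside (w : E) (hxw : ⟪x, w⟫ = 0) :
      f (x + w) - f x ≤ |sqDefect f (x + w)| + |sqDefect f x| + ‖w‖ ^ 2 := by
    have hnorm : ‖x + w‖ ^ 2 = 1 + ‖w‖ ^ 2 := by
      rw [norm_add_sq_real, hx, hxw]; ring
    have hplus : f (x + w) ^ 2 - ‖x + w‖ ^ 2 ≤ |sqDefect f (x + w)| := le_abs_self _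
    have hminus : -|sqDefect f x| ≤ f x ^ 2 - ‖x‖ ^ 2 := neg_abs_le _
    rw [hnorm] at hplus
    rw [hx] at hminus
    have hdefect : 0 ≤ |sqDefect f (x + w)| + |sqDefect f x| + ‖w‖ ^ 2 := by positivity
    by_contra! hlt
    have hsum : 1 < f (x + w) + f x := by linarith
    have hprod : f (x + w) - f x < (f (x + w) - f x) * (f (x + w) + f x) :=
      lt_mul_of_one_lt_right (by linarith) hsum
    linarith [show (f (x + w) - f x) * (f (x + w) + f x) = f (x + w) ^ 2 - f x ^ 2 by ring]
  have hplus := hside w hxw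
  have hminus := hside (-w) (by rw [inner_neg_right, hxw, neg_zero])
  rw [norm_neg, ← sub_eq_add_neg] at hminus
  rw [symmExcess_le_iff]
  constructor <;> linarith [abs_nonneg (sqDefect f (x + w)), abs_nonneg (sqDefect f (x - w))]

end IsNearEuclidean

end NearEuclidean

/-! ### Moving the configuration out of the unit ball of a seminorm -/

section FccDilation

lemma one_div_sub_one_eq {y v : ℝ} (hy : 0 < y) (hyv : y ^ 2 = 1 + v) :
    1 / y - 1 = -v / (y * (1 + y)) := by
  field_simp
  linear_combination -hyv

lemma abs_one_div_sub_one_le {y v : ℝ} (hy : 0 < y) (hyv : y ^ 2 = 1 + v) (hv : |v| ≤ 1 / 100) :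
    |1 / y - 1| ≤ |v| := by
  have hy1 : 99 / 100 ≤ y := by nlinarith [abs_le.mp hv]
  rw [one_div_sub_one_eq hy hyv, abs_div, abs_neg, abs_of_pos (a := y * (1 + y)) (by positivity)]
  exact div_le_self (abs_nonneg v) (by nlinarith)

lemma one_div_sub_one_le {y v : ℝ} (hy : 0 < y) (hyv : y ^ 2 = 1 + v) (hv : |v| ≤ 1 / 100) :
    1 / y - 1 ≤ -v / 2 + v ^ 2 := by
  have hy1 : 99 / 100 ≤ y := by nlinarith [abs_le.mp hv]
  have hexpand : 1 / y - 1 = -v / 2 + v ^ 2 * ((y + 2) / (2 * y * (1 + y) ^ 2)) := by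
    obtain rfl : v = y ^ 2 - 1 := by linarith
    field_simp
    ring
  have hle : (y + 2) / (2 * y * (1 + y) ^ 2) ≤ 1 := by
    rw [div_le_one (by positivity)]
    nlinarith [sq_nonneg y, mul_pos hy hy]
  rw [hexpand]
  gcongr
  exact mul_le_of_le_one_right (sq_nonneg v) hle

/-- The sum of the excesses of `f` at the vectors `fcc i` in steps of length `h` along the tangent
vectors of `fccFrame i`. -/
def tangentialExcess (f : Seminorm ℝ (Euc 3)) (h : ℝ) : ℝ :=
  ∑ i, ∑ k : Fin 2, symmExcess f (fcc i) (h • fccFrame i k.succ)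

/-- The relative length by which `fcc i` has to be changed to reach the boundary of the unit ball
of `f`. -/
def fccDeficit (f : Seminorm ℝ (Euc 3)) (i : Fin 6) : ℝ := 1 / f (fcc i) - 1

/-- The radial part, at the vectors `fcc i`, of the deformation that moves all these vectors out of
the open unit ball of `f`: the deficit and a correction for the tangential movement. -/
def fccDilation (f : Seminorm ℝ (Euc 3)) (h : ℝ) (i : Fin 6) : ℝ :=
  fccDeficit f i + 4 * (∑ j, |fccDeficit f j|) * (tangentialExcess f h / h)

/-- The second-order error in the determinant of `1 + fccDeformation (fccDilation f h)`. -/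
def fccError (f : Seminorm ℝ (Euc 3)) (h : ℝ) : ℝ :=
  379 * ∑ i, sqDefect f (fcc i) ^ 2 +
    12 * (tangentialExcess f h / h * ∑ i, |sqDefect f (fcc i)|)

variable {f : Seminorm ℝ (Euc 3)} {h : ℝ}

lemma tangentialExcess_nonneg (f : Seminorm ℝ (Euc 3)) (h : ℝ) : 0 ≤ tangentialExcess f h :=
  Finset.sum_nonneg fun _ _ => Finset.sum_nonneg fun _ _ => symmExcess_nonneg _ _ _

lemma sum_symmExcess_le_tangentialExcess (f : Seminorm ℝ (Euc 3)) (h : ℝ) (i : Fin 6) :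
    ∑ k : Fin 2, symmExcess f (fcc i) (h • fccFrame i k.succ) ≤ tangentialExcess f h :=
  Finset.single_le_sum (f := fun i => ∑ k : Fin 2, symmExcess f (fcc i) (h • fccFrame i k.succ))
    (fun _ _ => Finset.sum_nonneg fun _ _ => symmExcess_nonneg _ _ _) (Finset.mem_univ i)

lemma mul_sub_le_apply_fcc_add_fccDeformation (f : Seminorm ℝ (Euc 3)) (h0 : 0 < h)
    (η : Fin 6 → ℝ) (i : Fin 6) :
    (1 + η i) * f (fcc i) - 3 / 2 * (∑ j, |η j|) * (tangentialExcess f h / h) ≤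
      f (fcc i + fccDeformation η (fcc i)) := by
  let a (k : Fin 2) : ℝ := ⟪fccFrame i k.succ, fccDeformation η (fcc i)⟫
  have hexpand : fccDeformation η (fcc i) = η i • fcc i + ∑ k, a k • fccFrame i k.succ := by
    conv_lhs => rw [← (fccFrame i).sum_repr' (fccDeformation η (fcc i)), Fin.sum_univ_succ]
    rw [fccFrame_zero, inner_fcc_fccDeformation]
  have ha (k : Fin 2) : |a k| ≤ 3 / 2 * ∑ j, |η j| := by
    have hA := norm_fccDeformation_le η (fcc i)
    rw [norm_fcc, mul_one] at hA
    exact (abs_real_inner_le_norm _ _).trans (by simpa using hA)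
  have hcost : ∑ k, |a k| / h * symmExcess f (fcc i) (h • fccFrame i k.succ) ≤
      3 / 2 * (∑ j, |η j|) * (tangentialExcess f h / h) := by
    calc ∑ k, |a k| / h * symmExcess f (fcc i) (h • fccFrame i k.succ)
        ≤ ∑ k : Fin 2, 3 / 2 * (∑ j, |η j|) / h *
            symmExcess f (fcc i) (h • fccFrame i k.succ) := by
          gcongr with k
          exacts [symmExcess_nonneg _ _ _, ha k]
      _ = 3 / 2 * (∑ j, |η j|) *
            ((∑ k : Fin 2, symmExcess f (fcc i) (h • fccFrame i k.succ)) / h) := by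
          rw [← Finset.mul_sum]; ring
      _ ≤ _ := by gcongr; exact sum_symmExcess_le_tangentialExcess f h i
  have hcone := mul_sub_sum_symmExcess_le f h0 (fcc i) (fun k : Fin 2 => fccFrame i k.succ) (η i) a
  rw [← hexpand] at hcone
  linarith

variable {δ : ℝ} (hf : IsNearEuclidean f (δ ^ 2)) (hδ : 0 < δ) (hδ1 : δ ≤ 1 / 576)
include hf hδ hδ1

lemma abs_sqDefect_fcc_le (i : Fin 6) : |sqDefect f (fcc i)| ≤ 1 / 10000 :=
  (hf.abs_sqDefect_le (norm_fcc i)).trans (by nlinarith)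

lemma three_quarters_le_apply_fcc (i : Fin 6) : 3 / 4 ≤ f (fcc i) :=
  le_trans (by nlinarith) (hf.one_sub_le (by nlinarith) (norm_fcc i))

omit hf hδ hδ1 in
lemma apply_fcc_sq (i : Fin 6) : f (fcc i) ^ 2 = 1 + sqDefect f (fcc i) := by
  rw [sqDefect, norm_fcc]; ring

lemma sum_abs_fccDeficit_le : ∑ i, |fccDeficit f i| ≤ ∑ i, |sqDefect f (fcc i)| :=
  Finset.sum_le_sum fun i _ => abs_one_div_sub_one_le
    (by linarith [three_quarters_le_apply_fcc hf hδ hδ1 i]) (apply_fcc_sq i)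
    ((abs_sqDefect_fcc_le hf hδ hδ1 i).trans (by norm_num))

lemma sum_abs_fccDeficit_le_one_div : ∑ i, |fccDeficit f i| ≤ 1 / 1000 :=
  (sum_abs_fccDeficit_le hf hδ hδ1).trans <|
    (Finset.sum_le_sum fun i _ => abs_sqDefect_fcc_le hf hδ hδ1 i).trans (by norm_num)

lemma sum_fccDeficit_le :
    ∑ i, fccDeficit f i ≤ -(∑ i, sqDefect f (fcc i)) / 2 + ∑ i, sqDefect f (fcc i) ^ 2 := by
  rw [neg_div, Finset.sum_div, ← Finset.sum_neg_distrib, ← Finset.sum_add_distrib]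
  refine Finset.sum_le_sum fun i _ => ?_
  rw [← neg_div]
  exact one_div_sub_one_le (by linarith [three_quarters_le_apply_fcc hf hδ hδ1 i]) (apply_fcc_sq i)
    ((abs_sqDefect_fcc_le hf hδ hδ1 i).trans (by norm_num))

variable (h0 : 0 < h) (hh : h ≤ δ)
include h0 hh

lemma tangentialExcess_div_le : tangentialExcess f h / h ≤ 1 / 24 := by
  have hle : tangentialExcess f h ≤ ∑ _i : Fin 6, ∑ _k : Fin 2, 2 * δ * h :=
    Finset.sum_le_sum fun i _ => Finset.sum_le_sum fun k _ =>
      hf.symmExcess_le hδ (by linarith) (norm_fcc i) ((fccFrame i).norm_eq_one _)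
        (by rw [← fccFrame_zero, (fccFrame i).inner_eq_zero (Fin.succ_ne_zero k).symm]) h0.le hh
  rw [div_le_iff₀ h0]
  simp only [Finset.sum_const, Finset.card_univ, Fintype.card_fin, nsmul_eq_mul,
    Nat.cast_ofNat] at hle
  nlinarith

lemma sum_abs_fccDilation_le : ∑ i, |fccDilation f h i| ≤ 2 * ∑ i, |fccDeficit f i| := by
  have hβ := tangentialExcess_div_le hf hδ hδ1 h0 hh
  have hβ0 : 0 ≤ tangentialExcess f h / h := div_nonneg (tangentialExcess_nonneg f h) h0.le
  calc ∑ i, |fccDilation f h i|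
      ≤ ∑ i, (|fccDeficit f i| + 4 * (∑ j, |fccDeficit f j|) * (tangentialExcess f h / h)) :=
        Finset.sum_le_sum fun i _ => (abs_add_le _ _).trans_eq <| by
          rw [abs_of_nonneg (a := _ * (tangentialExcess f h / h)) (by positivity)]
    _ = (1 + 24 * (tangentialExcess f h / h)) * ∑ i, |fccDeficit f i| := by
        rw [Finset.sum_add_distrib, Finset.sum_const, Finset.card_univ, Fintype.card_fin,
          nsmul_eq_mul, Nat.cast_ofNat]
        ring
    _ ≤ 2 * ∑ i, |fccDeficit f i| := by gcongr; linarith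

lemma one_le_apply_fcc_add_fccDeformation (i : Fin 6) :
    1 ≤ f (fcc i + fccDeformation (fccDilation f h) (fcc i)) := by
  have hfi := three_quarters_le_apply_fcc hf hδ hδ1 i
  have hη := sum_abs_fccDilation_le hf hδ hδ1 h0 hh
  have hβ0 : 0 ≤ tangentialExcess f h / h := div_nonneg (tangentialExcess_nonneg f h) h0.le
  have hs0 : 0 ≤ ∑ i, |fccDeficit f i| := Finset.sum_nonneg fun _ _ => abs_nonneg _
  have hdilate : (1 + fccDilation f h i) * f (fcc i) =
      1 + 4 * (∑ j, |fccDeficit f j|) * (tangentialExcess f h / h) * f (fcc i) := by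
    rw [fccDilation, fccDeficit]
    field_simp [(by linarith : f (fcc i) ≠ 0)]
    ring
  have hgain : 3 * ((∑ j, |fccDeficit f j|) * (tangentialExcess f h / h)) ≤
      4 * (∑ j, |fccDeficit f j|) * (tangentialExcess f h / h) * f (fcc i) := by
    nlinarith [mul_nonneg (mul_nonneg hs0 hβ0) (sub_nonneg.mpr hfi)]
  have hloss : 3 / 2 * (∑ j, |fccDilation f h j|) * (tangentialExcess f h / h) ≤
      3 / 2 * (2 * ∑ j, |fccDeficit f j|) * (tangentialExcess f h / h) := by gcongr
  have hcone := mul_sub_le_apply_fcc_add_fccDeformation f h0 (fccDilation f h) i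
  linarith

lemma norm_fccDeformation_fccDilation_le (x : Euc 3) :
    ‖fccDeformation (fccDilation f h) x‖ ≤ 3 * (∑ i, |fccDeficit f i|) * ‖x‖ :=
  (norm_fccDeformation_le _ x).trans <| by
    refine mul_le_mul_of_nonneg_right ?_ (norm_nonneg x)
    linarith [sum_abs_fccDilation_le hf hδ hδ1 h0 hh]

lemma abs_det_one_add_fccDeformation_le :
    |LinearMap.det (1 + fccDeformation (fccDilation f h)) - 1 - (∑ i, fccDeficit f i) / 2 -
      12 * ((∑ i, |fccDeficit f i|) * (tangentialExcess f h / h))| ≤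
        63 * (∑ i, |fccDeficit f i|) ^ 2 := by
  have hs := sum_abs_fccDeficit_le_one_div hf hδ hδ1
  have hdet := abs_det_one_add_sub_one_sub_trace_le (by linarith)
    (norm_fccDeformation_fccDilation_le hf hδ hδ1 h0 hh)
  have htrace : (∑ i, fccDilation f h i) = (∑ i, fccDeficit f i) +
      24 * ((∑ i, |fccDeficit f i|) * (tangentialExcess f h / h)) := by
    simp only [fccDilation, Finset.sum_add_distrib, Finset.sum_const, Finset.card_univ,
      Fintype.card_fin, nsmul_eq_mul]
    ring
  rw [trace_fccDeformation, htrace, mul_pow] at hdet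
  refine (congrArg abs ?_).trans_le (hdet.trans_eq ?_) <;> ring

lemma det_one_add_fccDeformation_pos :
    0 < LinearMap.det (1 + fccDeformation (fccDilation f h)) := by
  have hβ0 : 0 ≤ tangentialExcess f h / h := div_nonneg (tangentialExcess_nonneg f h) h0.le
  have hs0 : 0 ≤ ∑ i, |fccDeficit f i| := Finset.sum_nonneg fun _ _ => abs_nonneg _
  have hs := sum_abs_fccDeficit_le_one_div hf hδ hδ1
  have hsum := neg_le_of_abs_le (Finset.abs_sum_le_sum_abs (fccDeficit f) Finset.univ)
  have hdet := (abs_le.mp (abs_det_one_add_fccDeformation_le hf hδ hδ1 h0 hh)).1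
  nlinarith [mul_nonneg hs0 hβ0]

lemma det_one_add_fccDeformation_le :
    LinearMap.det (1 + fccDeformation (fccDilation f h)) ≤
      1 - (∑ i, sqDefect f (fcc i)) / 4 + fccError f h := by
  have hβ0 : 0 ≤ tangentialExcess f h / h := div_nonneg (tangentialExcess_nonneg f h) h0.le
  have hs0 : 0 ≤ ∑ i, |fccDeficit f i| := Finset.sum_nonneg fun _ _ => abs_nonneg _
  have hs := sum_abs_fccDeficit_le hf hδ hδ1
  have hsβ := mul_le_mul_of_nonneg_right hs hβ0
  have hcauchy : (∑ i, |sqDefect f (fcc i)|) ^ 2 ≤ 6 * ∑ i, sqDefect f (fcc i) ^ 2 := by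
    simpa using sq_sum_le_card_mul_sum_sq (s := Finset.univ) (f := fun i => |sqDefect f (fcc i)|)
  have hsum := sum_fccDeficit_le hf hδ hδ1
  have hdet := (abs_le.mp (abs_det_one_add_fccDeformation_le hf hδ hδ1 h0 hh)).2
  rw [fccError]
  nlinarith [pow_le_pow_left₀ hs0 hs 2,
    Finset.sum_nonneg fun i (_ : i ∈ Finset.univ) => sq_nonneg (sqDefect f (fcc i))]

end FccDilation

/-! ### Averaging over rotations -/

section Averaging

/-- A function of mean zero that is bounded above by a small function is small: its negative part
has the same integral as its positive part. -/
lemma integral_sq_le_of_integral_eq_zero {α : Type*} [MeasurableSpace α] {μ : Measure α}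
    {g e : α → ℝ} {A : ℝ} (hg : Integrable g μ) (he : Integrable e μ) (hg0 : ∫ x, g x ∂μ = 0)
    (he0 : ∀ x, 0 ≤ e x) (hgA : ∀ x, |g x| ≤ A) (hge : ∀ x, g x ≤ e x) :
    ∫ x, g x ^ 2 ∂μ ≤ 2 * A * ∫ x, e x ∂μ := by
  calc ∫ x, g x ^ 2 ∂μ ≤ ∫ x, A * (2 * e x - g x) ∂μ := by
        refine integral_mono_of_nonneg (.of_forall fun x => sq_nonneg _)
          (((he.const_mul 2).sub hg).const_mul A) (.of_forall fun x => ?_)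
        have habs : |g x| ≤ 2 * e x - g x :=
          abs_le.mpr ⟨by linarith [he0 x], by linarith [hge x]⟩
        calc g x ^ 2 = |g x| * |g x| := by rw [abs_mul_abs_self, sq]
          _ ≤ A * (2 * e x - g x) := mul_le_mul (hgA x) habs (abs_nonneg _)
              ((abs_nonneg _).trans (hgA x))
    _ = 2 * A * ∫ x, e x ∂μ := by
        rw [integral_const_mul, integral_sub (he.const_mul 2) hg, integral_const_mul, hg0]
        ring

variable {E : Type*} [NormedAddCommGroup E] [InnerProductSpace ℝ E] [FiniteDimensional ℝ E]
  [Nontrivial E] {f : Seminorm ℝ E} {ε δ : ℝ}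

lemma IsNearEuclidean.abs_sqDefect_pow_le_sphereMean (hf : IsNearEuclidean f (δ ^ 2))
    (hδ : 0 < δ) (hδ1 : δ ≤ 1 / 2) {p : E} (hp : ‖p‖ = 1) :
    |sqDefect f p| ^ 2 / 4 * ((1 / 8) ^ Module.finrank ℝ E *
      (|sqDefect f p| / (12 * δ)) ^ (Module.finrank ℝ E - 1)) ≤
        sphereMean fun x => sqDefect f x ^ 2 := by
  obtain ⟨e, he⟩ := exists_norm_eq E zero_le_one
  rcases (abs_nonneg (sqDefect f p)).eq_or_lt with h0 | hM
  · rw [← h0]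
    simpa using sphereMean_nonneg fun x => sq_nonneg (sqDefect f x)
  have hs : |sqDefect f p| / (12 * δ) ≤ δ := by
    rw [div_le_iff₀ (by positivity)]
    linarith [hf.abs_sqDefect_le hp, sq_nonneg δ]
  have hcap : {R : OrthGroup E | ‖R • e - p‖ ≤ |sqDefect f p| / (12 * δ)} ⊆
      {R | |sqDefect f p| ^ 2 / 4 ≤ sqDefect f (R • e) ^ 2} := fun R hR => by
    rw [Set.mem_ofPred_eq] at hR ⊢
    have hlip := hf.abs_sqDefect_sub_le hδ hδ1 hp (y := R • e) (by rw [OrthGroup.norm_smul, he])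
      (hR.trans hs)
    have hhalf : 6 * δ * ‖R • e - p‖ ≤ |sqDefect f p| / 2 := by
      calc 6 * δ * ‖R • e - p‖ ≤ 6 * δ * (|sqDefect f p| / (12 * δ)) := by gcongr
        _ = |sqDefect f p| / 2 := by field_simp; norm_num
    have htri := abs_sub_abs_le_abs_sub (sqDefect f p) (sqDefect f (R • e))
    rw [abs_sub_comm] at htri
    calc |sqDefect f p| ^ 2 / 4 = (|sqDefect f p| / 2) ^ 2 := by ring
      _ ≤ |sqDefect f (R • e)| ^ 2 := by gcongr; linarith
      _ = sqDefect f (R • e) ^ 2 := sq_abs _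
  have hmarkov := mul_meas_ge_le_integral_of_nonneg (μ := OrthGroup.haar)
    (f := fun R : OrthGroup E => sqDefect f (R • e) ^ 2) (.of_forall fun R => sq_nonneg _)
    (OrthGroup.integrable_comp_smul (hf.continuous_sqDefect.pow 2).continuousOn he)
    (|sqDefect f p| ^ 2 / 4)
  rw [integral_comp_smul_of_norm_eq_one (fun x => sqDefect f x ^ 2) he] at hmarkov
  refine le_trans ?_ hmarkov
  gcongr
  exact (mul_pow_le_haar_cap he hp (by positivity) (by linarith)).trans (measureReal_mono hcap)

lemma one_sub_le_one_div_pow_three {y : ℝ} (hy : 0 < y) :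
    1 - 3 / 2 * (y ^ 2 - 1) ≤ 1 / y ^ 3 := by
  rw [le_div_iff₀ (by positivity)]
  nlinarith [mul_nonneg (sq_nonneg (y - 1)) (by positivity : 0 ≤ 3 * y ^ 3 + 6 * y ^ 2 + 4 * y + 2)]

lemma IsNearEuclidean.one_sub_sphereMean_le (hf : IsNearEuclidean f ε) (hε : ε < 1) :
    1 - 3 / 2 * sphereMean (sqDefect f) ≤ sphereMean fun x => 1 / f x ^ 3 := by
  have hpos {x : E} (hx : ‖x‖ = 1) : 0 < f x :=
    (sub_pos.mpr hε).trans_le (hf.one_sub_le hε.le hx)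
  have hv := hf.continuous_sqDefect
  have hcont : ContinuousOn (fun x => 1 / f x ^ 3) (sphere 0 1) :=
    continuousOn_const.div (hf.continuous.pow 3).continuousOn fun x hx =>
      (pow_pos (hpos (mem_sphere_zero_iff_norm.mp hx)) 3).ne'
  calc 1 - 3 / 2 * sphereMean (sqDefect f)
      = sphereMean fun x => 1 - 3 / 2 * sqDefect f x := by
        rw [sphereMean_sub (by fun_prop) (by fun_prop), sphereMean_const, sphereMean_const_mul]
    _ ≤ sphereMean fun x => 1 / f x ^ 3 :=
        sphereMean_mono (by fun_prop) hcont fun x hx => by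
          rw [sqDefect, hx, one_pow]
          exact one_sub_le_one_div_pow_three (hpos hx)

omit [Nontrivial E] in
lemma IsNearEuclidean.continuous_symmExcess_rotatedSeminorm (hf : IsNearEuclidean f ε) (x w : E) :
    Continuous fun R : OrthGroup E => symmExcess (rotatedSeminorm f R) x w := by
  have hfc := hf.continuous
  simp only [symmExcess, rotatedSeminorm_apply]
  fun_prop

lemma IsNearEuclidean.integral_symmExcess_mul_abs_sqDefect_le (hf : IsNearEuclidean f ε)
    (hε : ε ≤ 1 / 4) {x w p : E} (hx : ‖x‖ = 1) (hp : ‖p‖ = 1) (hxw : ⟪x, w⟫ = 0)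
    (hw : ‖w‖ ≤ 1 / 2) (hwv : ‖w‖ ^ 4 ≤ sphereMean fun x => sqDefect f x ^ 2) :
    ∫ R : OrthGroup E, symmExcess (rotatedSeminorm f R) x w * |sqDefect f (R • p)|
      ∂OrthGroup.haar ≤ 5 * sphereMean fun x => sqDefect f x ^ 2 := by
  have hv := hf.continuous_sqDefect
  have hexcess := hf.continuous_symmExcess_rotatedSeminorm x w
  have hint (y : E) : Integrable (fun R : OrthGroup E => sqDefect f (R • y) ^ 2)
      OrthGroup.haar := OrthGroup.integrable_of_continuous (by fun_prop)
  have hpoint (R : OrthGroup E) :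
      symmExcess (rotatedSeminorm f R) x w * |sqDefect f (R • p)| ≤
        1 / 2 * (sqDefect f (R • (x + w)) ^ 2 + sqDefect f (R • (x - w)) ^ 2 +
          sqDefect f (R • x) ^ 2 + ‖w‖ ^ 4) + 2 * sqDefect f (R • p) ^ 2 := by
    have hle := (hf.rotated R).symmExcess_le_abs_sqDefect hε hx hxw
    simp only [sqDefect_rotatedSeminorm] at hle
    have hyoung (a : ℝ) : a * |sqDefect f (R • p)| ≤ 1 / 2 * (a ^ 2 + sqDefect f (R • p) ^ 2) := by
      rw [← sq_abs (sqDefect f (R • p))]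
      linarith [two_mul_le_add_sq a |sqDefect f (R • p)|]
    have hle' := mul_le_mul_of_nonneg_right hle (abs_nonneg (sqDefect f (R • p)))
    have h₁ := hyoung |sqDefect f (R • (x + w))|
    have h₂ := hyoung |sqDefect f (R • (x - w))|
    have h₃ := hyoung |sqDefect f (R • x)|
    have h₄ := hyoung (‖w‖ ^ 2)
    rw [sq_abs] at h₁ h₂ h₃
    linarith
  have hnorm {y : E} (hy : ⟪x, y⟫ = 0) (hyw : ‖y‖ = ‖w‖) : ‖x + y‖ ^ 4 ≤ 2 := by
    rw [show ‖x + y‖ ^ 4 = (‖x + y‖ ^ 2) ^ 2 by ring, norm_add_sq_real, hx, hy, hyw]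
    nlinarith [norm_nonneg w, mul_le_mul hw hw (norm_nonneg w) (by norm_num)]
  have hplus := hnorm hxw rfl
  have hminus := hnorm (y := -w) (by rw [inner_neg_right, hxw, neg_zero]) (norm_neg w)
  rw [← sub_eq_add_neg] at hminus
  have hhom (r : ℝ) (y : E) : sqDefect f (r • y) ^ 2 = r ^ 4 * sqDefect f y ^ 2 := by
    rw [sqDefect_smul]; ring
  refine (integral_mono (OrthGroup.integrable_of_continuous (by fun_prop))
    (OrthGroup.integrable_of_continuous (by fun_prop)) hpoint).trans ?_
  rw [integral_add (by fun_prop) (by fun_prop), integral_const_mul, integral_const_mul,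
    integral_add (by fun_prop) (by fun_prop), integral_add (by fun_prop) (by fun_prop),
    integral_add (by fun_prop) (by fun_prop)]
  have hmean := integral_comp_smul_of_homogeneous (f := fun y => sqDefect f y ^ 2) hhom
  simp only [hmean, integral_const, probReal_univ, one_smul, hx,
    hp, one_pow, one_mul]
  have hS : 0 ≤ sphereMean fun x => sqDefect f x ^ 2 := sphereMean_nonneg fun x => sq_nonneg _
  nlinarith [mul_le_mul_of_nonneg_right hplus hS, mul_le_mul_of_nonneg_right hminus hS]

end Averaging

/-! ### The analytic core -/

section Core

lemma abs_quadraticPart_le {v : Euc 3 → ℝ} (hv : ContinuousOn v (sphere 0 1)) {κ : ℝ}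
    (hκ : ∀ a : Euc 3, ‖a‖ = 1 → |sphereMean fun x => v x * ⟪x, a⟫ ^ 2| ≤ κ) {x : Euc 3}
    (hx : ‖x‖ = 1) : |quadraticPart v x| ≤ 12 * κ := by
  let b := EuclideanSpace.basisFun (Fin 3) ℝ
  have hmean : sphereMean v = ∑ i, sphereMean fun y => v y * ⟪y, b i⟫ ^ 2 := by
    rw [← sphereMean_finsetSum _ fun i _ => by fun_prop]
    refine sphereMean_congr fun y hy => ?_
    rw [← Finset.mul_sum, b.sum_sq_inner_left, hy, one_pow, mul_one]
  have hmean_le : |sphereMean v| ≤ 3 * κ := by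
    rw [hmean]
    refine (Finset.abs_sum_le_sum_abs _ _).trans ?_
    exact (Finset.sum_le_sum fun i _ => hκ (b i) (b.norm_eq_one i)).trans_eq (by simp)
  have hx_le := abs_le.mp (hκ x hx)
  have hmean_le := abs_le.mp hmean_le
  rw [quadraticPart, hx, finrank_euclideanSpace_fin, abs_le]
  push_cast
  constructor <;> linarith

lemma exists_sphereMean_sq_le_integral_sum_fcc_sub_sq : ∃ c > 0, ∀ v : Euc 3 → ℝ,
    ContinuousOn v (sphere 0 1) → (∀ x, v (-x) = v x) →
    (∀ a : Euc 3, ‖a‖ = 1 → |sphereMean fun x => v x * ⟪x, a⟫ ^ 2| ≤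
      1 / 40 * √(sphereMean fun x => v x ^ 2)) →
    c * sphereMean (fun x => v x ^ 2) ≤ ∫ R : OrthGroup (Euc 3),
      (∑ j, v (R • fcc j) - 6 * sphereMean v) ^ 2 ∂OrthGroup.haar := by
  obtain ⟨c, hc, hgap⟩ := exists_sphereMean_sq_le_integral_sum_fcc
  refine ⟨c / 4, by positivity, fun v hv hev hκ => ?_⟩
  have hq := (continuous_quadraticPart hv).continuousOn (s := sphere 0 1)
  have hv0 : 0 ≤ sphereMean fun x => v x ^ 2 := sphereMean_nonneg fun x => sq_nonneg _
  have hsplit : sphereMean (fun x => v x ^ 2) ≤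
      2 * sphereMean (fun x => (v x - quadraticPart v x) ^ 2) +
        18 / 100 * sphereMean (fun x => v x ^ 2) := by
    rw [← sphereMean_const_mul 2, ← sphereMean_const (E := Euc 3) (18 / 100 * _),
      ← sphereMean_add (by fun_prop) (by fun_prop)]
    refine sphereMean_mono (by fun_prop) (by fun_prop) fun x hx => ?_
    have hqx := pow_le_pow_left₀ (abs_nonneg _) (abs_quadraticPart_le hv hκ hx) 2
    rw [sq_abs, mul_pow, mul_pow, Real.sq_sqrt hv0] at hqx
    linarith [sq_nonneg (v x - 2 * quadraticPart v x)]
  calc c / 4 * sphereMean (fun x => v x ^ 2)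
      ≤ c * sphereMean (fun x => (v x - quadraticPart v x) ^ 2) := by
        rw [div_mul_eq_mul_div, mul_div_assoc]
        gcongr
        linarith
    _ ≤ ∫ R : OrthGroup (Euc 3), (∑ j, (v (R • fcc j) - quadraticPart v (R • fcc j))) ^ 2
          ∂OrthGroup.haar := by
        refine hgap _ (hv.sub hq) (fun x => by rw [hev, quadraticPart_neg]) fun a => ?_
        simp_rw [sub_mul]
        rw [sphereMean_sub (by fun_prop) (by fun_prop), sphereMean_quadraticPart_mul_inner_sq hv,
          sub_self]
    _ = _ := by simp_rw [Finset.sum_sub_distrib, sum_quadraticPart_smul_fcc hv]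

variable {f : Seminorm ℝ (Euc 3)} {ε δ h : ℝ}

lemma fccError_nonneg (f : Seminorm ℝ (Euc 3)) (h0 : 0 ≤ h) : 0 ≤ fccError f h := by
  have hexcess := tangentialExcess_nonneg f h
  unfold fccError
  positivity

lemma continuous_tangentialExcess_rotatedSeminorm (hf : IsNearEuclidean f ε) :
    Continuous fun R : OrthGroup (Euc 3) => tangentialExcess (rotatedSeminorm f R) h := by
  have hexcess := hf.continuous_symmExcess_rotatedSeminorm
  unfold tangentialExcess
  fun_prop

lemma continuous_fccError_rotatedSeminorm (hf : IsNearEuclidean f ε) :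
    Continuous fun R : OrthGroup (Euc 3) => fccError (rotatedSeminorm f R) h := by
  have hexcess := continuous_tangentialExcess_rotatedSeminorm (h := h) hf
  have hv := hf.continuous_sqDefect
  simp only [fccError, sqDefect_rotatedSeminorm]
  fun_prop

lemma integral_tangentialExcess_mul_le (hf : IsNearEuclidean f ε) (hε : ε ≤ 1 / 4)
    (h0 : 0 ≤ h) (hh : h ≤ 1 / 2) (hv : h ^ 4 ≤ sphereMean fun x => sqDefect f x ^ 2) :
    ∫ R : OrthGroup (Euc 3), tangentialExcess (rotatedSeminorm f R) h *
      ∑ j, |sqDefect f (R • fcc j)| ∂OrthGroup.haar ≤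
        360 * sphereMean fun x => sqDefect f x ^ 2 := by
  have hvc := hf.continuous_sqDefect
  have hexcess := hf.continuous_symmExcess_rotatedSeminorm
  have hnorm (i : Fin 6) (k : Fin 2) : ‖h • fccFrame i k.succ‖ = h := by
    rw [norm_smul, (fccFrame i).norm_eq_one, mul_one, Real.norm_of_nonneg h0]
  have hterm (i j : Fin 6) (k : Fin 2) := hf.integral_symmExcess_mul_abs_sqDefect_le hε
    (w := h • fccFrame i k.succ) (norm_fcc i) (norm_fcc j)
    (by rw [real_inner_smul_right, ← fccFrame_zero,
      (fccFrame i).inner_eq_zero (Fin.succ_ne_zero k).symm, mul_zero])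
    (by rwa [hnorm]) (by rwa [hnorm])
  simp only [tangentialExcess, Finset.sum_mul]
  simp only [Finset.mul_sum]
  rw [integral_finsetSum _ fun i _ => OrthGroup.integrable_of_continuous (by fun_prop)]
  calc _ ≤ ∑ _i : Fin 6, ∑ _k : Fin 2, ∑ _j : Fin 6,
        5 * sphereMean fun x => sqDefect f x ^ 2 := by
        gcongr with i
        rw [integral_finsetSum _ fun k _ => OrthGroup.integrable_of_continuous (by fun_prop)]
        gcongr with k
        rw [integral_finsetSum _ fun j _ => OrthGroup.integrable_of_continuous (by fun_prop)]
        gcongr with j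
        exact hterm i j k
    _ = 360 * sphereMean fun x => sqDefect f x ^ 2 := by
        simp only [Finset.sum_const, Finset.card_univ, Fintype.card_fin, nsmul_eq_mul]
        ring

lemma integral_fccError_le (hf : IsNearEuclidean f ε) (hε : ε ≤ 1 / 4)
    (h0 : 0 < h) (hh : h ≤ 1 / 2) (hv : h ^ 4 ≤ sphereMean fun x => sqDefect f x ^ 2) :
    ∫ R : OrthGroup (Euc 3), fccError (rotatedSeminorm f R) h ∂OrthGroup.haar ≤
      7000 * (sphereMean fun x => sqDefect f x ^ 2) / h := by
  have hvc := hf.continuous_sqDefect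
  have hexcess := continuous_tangentialExcess_rotatedSeminorm (h := h) hf
  have hsq (i : Fin 6) : ∫ R : OrthGroup (Euc 3), sqDefect f (R • fcc i) ^ 2 ∂OrthGroup.haar =
      sphereMean fun x => sqDefect f x ^ 2 :=
    integral_comp_smul_of_norm_eq_one (fun x => sqDefect f x ^ 2) (norm_fcc i)
  simp only [fccError, sqDefect_rotatedSeminorm, div_mul_eq_mul_div]
  rw [integral_add (OrthGroup.integrable_of_continuous (by fun_prop))
    (OrthGroup.integrable_of_continuous (by fun_prop)), integral_const_mul, integral_const_mul,
    integral_div,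
    integral_finsetSum _ fun i _ => OrthGroup.integrable_of_continuous (by fun_prop),
    Finset.sum_congr rfl fun i _ => hsq i, Finset.sum_const, Finset.card_univ, Fintype.card_fin,
    nsmul_eq_mul, le_div_iff₀ h0]
  have hle := integral_tangentialExcess_mul_le hf hε h0.le hh hv
  have hS : 0 ≤ sphereMean fun x => sqDefect f x ^ 2 := sphereMean_nonneg fun x => sq_nonneg _
  rw [add_mul, mul_assoc 12, div_mul_cancel₀ _ h0.ne']
  push_cast
  nlinarith [mul_le_mul_of_nonneg_left hh hS]

/-- If no deformed configuration beats the unit ball of `f`, the first-order terms are controlled by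
the error: their deviation from the mean has mean zero and is at most `4 * fccError`. -/
lemma integral_sum_fcc_sub_sq_le (hf : IsNearEuclidean f (δ ^ 2)) (hδ : 0 < δ) (hδ1 : δ ≤ 1 / 576)
    (h0 : 0 < h) (hh : h ≤ δ) {M : ℝ} (hM : ∀ x, ‖x‖ = 1 → |sqDefect f x| ≤ M)
    (hdet : ∀ R : OrthGroup (Euc 3), sphereMean (fun x => 1 / f x ^ 3) ≤
      LinearMap.det (1 + fccDeformation (fccDilation (rotatedSeminorm f R) h))) :
    ∫ R : OrthGroup (Euc 3), (∑ j, sqDefect f (R • fcc j) - 6 * sphereMean (sqDefect f)) ^ 2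
      ∂OrthGroup.haar ≤
        96 * M * ∫ R : OrthGroup (Euc 3), fccError (rotatedSeminorm f R) h ∂OrthGroup.haar := by
  have hv := hf.continuous_sqDefect
  have herr := OrthGroup.integrable_of_continuous (continuous_fccError_rotatedSeminorm (h := h) hf)
  have hint (j : Fin 6) := OrthGroup.integrable_comp_smul hv.continuousOn (norm_fcc j)
  have hsum := integrable_finsetSum Finset.univ fun j _ => hint j
  have hmean0 : ∫ R : OrthGroup (Euc 3),
      (∑ j, sqDefect f (R • fcc j) - 6 * sphereMean (sqDefect f)) ∂OrthGroup.haar = 0 := by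
    rw [integral_sub hsum (integrable_const _), integral_finsetSum _ fun j _ => hint j,
      Finset.sum_congr rfl fun j _ => integral_comp_smul_of_norm_eq_one (sqDefect f) (norm_fcc j)]
    simp
  have hbound (R : OrthGroup (Euc 3)) :
      |∑ j, sqDefect f (R • fcc j) - 6 * sphereMean (sqDefect f)| ≤ 12 * M := by
    have hR : |∑ j, sqDefect f (R • fcc j)| ≤ 6 * M :=
      (Finset.abs_sum_le_sum_abs _ _).trans <| (Finset.sum_le_sum fun j _ =>
        hM (R • fcc j) (by rw [OrthGroup.norm_smul, norm_fcc])).trans_eq (by simp)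
    refine (abs_sub _ _).trans ?_
    rw [abs_mul, Nat.abs_ofNat]
    linarith [abs_sphereMean_le hM]
  have hle (R : OrthGroup (Euc 3)) : ∑ j, sqDefect f (R • fcc j) - 6 * sphereMean (sqDefect f) ≤
      4 * fccError (rotatedSeminorm f R) h := by
    have hvol := hf.one_sub_sphereMean_le (by nlinarith)
    have hdet_le := det_one_add_fccDeformation_le (hf.rotated R) hδ hδ1 h0 hh
    simp only [sqDefect_rotatedSeminorm] at hdet_le
    linarith [hdet R]
  refine (integral_sq_le_of_integral_eq_zero (hsum.sub (integrable_const _)) (herr.const_mul 4)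
    hmean0 (fun R => mul_nonneg zero_le_four (fccError_nonneg _ h0.le)) hbound hle).trans_eq ?_
  rw [integral_const_mul]
  ring

lemma lt_of_mul_sq_le_of_mul_pow_four_le {c M N : ℝ} (hc : 0 < c) (hN : 0 < N) (hδ : 0 < δ)
    (h0 : 0 ≤ h) (hhN : h ^ 2 = N) (hmean : c * h ≤ 672000 * M)
    (hcap : M ^ 4 ≤ 600 ^ 2 * δ ^ 2 * N ^ 2) : c ^ 2 ≤ 600 * 672000 ^ 2 * δ := by
  refine abs_le_of_sq_le_sq' ?_ (by positivity) |>.2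
  have hpow := pow_le_pow_left₀ (by positivity) hmean 4
  refine le_of_mul_le_mul_right ?_ (pow_pos hN 2)
  calc (c ^ 2) ^ 2 * N ^ 2 = (c * h) ^ 4 := by rw [← hhN]; ring
    _ ≤ 672000 ^ 4 * M ^ 4 := by rwa [← mul_pow]
    _ ≤ 672000 ^ 4 * (600 ^ 2 * δ ^ 2 * N ^ 2) := by gcongr
    _ = (600 * 672000 ^ 2 * δ) ^ 2 * N ^ 2 := by ring

lemma abs_sqDefect_pow_four_le (hf : IsNearEuclidean f (δ ^ 2)) (hδ : 0 < δ) (hδ1 : δ ≤ 1 / 2)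
    {p : Euc 3} (hp : ‖p‖ = 1) :
    |sqDefect f p| ^ 4 ≤ 600 ^ 2 * δ ^ 2 * sphereMean fun x => sqDefect f x ^ 2 := by
  have hcap := hf.abs_sqDefect_pow_le_sphereMean hδ hδ1 hp
  have hS : 0 ≤ sphereMean fun x => sqDefect f x ^ 2 := sphereMean_nonneg fun x => sq_nonneg _
  have hconst : |sqDefect f p| ^ 2 / 4 * ((1 / 8) ^ 3 * (|sqDefect f p| / (12 * δ)) ^ (3 - 1)) =
      |sqDefect f p| ^ 4 / (294912 * δ ^ 2) := by
    ring
  rw [finrank_euclideanSpace_fin, hconst, div_le_iff₀ (by positivity)] at hcap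
  linarith [mul_nonneg (sq_nonneg δ) hS]

lemma IsNearEuclidean.sphereMean_sqDefect_sq_le (hf : IsNearEuclidean f ε) :
    sphereMean (fun x => sqDefect f x ^ 2) ≤ ε ^ 2 := by
  have hv := hf.continuous_sqDefect
  rw [← sphereMean_const (E := Euc 3) (ε ^ 2)]
  refine sphereMean_mono (by fun_prop) (by fun_prop) fun x hx => ?_
  exact sq_le_sq' (abs_le.mp (hf.abs_sqDefect_le hx)).1 (abs_le.mp (hf.abs_sqDefect_le hx)).2

lemma exists_isMaxOn_abs_sqDefect (hf : IsNearEuclidean f ε) :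
    ∃ p, ‖p‖ = 1 ∧ ∀ x, ‖x‖ = 1 → |sqDefect f x| ≤ |sqDefect f p| := by
  obtain ⟨p, hp, hmax⟩ := (isCompact_sphere (0 : Euc 3) 1).exists_isMaxOn
    (NormedSpace.sphere_nonempty.mpr zero_le_one) hf.continuous_sqDefect.abs.continuousOn
  exact ⟨p, by simpa using hp, fun x hx => hmax (by simpa using hx)⟩

theorem exists_fcc_deformation_det_lt : ∃ δ : ℝ, 0 < δ ∧ δ ≤ 1 / 576 ∧
    ∀ f : Seminorm ℝ (Euc 3), IsNearEuclidean f (δ ^ 2) →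
    0 < sphereMean (fun x => sqDefect f x ^ 2) →
    (∀ a : Euc 3, ‖a‖ = 1 → |sphereMean fun x => sqDefect f x * ⟪x, a⟫ ^ 2| ≤
      1 / 40 * √(sphereMean fun x => sqDefect f x ^ 2)) →
    ∃ (R : OrthGroup (Euc 3)) (A : Euc 3 →ₗ[ℝ] Euc 3),
      (∀ i, 1 ≤ f (R • (fcc i + A (fcc i)))) ∧ (∀ x, ‖A x‖ ≤ ‖x‖ / 10) ∧
      0 < LinearMap.det (1 + A) ∧ LinearMap.det (1 + A) < sphereMean fun x => 1 / f x ^ 3 := by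
  obtain ⟨c, hc, hgap⟩ := exists_sphereMean_sq_le_integral_sum_fcc_sub_sq
  let δ := min (1 / 576) (c ^ 2 / (2 * (600 * 672000 ^ 2)))
  have hδ : 0 < δ := by positivity
  have hδ1 : δ ≤ 1 / 576 := min_le_left _ _
  refine ⟨δ, hδ, hδ1, fun f hf hpos hκ => ?_⟩
  have hv := hf.continuous_sqDefect
  let N := √(sphereMean fun x => sqDefect f x ^ 2)
  have hN2 : N ^ 2 = sphereMean fun x => sqDefect f x ^ 2 := Real.sq_sqrt hpos.le
  have hN : 0 < N := Real.sqrt_pos.mpr hpos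
  have hh0 : 0 < √N := Real.sqrt_pos.mpr hN
  have hh2 : √N ^ 2 = N := Real.sq_sqrt hN.le
  have hh : √N ≤ δ := by
    rw [Real.sqrt_le_left hδ.le, Real.sqrt_le_left (by positivity)]
    exact hf.sphereMean_sqDefect_sq_le
  obtain ⟨p, hp, hM⟩ := exists_isMaxOn_abs_sqDefect hf
  by_contra! hdet
  have hdet (R : OrthGroup (Euc 3)) :=
    hdet R (fccDeformation (fccDilation (rotatedSeminorm f R) √N))
    (one_le_apply_fcc_add_fccDeformation (hf.rotated R) hδ hδ1 hh0 hh)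
    (fun x => (norm_fccDeformation_fccDilation_le (hf.rotated R) hδ hδ1 hh0 hh x).trans <| by
      have := sum_abs_fccDeficit_le_one_div (hf.rotated R) hδ hδ1
      nlinarith [norm_nonneg x])
    (det_one_add_fccDeformation_pos (hf.rotated R) hδ hδ1 hh0 hh)
  have hupper := integral_sum_fcc_sub_sq_le hf hδ hδ1 hh0 hh hM hdet
  have herr := integral_fccError_le hf (by nlinarith) hh0 (by linarith)
    (by rw [← hN2]; exact le_of_eq (by linear_combination (√N ^ 2 + N) * hh2))
  have hlower := hgap _ hv.continuousOn (sqDefect_neg f) hκ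
  have hcap := abs_sqDefect_pow_four_le hf hδ (by linarith) hp
  rw [← hN2] at herr hlower hcap
  have hc2 := lt_of_mul_sq_le_of_mul_pow_four_le (M := |sqDefect f p|) hc hN hδ hh0.le hh2 ?_ hcap
  · have hδc : δ ≤ c ^ 2 / (2 * (600 * 672000 ^ 2)) := min_le_right _ _
    rw [le_div_iff₀ (by positivity)] at hδc
    linarith [pow_pos hc 2]
  · have hchain := hlower.trans (hupper.trans
      (mul_le_mul_of_nonneg_left herr (by positivity)))
    rw [← mul_div_assoc, le_div_iff₀ hh0] at hchain
    refine le_of_mul_le_mul_right ?_ (pow_pos hN 2)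
    linarith

end Core

/-! ### Gauss's bound on the determinant of a lattice in `ℝ³` -/

section ReducedFamily

variable {ι E : Type*} [Fintype ι]

/-- A family of vectors none of which gets shorter when integer multiples of the other ones are
added to it. Lattice bases of minimal total length have this property. -/
def IsReducedFamily [NormedAddCommGroup E] (v : ι → E) : Prop :=
  ∀ i (n : ι → ℤ), n i = 1 → ‖v i‖ ≤ ‖∑ j, n j • v j‖

lemma IsReducedFamily.comp_equiv [NormedAddCommGroup E] {v : ι → E} (hv : IsReducedFamily v)
    (σ : ι ≃ ι) : IsReducedFamily (v ∘ σ) := by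
  intro i n hi
  rw [← Equiv.sum_comp σ.symm]
  simpa using hv (σ i) (n ∘ σ.symm) (by simpa using hi)

lemma tendsto_sum_norm_sum_smul_cofinite [NormedAddCommGroup E] [NormedSpace ℝ E]
    (b : Module.Basis ι ℝ E) :
    Filter.Tendsto (fun B : Matrix ι ι ℤ => ∑ j, ‖∑ i, B i j • b i‖) Filter.cofinite
      Filter.atTop := by
  have : FiniteDimensional ℝ E := b.finiteDimensional_of_finite
  have hcast : Filter.Tendsto (fun (B : ι → ι → ℤ) i j => (B i j : ℝ)) Filter.cofinite
      (Filter.cocompact (ι → ι → ℝ)) := by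
    simpa only [Filter.coprodᵢ_cofinite, Filter.coprodᵢ_cocompact] using!
      Filter.Tendsto.pi_map_coprodᵢ fun _ : ι =>
        Filter.Tendsto.pi_map_coprodᵢ fun _ : ι => Int.tendsto_coe_cofinite
  let e : (ι → ι → ℝ) ≃L[ℝ] (ι → E) :=
    (LinearEquiv.piCongrRight fun _ : ι => b.equivFun.symm).toContinuousLinearEquiv
  have hcoord : Filter.Tendsto (fun (B : Matrix ι ι ℤ) j i => (B i j : ℝ)) Filter.cofinite
      (Filter.cocompact (ι → ι → ℝ)) := hcast.comp Matrix.transpose_injective.tendsto_cofinite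
  refine Filter.tendsto_atTop_mono (fun B => ?_) (tendsto_norm_cocompact_atTop.comp
    (e.toHomeomorph.isClosedEmbedding.tendsto_cocompact.comp hcoord))
  refine (pi_norm_le_iff_of_nonneg (Finset.sum_nonneg fun _ _ => norm_nonneg _)).mpr fun j => ?_
  refine (le_of_eq ?_).trans (Finset.single_le_sum (f := fun j => ‖∑ i, B i j • b i‖)
    (fun _ _ => norm_nonneg _) (Finset.mem_univ j))
  simp [e, Module.Basis.equivFun_symm_apply, Int.cast_smul_eq_zsmul]

theorem exists_det_eq_one_isReducedFamily [DecidableEq ι] [NormedAddCommGroup E] [NormedSpace ℝ E]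
    (b : Module.Basis ι ℝ E) :
    ∃ B : Matrix ι ι ℤ, B.det = 1 ∧ IsReducedFamily fun j => ∑ i, B i j • b i := by
  obtain ⟨B, hB, hmin⟩ := (tendsto_sum_norm_sum_smul_cofinite b).exists_within_forall_le
    (s := {B | B.det = 1}) ⟨1, Matrix.det_one⟩
  refine ⟨B, hB, fun j n hj => ?_⟩
  have hdet : (B.updateCol j fun k => ∑ i, n i • B k i).det = 1 := by
    rw [Matrix.det_updateCol_sum, hj, one_smul, hB]
  have hle := hmin _ hdet
  rw [← Finset.add_sum_erase _ _ (Finset.mem_univ j),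
    ← Finset.add_sum_erase (f := fun l => ‖∑ i, _ • b i‖) _ (Finset.mem_univ j)] at hle
  have hcol : ∑ i, B.updateCol j (fun k => ∑ l, n l • B k l) i j • b i =
      ∑ l, n l • ∑ i, B i l • b i := by
    simp only [Matrix.updateCol_self, Finset.sum_smul, Finset.smul_sum, smul_smul, smul_eq_mul]
    exact Finset.sum_comm
  have hother : ∑ l ∈ Finset.univ.erase j,
        ‖∑ i, B.updateCol j (fun k => ∑ l, n l • B k l) i l • b i‖ =
      ∑ l ∈ Finset.univ.erase j, ‖∑ i, B i l • b i‖ :=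
    Finset.sum_congr rfl fun l hl => by
      simp only [Matrix.updateCol_ne (Finset.ne_of_mem_erase hl)]
  rw [hcol, hother] at hle
  exact le_of_add_le_add_right hle

end ReducedFamily

lemma quadratic_le_of_le_endpoints {α β γ l u x B : ℝ} (hα : 0 ≤ α) (hl : l ≤ x) (hu : x ≤ u)
    (hBl : α * l ^ 2 + β * l + γ ≤ B) (hBu : α * u ^ 2 + β * u + γ ≤ B) :
    α * x ^ 2 + β * x + γ ≤ B := by
  have hconv : ConvexOn ℝ Set.univ fun x : ℝ => α * x ^ 2 + β * x + γ :=
    (((even_two.convexOn_pow (𝕜 := ℝ)).smul hα).add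
      ((LinearMap.mul ℝ ℝ β).convexOn convex_univ)).add_const γ
  exact (hconv.le_max_of_mem_Icc (Set.mem_univ l) (Set.mem_univ u) ⟨hl, hu⟩).trans
    (max_le hBl hBu)

section TernaryForm

variable {a b c f g h : ℝ}

/-- Both the acute and the obtuse case below reduce to this quadratic in `h`. -/
lemma ternary_edge_le (ha : 0 ≤ a) (hab : a ≤ b) (hbc : b ≤ c) (hh : 0 ≤ h) (hha : h ≤ a / 2) :
    a * b ^ 2 / 4 + a ^ 2 * b / 4 - a * b * h / 2 + c * h ^ 2 ≤ a * b * c / 2 := by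
  have hb := ha.trans hab
  have hc := hb.trans hbc
  have hh2 := mul_nonneg (mul_nonneg hc hh) (sub_nonneg.mpr hha)
  have hha2 := mul_nonneg (mul_nonneg ha (sub_nonneg.mpr hbc)) (sub_nonneg.mpr hha)
  have habc := mul_nonneg (mul_nonneg ha hb) (sub_nonneg.mpr hbc)
  have hacb := mul_nonneg (mul_nonneg ha hc) (sub_nonneg.mpr hab)
  linarith

lemma ternary_sub_le (ha : 0 ≤ a) (hab : a ≤ b) (hbc : b ≤ c) (hf : 0 ≤ f) (hg : 0 ≤ g)
    (hh : 0 ≤ h) (hfb : f ≤ b / 2) (hga : g ≤ a / 2) (hha : h ≤ a / 2) :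
    a * f ^ 2 + b * g ^ 2 + c * h ^ 2 - 2 * f * g * h ≤ a * b * c / 2 := by
  have hb := ha.trans hab
  have hc := hb.trans hbc
  have hzero : b * g ^ 2 + c * h ^ 2 ≤ a * b * c / 2 := by
    calc b * g ^ 2 + c * h ^ 2 ≤ b * (a / 2) ^ 2 + c * (a / 2) ^ 2 := by gcongr
      _ = a * a * b / 4 + a * a * c / 4 := by ring
      _ ≤ a * c * b / 4 + a * b * c / 4 := by gcongr; exact hab.trans hbc
      _ = a * b * c / 2 := by ring
  have hhalf : a * (b / 2) ^ 2 + b * g ^ 2 + c * h ^ 2 - b * g * h ≤ a * b * c / 2 := by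
    have hg2 : 0 ≤ b * ((a / 2 - g) * (a / 2 + g - h)) :=
      mul_nonneg hb (mul_nonneg (by linarith) (by linarith))
    linarith [ternary_edge_le ha hab hbc hh hha]
  have := quadratic_le_of_le_endpoints (β := -2 * g * h) (γ := b * g ^ 2 + c * h ^ 2)
    (B := a * b * c / 2) ha hf hfb (by linarith) (by linarith)
  linarith

lemma ternary_add_le (ha : 0 ≤ a) (hab : a ≤ b) (hbc : b ≤ c) (hf : 0 ≤ f) (hg : 0 ≤ g)
    (hh : 0 ≤ h) (hfb : f ≤ b / 2) (hga : g ≤ a / 2) (hha : h ≤ a / 2)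
    (hsum : f + g + h ≤ (a + b) / 2) :
    a * f ^ 2 + b * g ^ 2 + c * h ^ 2 + 2 * f * g * h ≤ a * b * c / 2 := by
  have hb := ha.trans hab
  have := hb.trans hbc
  have hedge := ternary_edge_le ha hab hbc hh hha
  rcases le_total (g + h) (a / 2) with hgh | hgh
  · calc a * f ^ 2 + b * g ^ 2 + c * h ^ 2 + 2 * f * g * h
      _ ≤ a * (b / 2) ^ 2 + b * (a / 2 - h) ^ 2 + c * h ^ 2 + 2 * (b / 2) * (a / 2 - h) * h := by
        gcongr <;> linarith
      _ ≤ a * b * c / 2 := by linarith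
  · calc a * f ^ 2 + b * g ^ 2 + c * h ^ 2 + 2 * f * g * h
      _ ≤ a * ((a + b) / 2 - g - h) ^ 2 + b * g ^ 2 + c * h ^ 2 +
            2 * ((a + b) / 2 - g - h) * g * h := by
        gcongr <;> linarith
      _ ≤ a * b * c / 2 := by
        have := quadratic_le_of_le_endpoints (x := g) (l := a / 2 - h) (u := a / 2)
          (α := a + b - 2 * h) (β := 2 * (h - a) * ((a + b) / 2 - h))
          (γ := a * ((a + b) / 2 - h) ^ 2 + c * h ^ 2) (B := a * b * c / 2)
          (by linarith) (by linarith) hga (by linarith) (by linarith)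
        linarith

lemma mul_nonneg_or_abs_add_le {s : ℝ} (h₁ : f + g - h ≤ s) (h₂ : f - g + h ≤ s)
    (h₃ : -f + g + h ≤ s) (h₄ : -f - g - h ≤ s) : 0 ≤ f * g * h ∨ |f| + |g| + |h| ≤ s := by
  rcases le_total 0 f with hf | hf <;> rcases le_total 0 g with hg | hg <;>
    rcases le_total 0 h with hh | hh <;> simp only [abs_of_nonneg, abs_of_nonpos, hf, hg, hh]
  · exact Or.inl (mul_nonneg (mul_nonneg hf hg) hh)
  · exact Or.inr (by linarith)
  · exact Or.inr (by linarith)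
  · exact Or.inl (mul_nonneg_of_nonpos_of_nonpos (mul_nonpos_of_nonneg_of_nonpos hf hg) hh)
  · exact Or.inr (by linarith)
  · exact Or.inl (mul_nonneg_of_nonpos_of_nonpos (mul_nonpos_of_nonpos_of_nonneg hf hg) hh)
  · exact Or.inl (mul_nonneg (mul_nonneg_of_nonpos_of_nonpos hf hg) hh)
  · exact Or.inr (by linarith)

lemma mul_le_two_mul_ternary_det (ha : 0 ≤ a) (hab : a ≤ b) (hbc : b ≤ c) (hf : |f| ≤ b / 2)
    (hg : |g| ≤ a / 2) (hh : |h| ≤ a / 2)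
    (hsum : 0 ≤ f * g * h ∨ |f| + |g| + |h| ≤ (a + b) / 2) :
    a * b * c ≤ 2 * (a * b * c + 2 * f * g * h - a * f ^ 2 - b * g ^ 2 - c * h ^ 2) := by
  have habs : |f| * |g| * |h| = |f * g * h| := by rw [abs_mul, abs_mul]
  rcases hsum with hfgh | hsum
  · have hle := ternary_sub_le ha hab hbc (abs_nonneg f) (abs_nonneg g) (abs_nonneg h) hf hg hh
    rw [abs_of_nonneg hfgh] at habs
    simp only [sq_abs] at hle
    linarith
  · have hle := ternary_add_le ha hab hbc (abs_nonneg f) (abs_nonneg g) (abs_nonneg h) hf hg hh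
      hsum
    simp only [sq_abs] at hle
    linarith [neg_abs_le (f * g * h)]

end TernaryForm

section Gauss

variable {E : Type*} [NormedAddCommGroup E] [InnerProductSpace ℝ E] {v : Fin 3 → E}

lemma IsReducedFamily.norm_sq_le (hv : IsReducedFamily v) (i : Fin 3) {n : Fin 3 → ℤ}
    (hi : n i = 1) : ‖v i‖ ^ 2 ≤
      n 0 ^ 2 * ‖v 0‖ ^ 2 + n 1 ^ 2 * ‖v 1‖ ^ 2 + n 2 ^ 2 * ‖v 2‖ ^ 2 +
        2 * (n 0 * n 1 * ⟪v 0, v 1⟫ + n 0 * n 2 * ⟪v 0, v 2⟫ + n 1 * n 2 * ⟪v 1, v 2⟫) := by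
  refine (pow_le_pow_left₀ (norm_nonneg _) (hv i n hi) 2).trans_eq ?_
  simp only [Fin.sum_univ_three, ← Int.cast_smul_eq_zsmul ℝ, norm_add_sq_real, inner_add_left,
    real_inner_smul_left, real_inner_smul_right, norm_smul, mul_pow, Real.norm_eq_abs, sq_abs]
  ring

lemma det_gram_fin_three (v : Fin 3 → E) : (Matrix.gram ℝ v).det =
    ‖v 0‖ ^ 2 * ‖v 1‖ ^ 2 * ‖v 2‖ ^ 2 + 2 * ⟪v 1, v 2⟫ * ⟪v 0, v 2⟫ * ⟪v 0, v 1⟫ -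
      ‖v 0‖ ^ 2 * ⟪v 1, v 2⟫ ^ 2 - ‖v 1‖ ^ 2 * ⟪v 0, v 2⟫ ^ 2 - ‖v 2‖ ^ 2 * ⟪v 0, v 1⟫ ^ 2 := by
  simp only [Matrix.det_fin_three, Matrix.gram_apply, real_inner_self_eq_norm_sq,
    real_inner_comm (v 0), real_inner_comm (v 1) (v 2)]
  ring

lemma IsReducedFamily.prod_norm_sq_le_of_monotone (hv : IsReducedFamily v)
    (hmono : Monotone fun i => ‖v i‖) : ∏ i, ‖v i‖ ^ 2 ≤ 2 * (Matrix.gram ℝ v).det := by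
  have h01 : ‖v 0‖ ^ 2 ≤ ‖v 1‖ ^ 2 := by gcongr; exact hmono (by decide)
  have h12 : ‖v 1‖ ^ 2 ≤ ‖v 2‖ ^ 2 := by gcongr; exact hmono (by decide)
  have hshort (s t : ℤ) : 0 ≤ s ^ 2 * ‖v 0‖ ^ 2 + t ^ 2 * ‖v 1‖ ^ 2 +
      2 * (s * t * ⟪v 0, v 1⟫ + s * ⟪v 0, v 2⟫ + t * ⟪v 1, v 2⟫) := by
    have := hv.norm_sq_le 2 (n := ![s, t, 1]) rfl
    simp only [Matrix.cons_val, Int.cast_one] at this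
    linarith
  have hshort' (s : ℤ) : 0 ≤ s ^ 2 * ‖v 0‖ ^ 2 + 2 * (s * ⟪v 0, v 1⟫) := by
    have := hv.norm_sq_le 1 (n := ![s, 1, 0]) rfl
    simp only [Matrix.cons_val, Int.cast_one, Int.cast_zero] at this
    linarith
  have h11 := hshort 1 1
  have h1n := hshort 1 (-1)
  have hn1 := hshort (-1) 1
  have hnn := hshort (-1) (-1)
  have h01p := hshort 0 1
  have h01n := hshort 0 (-1)
  have h10p := hshort 1 0
  have h10n := hshort (-1) 0
  have hp := hshort' 1
  have hn := hshort' (-1)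
  push_cast at h11 h1n hn1 hnn h01p h01n h10p h10n hp hn
  rw [Fin.prod_univ_three, det_gram_fin_three]
  refine mul_le_two_mul_ternary_det (by positivity) h01 h12 (abs_le.mpr ⟨?_, ?_⟩)
    (abs_le.mpr ⟨?_, ?_⟩) (abs_le.mpr ⟨?_, ?_⟩) (mul_nonneg_or_abs_add_le ?_ ?_ ?_ ?_) <;> linarith

theorem IsReducedFamily.prod_norm_sq_le (hv : IsReducedFamily v) :
    ∏ i, ‖v i‖ ^ 2 ≤ 2 * (Matrix.gram ℝ v).det := by
  let σ := Tuple.sort fun i => ‖v i‖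
  have hle := (hv.comp_equiv σ).prod_norm_sq_le_of_monotone (Tuple.monotone_sort fun i => ‖v i‖)
  rw [← Equiv.prod_comp σ, ← Matrix.det_submatrix_equiv_self σ]
  exact hle

lemma det_gram_orthonormalBasis_map {ι : Type*} [Fintype ι] [DecidableEq ι]
    (b : OrthonormalBasis ι ℝ E) (S : E →ₗ[ℝ] E) :
    (Matrix.gram ℝ fun i => S (b i)).det = LinearMap.det S ^ 2 := by
  let M := LinearMap.toMatrix b.toBasis b.toBasis S
  have hM : Matrix.gram ℝ (fun i => S (b i)) = M.transpose * M := by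
    ext i j
    simp only [Matrix.gram_apply, Matrix.mul_apply, Matrix.transpose_apply, M,
      LinearMap.toMatrix_apply, OrthonormalBasis.coe_toBasis,
      OrthonormalBasis.coe_toBasis_repr_apply, OrthonormalBasis.repr_apply_apply]
    rw [← b.sum_inner_mul_inner]
    simp only [real_inner_comm]
  rw [hM, Matrix.det_mul, Matrix.det_transpose, LinearMap.det_toMatrix, sq]

end Gauss

theorem pow_three_le_sqrt_two_mul_abs_det {T : Euc 3 →ₗ[ℝ] Euc 3} (hT : LinearMap.det T ≠ 0)
    {r : ℝ} (hr : 0 ≤ r) (h : ∀ v ∈ latticeSet T, v ≠ 0 → r ≤ ‖v‖) :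
    r ^ 3 ≤ √2 * |LinearMap.det T| := by
  let e := EuclideanSpace.basisFun (Fin 3) ℝ
  obtain ⟨B, hB, hred⟩ :=
    exists_det_eq_one_isReducedFamily (e.toBasis.map (LinearMap.equivOfDetNeZero T hT))
  let S := T ∘ₗ Matrix.toLin e.toBasis e.toBasis (B.map (Int.castRingHom ℝ))
  have hv : (fun j => ∑ i, B i j • e.toBasis.map (LinearMap.equivOfDetNeZero T hT) i) =
      fun j => S (e j) := by
    ext1 j
    rw [LinearMap.comp_apply, ← OrthonormalBasis.coe_toBasis, Matrix.toLin_self, map_sum]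
    simp [Int.cast_smul_eq_zsmul]
  have hdet : (Matrix.gram ℝ fun j => S (e j)).det = LinearMap.det T ^ 2 := by
    rw [det_gram_orthonormalBasis_map, LinearMap.det_comp, LinearMap.det_toLin,
      ← RingHom.mapMatrix_apply, ← RingHom.map_det, hB, map_one, mul_one]
  have hne (j : Fin 3) : S (e j) ≠ 0 :=
    (Matrix.det_gram_ne_zero_iff_linearIndependent.mp (hdet ▸ pow_ne_zero 2 hT)).ne_zero j
  have hle (j : Fin 3) : r ≤ ‖S (e j)‖ := by
    refine h _ ⟨fun i => B i j, ?_⟩ (hne j)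
    rw [LinearMap.comp_apply, ← OrthonormalBasis.coe_toBasis, Matrix.toLin_self]
    simp [e]
  rw [hv] at hred
  refine (pow_le_pow_iff_left₀ (by positivity) (by positivity) two_ne_zero).mp ?_
  calc (r ^ 3) ^ 2 = ∏ _j : Fin 3, r ^ 2 := by rw [Fin.prod_const]; ring
    _ ≤ ∏ j, ‖S (e j)‖ ^ 2 := by gcongr with j; exact hle j
    _ ≤ 2 * LinearMap.det T ^ 2 := hdet ▸ hred.prod_norm_sq_le
    _ = (√2 * |LinearMap.det T|) ^ 2 := by rw [mul_pow, sq_abs, Real.sq_sqrt zero_le_two]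

/-! ### Removing the quadratic part of the defect by a linear map -/

section Normalization

lemma exists_linearEquiv_norm_sq_eq {E : Type*} [NormedAddCommGroup E] [InnerProductSpace ℝ E]
    [FiniteDimensional ℝ E] {Q : QuadraticForm ℝ E} (hQ : Q.PosDef) :
    ∃ T : E ≃ₗ[ℝ] E, ∀ x, ‖T x‖ ^ 2 = Q x := by
  obtain ⟨w, hw, ⟨e⟩⟩ := Q.equivalent_one_zero_neg_one_weighted_sum_squared
  have hw1 (i) : w i = 1 := by
    have hne : e.symm (Pi.single i 1) ≠ 0 := e.symm.toLinearEquiv.map_ne_zero_iff.mpr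
      (Pi.single_ne_zero_iff.mpr one_ne_zero)
    have hpos := hQ _ hne
    rw [e.symm.map_app, QuadraticMap.weightedSumSquares_apply] at hpos
    have hpos : 0 < w i := by simpa [Pi.single_apply] using hpos
    rcases hw i with h | h | h <;> linarith
  refine ⟨e.toLinearEquiv ≪≫ₗ (WithLp.linearEquiv 2 ℝ _).symm ≪≫ₗ
    (stdOrthonormalBasis ℝ E).repr.symm.toLinearEquiv, fun x => ?_⟩
  rw [← e.map_app, QuadraticMap.weightedSumSquares_apply, LinearEquiv.trans_apply,
    LinearEquiv.trans_apply, LinearIsometryEquiv.coe_toLinearEquiv, LinearIsometryEquiv.norm_map,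
    EuclideanSpace.real_norm_sq_eq]
  simp [hw1, sq]

variable {E : Type*} [NormedAddCommGroup E] [InnerProductSpace ℝ E] [FiniteDimensional ℝ E]
  [Nontrivial E]

lemma exists_quadraticForm_eq_quadraticPart {v : E → ℝ} (hv : ContinuousOn v (sphere 0 1)) :
    ∃ Q : QuadraticForm ℝ E, ∀ x, Q x = quadraticPart v x := by
  let B : LinearMap.BilinForm ℝ E := LinearMap.mk₂ ℝ
    (fun x y => sphereMean fun z => v z * (⟪z, x⟫ * ⟪z, y⟫))
    (fun x x' y => by
      rw [← sphereMean_add (by fun_prop) (by fun_prop)]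
      simp only [inner_add_right, add_mul, mul_add])
    (fun c x y => by
      rw [smul_eq_mul, ← sphereMean_const_mul]
      simp only [real_inner_smul_right, mul_assoc, mul_left_comm c])
    (fun x y y' => by
      rw [← sphereMean_add (by fun_prop) (by fun_prop)]
      simp only [inner_add_right, mul_add])
    (fun c x y => by
      rw [smul_eq_mul, ← sphereMean_const_mul]
      simp only [real_inner_smul_right, mul_left_comm c])
  let d : ℝ := Module.finrank ℝ E
  refine ⟨(d * (d + 2) / 2) • B.toQuadraticMap -
    (d * sphereMean v / 2) • LinearMap.BilinMap.toQuadraticMap (innerₗ E), fun x => ?_⟩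
  simp only [sub_apply, smul_apply, LinearMap.BilinMap.toQuadraticMap_apply, B,
    LinearMap.mk₂_apply, innerₗ_apply_apply, real_inner_self_eq_norm_sq, quadraticPart, d,
    smul_eq_mul, ← sq]
  ring

lemma quadraticPart_smul (v : E → ℝ) (c : ℝ) (x : E) :
    quadraticPart v (c • x) = c ^ 2 * quadraticPart v x := by
  simp only [quadraticPart, real_inner_smul_right, norm_smul, mul_pow, Real.norm_eq_abs, sq_abs,
    mul_left_comm _ (c ^ 2), sphereMean_const_mul]
  ring

lemma sq_sphereMean_le {f : E → ℝ} (hf : ContinuousOn f (sphere 0 1)) :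
    sphereMean f ^ 2 ≤ sphereMean fun x => f x ^ 2 := by
  have hvar : 0 ≤ sphereMean fun x => f x ^ 2 - 2 * sphereMean f * f x + sphereMean f ^ 2 :=
    sphereMean_nonneg fun x => by nlinarith [sq_nonneg (f x - sphereMean f)]
  rw [sphereMean_add (by fun_prop) (by fun_prop), sphereMean_sub (by fun_prop) (by fun_prop),
    sphereMean_const_mul, sphereMean_const] at hvar
  linarith

variable [MeasurableSpace E] [BorelSpace E] in
lemma sphereMean_eq_abs_det_mul_of_homogeneous {φ : E → ℝ} (hφ : Continuous φ) {k : ℕ}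
    (hhom : ∀ r : ℝ, 0 < r → ∀ x, φ (r • x) = r ^ k * φ x) (T : E ≃ₗ[ℝ] E) :
    sphereMean φ = |LinearMap.det (T : E →ₗ[ℝ] E)| *
      sphereMean fun x => φ (T x) / ‖T x‖ ^ (Module.finrank ℝ E + k) := by
  have hcont : ContinuousOn (fun x => φ x / ‖x‖ ^ k) {0}ᶜ :=
    hφ.continuousOn.div (by fun_prop) fun x hx => pow_ne_zero _ (norm_ne_zero_iff.mpr hx)
  have hpolar := sphereMean_eq_abs_det_mul hcont (fun r hr x => by
    rw [hhom r hr, norm_smul, mul_pow, Real.norm_of_nonneg hr.le,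
      mul_div_mul_left _ _ (pow_ne_zero _ hr.ne')]) T
  rw [sphereMean_congr (g := φ) fun x hx => by rw [hx, one_pow, div_one]] at hpolar
  rw [hpolar]
  simp only [div_div, ← pow_add, add_comm k]

lemma exists_linearEquiv_norm_sq_eq_add_quadraticPart {v : E → ℝ}
    (hv : ContinuousOn v (sphere 0 1)) (hlt : ∀ x, x ≠ 0 → -‖x‖ ^ 2 < quadraticPart v x) :
    ∃ T : E ≃ₗ[ℝ] E, ∀ x, ‖T x‖ ^ 2 = ‖x‖ ^ 2 + quadraticPart v x := by
  obtain ⟨Q, hQ⟩ := exists_quadraticForm_eq_quadraticPart hv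
  have hsum (x : E) : (LinearMap.BilinMap.toQuadraticMap (innerₗ E) + Q) x =
      ‖x‖ ^ 2 + quadraticPart v x := by
    simp only [add_apply, LinearMap.BilinMap.toQuadraticMap_apply, innerₗ_apply_apply,
      real_inner_self_eq_norm_sq, hQ]
  simp_rw [← hsum]
  exact exists_linearEquiv_norm_sq_eq fun x hx => by linarith [hsum x, hlt x hx]

omit [FiniteDimensional ℝ E] [Nontrivial E] in
lemma sqDefect_comp_symm {f : Seminorm ℝ E} {q : E → ℝ} {T : E ≃ₗ[ℝ] E}
    (hT : ∀ x, ‖T x‖ ^ 2 = ‖x‖ ^ 2 + q x) (x : E) :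
    sqDefect (f.comp (T.symm : E →ₗ[ℝ] E)) x = sqDefect f (T.symm x) - q (T.symm x) := by
  have := hT (T.symm x)
  rw [T.apply_symm_apply] at this
  rw [sqDefect, this, sqDefect, Seminorm.comp_apply, LinearEquiv.coe_coe]
  ring

end Normalization

section NormalizationThree

lemma abs_quadraticPart_le_mul_norm_sq {v : Euc 3 → ℝ} (hv : ContinuousOn v (sphere 0 1)) {δ : ℝ}
    (hδ : ∀ x, ‖x‖ = 1 → |v x| ≤ δ) (x : Euc 3) : |quadraticPart v x| ≤ 12 * δ * ‖x‖ ^ 2 := by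
  rcases eq_or_ne x 0 with rfl | hx
  · simpa using quadraticPart_smul v 0 0
  have hunit : |quadraticPart v (‖x‖⁻¹ • x)| ≤ 12 * δ := by
    refine abs_quadraticPart_le hv (fun a ha => abs_sphereMean_le fun y hy => ?_)
      (norm_smul_inv_norm (𝕜 := ℝ) hx)
    have hinner : ⟪y, a⟫ ^ 2 ≤ 1 := by
      simpa [hy, ha] using abs_real_inner_le_norm y a
    rw [abs_mul, abs_of_nonneg (sq_nonneg ⟪y, a⟫)]
    exact (mul_le_of_le_one_right (abs_nonneg _) hinner).trans (hδ y hy)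
  rwa [quadraticPart_smul, abs_mul, abs_of_nonneg (sq_nonneg _), inv_pow,
    inv_mul_le_iff₀' (by positivity)] at hunit

lemma near_one_bounds {τ : ℝ} (h1 : 999 / 1000 ≤ τ) (h2 : τ ≤ 1001 / 1000) :
    τ ^ 2 * |1 / τ ^ 7 - 1| ≤ 1 / 80 ∧ 1 / 2 ≤ 1 / τ ^ 3 ∧ 1 / 2 ≤ 1 / τ ^ 7 := by
  have : 0 < τ := by linarith
  have hsq : τ ^ 2 ≤ (1001 / 1000) ^ 2 := by gcongr
  have hlow3 : 1 / (1001 / 1000) ^ 3 ≤ 1 / τ ^ 3 := by gcongr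
  have hup : 1 / τ ^ 7 ≤ 1 / (999 / 1000) ^ 7 := by gcongr
  have hlow : 1 / (1001 / 1000) ^ 7 ≤ 1 / τ ^ 7 := by gcongr
  norm_num only at hsq hlow3 hup hlow
  refine ⟨?_, by linarith, by linarith⟩
  have hdiff : |1 / τ ^ 7 - 1| ≤ 1 / 90 := abs_le.mpr ⟨by linarith, by linarith⟩
  calc τ ^ 2 * |1 / τ ^ 7 - 1| ≤ 1002001 / 1000000 * (1 / 90) := by gcongr
    _ ≤ 1 / 80 := by norm_num

variable {T : Euc 3 ≃ₗ[ℝ] Euc 3}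

lemma abs_det_le_two (hT : ∀ x, ‖x‖ = 1 → 999 / 1000 ≤ ‖T x‖ ∧ ‖T x‖ ≤ 1001 / 1000) :
    |LinearMap.det (T : Euc 3 →ₗ[ℝ] Euc 3)| ≤ 2 := by
  have hTc : Continuous T := (T : Euc 3 →ₗ[ℝ] Euc 3).continuous_of_finiteDimensional
  have hT0 : ∀ x ∈ sphere (0 : Euc 3) 1, ‖T x‖ ^ 3 ≠ 0 := fun x hx =>
    pow_ne_zero _ (by linarith [(hT x (by simpa using hx)).1])
  have hpolar := sphereMean_eq_abs_det_mul_of_homogeneous (φ := fun _ : Euc 3 => 1)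
    continuous_const (k := 0) (by simp) T
  simp only [finrank_euclideanSpace_fin, add_zero, sphereMean_const] at hpolar
  have hhalf : 1 / 2 ≤ sphereMean fun x => 1 / ‖T x‖ ^ 3 := by
    rw [← sphereMean_const (E := Euc 3) (1 / 2)]
    exact sphereMean_mono (by fun_prop) (by fun_prop (disch := assumption)) fun x hx =>
      (near_one_bounds (hT x hx).1 (hT x hx).2).2.1
  nlinarith [abs_nonneg (LinearMap.det (T : Euc 3 →ₗ[ℝ] Euc 3))]

variable {v : Euc 3 → ℝ}

lemma abs_sphereMean_mul_inner_map_sq_le (hv : Continuous v)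
    (hvo : ∀ a, sphereMean (fun x => v x * ⟪x, a⟫ ^ 2) = 0)
    (hT : ∀ x, ‖x‖ = 1 → 999 / 1000 ≤ ‖T x‖ ∧ ‖T x‖ ≤ 1001 / 1000) {a : Euc 3} (ha : ‖a‖ = 1) :
    |sphereMean fun x => v x * ⟪T x, a⟫ ^ 2 / ‖T x‖ ^ 7| ≤ 1 / 80 * sphereMean fun x => |v x| := by
  have hTc : Continuous T := (T : Euc 3 →ₗ[ℝ] Euc 3).continuous_of_finiteDimensional
  have hT0 : ∀ x ∈ sphere (0 : Euc 3) 1, ‖T x‖ ^ 7 ≠ 0 := fun x hx =>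
    pow_ne_zero _ (by linarith [(hT x (by simpa using hx)).1])
  have horth : sphereMean (fun x => v x * ⟪T x, a⟫ ^ 2) = 0 := by
    have := hvo (LinearMap.adjoint (T : Euc 3 →ₗ[ℝ] Euc 3) a)
    simpa only [LinearMap.adjoint_inner_right, LinearEquiv.coe_coe] using this
  have hpoint (x : Euc 3) (hx : ‖x‖ = 1) :
      |v x * ⟪T x, a⟫ ^ 2 / ‖T x‖ ^ 7 - v x * ⟪T x, a⟫ ^ 2| ≤ 1 / 80 * |v x| := by
    have hinner : ⟪T x, a⟫ ^ 2 ≤ ‖T x‖ ^ 2 := by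
      simpa [ha, sq_abs] using pow_le_pow_left₀ (abs_nonneg _) (abs_real_inner_le_norm (T x) a) 2
    calc |v x * ⟪T x, a⟫ ^ 2 / ‖T x‖ ^ 7 - v x * ⟪T x, a⟫ ^ 2|
        = |v x * ⟪T x, a⟫ ^ 2 * (1 / ‖T x‖ ^ 7 - 1)| := by ring_nf
      _ = |v x| * (⟪T x, a⟫ ^ 2 * |1 / ‖T x‖ ^ 7 - 1|) := by
        rw [abs_mul, abs_mul, abs_of_nonneg (sq_nonneg ⟪T x, a⟫), mul_assoc]
      _ ≤ |v x| * (‖T x‖ ^ 2 * |1 / ‖T x‖ ^ 7 - 1|) := by gcongr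
      _ ≤ |v x| * (1 / 80) := by
        gcongr
        exact (near_one_bounds (hT x hx).1 (hT x hx).2).1
      _ = 1 / 80 * |v x| := mul_comm _ _
  have hc1 : ContinuousOn (fun x => v x * ⟪T x, a⟫ ^ 2 / ‖T x‖ ^ 7) (sphere 0 1) := by
    fun_prop (disch := assumption)
  rw [← sub_zero (sphereMean _), ← horth, ← sphereMean_sub hc1 (by fun_prop),
    ← sphereMean_const_mul, abs_le, ← neg_one_mul, ← sphereMean_const_mul]
  constructor
  · refine sphereMean_mono (by fun_prop) (hc1.sub (by fun_prop)) fun x hx => ?_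
    linarith [(abs_le.mp (hpoint x hx)).1]
  · exact sphereMean_mono (hc1.sub (by fun_prop)) (by fun_prop) fun x hx =>
      (le_abs_self _).trans (hpoint x hx)

lemma sq_sphereMean_abs_le (hv : Continuous v)
    (hT : ∀ x, ‖x‖ = 1 → 999 / 1000 ≤ ‖T x‖ ∧ ‖T x‖ ≤ 1001 / 1000) :
    (sphereMean fun x => |v x|) ^ 2 ≤ 2 * sphereMean fun x => v x ^ 2 / ‖T x‖ ^ 7 := by
  have hTc : Continuous T := (T : Euc 3 →ₗ[ℝ] Euc 3).continuous_of_finiteDimensional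
  have hT0 : ∀ x ∈ sphere (0 : Euc 3) 1, ‖T x‖ ^ 7 ≠ 0 := fun x hx =>
    pow_ne_zero _ (by linarith [(hT x (by simpa using hx)).1])
  refine (sq_sphereMean_le hv.abs.continuousOn).trans ?_
  rw [← sphereMean_const_mul]
  refine sphereMean_mono (by fun_prop) (by fun_prop (disch := assumption)) fun x hx => ?_
  have := (near_one_bounds (hT x hx).1 (hT x hx).2).2.2
  rw [sq_abs, ← mul_one_div (v x ^ 2)]
  nlinarith [sq_nonneg (v x)]

lemma abs_sphereMean_comp_symm_mul_inner_sq_le (hv : Continuous v)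
    (hhom : ∀ (c : ℝ) x, v (c • x) = c ^ 2 * v x)
    (hvo : ∀ a, sphereMean (fun x => v x * ⟪x, a⟫ ^ 2) = 0)
    (hT : ∀ x, ‖x‖ = 1 → 999 / 1000 ≤ ‖T x‖ ∧ ‖T x‖ ≤ 1001 / 1000) {a : Euc 3} (ha : ‖a‖ = 1) :
    |sphereMean fun x => v (T.symm x) * ⟪x, a⟫ ^ 2| ≤
      1 / 40 * √(sphereMean fun x => v (T.symm x) ^ 2) := by
  have hTs : Continuous T.symm := (T.symm : Euc 3 →ₗ[ℝ] Euc 3).continuous_of_finiteDimensional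
  have hI := sphereMean_eq_abs_det_mul_of_homogeneous
    (φ := fun x => v (T.symm x) * ⟪x, a⟫ ^ 2) (by fun_prop) (k := 4) (fun r _ x => by
      rw [map_smul, hhom, real_inner_smul_left]; ring) T
  have hJ := sphereMean_eq_abs_det_mul_of_homogeneous
    (φ := fun x => v (T.symm x) ^ 2) (by fun_prop) (k := 4) (fun r _ x => by
      rw [map_smul, hhom]; ring) T
  simp only [finrank_euclideanSpace_fin, LinearEquiv.symm_apply_apply, Nat.reduceAdd] at hI hJ
  have hI_le := abs_sphereMean_mul_inner_map_sq_le hv hvo hT ha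
  have hm_le := sq_sphereMean_abs_le hv hT
  have hD_le := abs_det_le_two hT
  rw [hI, hJ, abs_mul, abs_abs]
  set D := |LinearMap.det (T : Euc 3 →ₗ[ℝ] Euc 3)|
  set I := sphereMean fun x => v x * ⟪T x, a⟫ ^ 2 / ‖T x‖ ^ 7
  set J := sphereMean fun x => v x ^ 2 / ‖T x‖ ^ 7
  set m := sphereMean fun x => |v x|
  have : 0 ≤ D := abs_nonneg _
  calc D * |I| ≤ D * (1 / 80 * m) := by gcongr
    _ = 1 / 80 * (D * m) := by ring
    _ ≤ 1 / 80 * √(4 * (D * J)) := by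
      gcongr
      refine Real.le_sqrt_of_sq_le ?_
      calc (D * m) ^ 2 = D * (D * m ^ 2) := by ring
        _ ≤ 2 * (D * (2 * J)) := by gcongr
        _ = 4 * (D * J) := by ring
    _ = 1 / 40 * √(D * J) := by
      rw [Real.sqrt_mul (by norm_num), show (4 : ℝ) = 2 ^ 2 by norm_num,
        Real.sqrt_sq zero_le_two]
      ring

lemma exists_linearEquiv_isNearEuclidean_comp_symm {f : Seminorm ℝ (Euc 3)} {δ : ℝ}
    (hf : IsNearEuclidean f δ) (hδ : δ ≤ 1 / 12000) :
    ∃ T : Euc 3 ≃ₗ[ℝ] Euc 3,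
      IsNearEuclidean (f.comp (T.symm : Euc 3 →ₗ[ℝ] Euc 3)) (20 * δ) ∧
      ∀ a : Euc 3, ‖a‖ = 1 →
        |sphereMean fun x => sqDefect (f.comp (T.symm : Euc 3 →ₗ[ℝ] Euc 3)) x * ⟪x, a⟫ ^ 2| ≤
          1 / 40 * √(sphereMean fun x =>
            sqDefect (f.comp (T.symm : Euc 3 →ₗ[ℝ] Euc 3)) x ^ 2) := by
  have hw := hf.continuous_sqDefect
  have hδ0 : 0 ≤ δ := by
    obtain ⟨e, he⟩ := exists_norm_eq (Euc 3) zero_le_one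
    exact (abs_nonneg _).trans (hf.abs_sqDefect_le he)
  have hq := continuous_quadraticPart hw.continuousOn
  have hq_le := abs_quadraticPart_le_mul_norm_sq hw.continuousOn fun x hx => hf.abs_sqDefect_le hx
  obtain ⟨T, hT⟩ := exists_linearEquiv_norm_sq_eq_add_quadraticPart
    (hw.continuousOn (s := sphere 0 1)) fun x hx => by
      have : 0 < ‖x‖ ^ 2 := by positivity
      nlinarith [(abs_le.mp (hq_le x)).1]
  have hdefect := sqDefect_comp_symm (f := f) hT
  refine ⟨T, fun y => ?_, fun a ha => ?_⟩
  · have hy := hT (T.symm y)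
    rw [T.apply_symm_apply] at hy
    rw [hdefect, hy]
    have hqx := hq_le (T.symm y)
    have := (abs_sub (sqDefect f (T.symm y)) (quadraticPart (sqDefect f) (T.symm y))).trans
      (add_le_add (hf _) hqx)
    have hqx_ge : 13 / 20 * ‖T.symm y‖ ^ 2 ≤
        ‖T.symm y‖ ^ 2 + quadraticPart (sqDefect f) (T.symm y) := by
      nlinarith [(abs_le.mp hqx).1, sq_nonneg ‖T.symm y‖]
    linarith [mul_le_mul_of_nonneg_left hqx_ge hδ0]
  · simp_rw [hdefect]
    refine abs_sphereMean_comp_symm_mul_inner_sq_le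
      (v := fun x => sqDefect f x - quadraticPart (sqDefect f) x) (hw.sub hq)
      (fun c x => by rw [sqDefect_smul, quadraticPart_smul, mul_sub]) (fun a => ?_)
      (fun x hx => ?_) ha
    · simp_rw [sub_mul]
      rw [sphereMean_sub (by fun_prop) (by fun_prop),
        sphereMean_quadraticPart_mul_inner_sq hw.continuousOn, sub_self]
    · have hqx := abs_le.mp (hq_le x)
      have hTx := hT x
      rw [hx, one_pow, mul_one] at hqx
      rw [hx] at hTx
      constructor <;> nlinarith [norm_nonneg (T x)]

end NormalizationThree

/-! ### The face-centred cubic lattice and critical determinants -/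

section CriticalDeterminant

lemma det_ne_zero_of_latticeSet_eq {n : ℕ} {T T' : Euc n →ₗ[ℝ] Euc n}
    (hT : LinearMap.det T ≠ 0) (h : latticeSet T = latticeSet T') : LinearMap.det T' ≠ 0 := by
  have hbasis (k : Fin n) : T (EuclideanSpace.single k 1) ∈ LinearMap.range T' := by
    have hmem : T (EuclideanSpace.single k 1) ∈ latticeSet T' := by
      rw [← h]
      exact ⟨Pi.single k 1, by simp [Pi.single_apply, ite_smul]⟩
    obtain ⟨z, hz⟩ := hmem
    exact ⟨_, hz.symm⟩
  have hrange : LinearMap.range T ≤ LinearMap.range T' := by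
    rintro _ ⟨x, rfl⟩
    rw [← (EuclideanSpace.basisFun (Fin n) ℝ).sum_repr x, map_sum]
    refine Submodule.sum_mem _ fun k _ => ?_
    rw [map_smul, EuclideanSpace.basisFun_apply]
    exact Submodule.smul_mem _ _ (hbasis k)
  have hTu : IsUnit T := LinearMap.isUnit_iff_isUnit_det _ |>.mpr hT.isUnit
  have hTu' : IsUnit T' := (LinearMap.isUnit_iff_range_eq_top _).mpr <|
    top_le_iff.mp <| (LinearMap.isUnit_iff_range_eq_top _).mp hTu ▸ hrange
  exact ((LinearMap.isUnit_iff_isUnit_det _).mp hTu').ne_zero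

lemma latDet_nonneg {n : ℕ} (Λ : Set (Euc n)) : 0 ≤ latDet Λ :=
  Real.sInf_nonneg (by rintro _ ⟨T, -, rfl⟩; exact abs_nonneg _)

lemma latDet_latticeSet_le {n : ℕ} (T : Euc n →ₗ[ℝ] Euc n) :
    latDet (latticeSet T) ≤ |LinearMap.det T| :=
  csInf_le ⟨0, by rintro _ ⟨T', -, rfl⟩; exact abs_nonneg _⟩ ⟨T, rfl, rfl⟩

lemma critDet_le_abs_det {n : ℕ} {K : Set (Euc n)} {T : Euc n →ₗ[ℝ] Euc n}
    (hT : LinearMap.det T ≠ 0) (hTK : IsAdmissible (latticeSet T) K) :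
    critDet K ≤ |LinearMap.det T| := by
  refine le_trans (csInf_le ⟨0, ?_⟩ ⟨_, ⟨T, hT, rfl⟩, hTK, rfl⟩) (latDet_latticeSet_le T)
  rintro _ ⟨Λ, -, -, rfl⟩
  exact latDet_nonneg Λ

variable {K Λ : Set (Euc 3)} {r : ℝ}

lemma pow_three_le_sqrt_two_mul_latDet (hr : 0 ≤ r) (hrK : closedBall 0 r ⊆ K)
    (hΛ : IsLattice Λ) (hΛK : IsAdmissible Λ K) : r ^ 3 ≤ √2 * latDet Λ := by
  obtain ⟨T, hT, rfl⟩ := hΛ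
  rw [← div_le_iff₀' (by positivity)]
  refine le_csInf ⟨_, T, rfl, rfl⟩ ?_
  rintro _ ⟨T', hTT', rfl⟩
  rw [div_le_iff₀' (by positivity)]
  refine pow_three_le_sqrt_two_mul_abs_det (det_ne_zero_of_latticeSet_eq hT hTT') hr
    fun v hv hv0 => ?_
  by_contra! hlt
  refine hv0 (hΛK ⟨hTT' ▸ hv, interior_mono hrK (ball_subset_interior_closedBall ?_)⟩)
  rwa [mem_ball_zero_iff]

lemma pow_three_le_sqrt_two_mul_critDet (hr : 0 ≤ r) (hrK : closedBall 0 r ⊆ K)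
    (hΛ : IsLattice Λ) (hΛK : IsAdmissible Λ K) : r ^ 3 ≤ √2 * critDet K := by
  rw [← div_le_iff₀' (by positivity)]
  refine le_csInf ⟨_, Λ, hΛ, hΛK, rfl⟩ ?_
  rintro _ ⟨Λ', hΛ', hΛK', rfl⟩
  rw [div_le_iff₀' (by positivity)]
  exact pow_three_le_sqrt_two_mul_latDet hr hrK hΛ' hΛK'

lemma volume_div_le_packFrac (hr : 0 < r) (hrK : closedBall 0 r ⊆ K) {T : Euc 3 →ₗ[ℝ] Euc 3}
    (hT : LinearMap.det T ≠ 0) (hTK : IsAdmissible (latticeSet T) K) :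
    volume.real K / (2 ^ 3 * |LinearMap.det T|) ≤ packFrac K := by
  have hcrit : 0 < critDet K := pos_of_mul_pos_right
    ((pow_pos hr 3).trans_le (pow_three_le_sqrt_two_mul_critDet hr.le hrK ⟨T, hT, rfl⟩ hTK))
    (Real.sqrt_nonneg 2)
  have := critDet_le_abs_det hT hTK
  rw [packFrac, ← measureReal_def]
  gcongr

end CriticalDeterminant

section FccLattice

/-- The linear map whose lattice `fccMap ℤ³` is the face-centred cubic lattice of minimal
norm one. -/
def fccMap : Euc 3 →ₗ[ℝ] Euc 3 :=
  Matrix.toLpLin 2 2 ((1 / √2 : ℝ) • !![1, 1, 0; 1, 0, 1; 0, 1, 1])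

lemma sqrt_two_mul_abs_det_fccMap : √2 * |LinearMap.det fccMap| = 1 := by
  have hdet : LinearMap.det fccMap = (1 / √2) ^ 3 * -2 := by
    rw [fccMap, Matrix.toLpLin_eq_toLin, LinearMap.det_toLin, Matrix.det_smul,
      Fintype.card_fin, Matrix.det_fin_three]
    simp
    norm_num
  rw [hdet, abs_mul, abs_of_pos (by positivity), abs_neg, abs_two]
  field_simp
  exact (Real.sq_sqrt zero_le_two).symm

lemma det_fccMap_ne_zero : LinearMap.det fccMap ≠ 0 := fun h => by
  simpa [h] using sqrt_two_mul_abs_det_fccMap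

lemma exists_int_of_mem_latticeSet_fccMap {v : Euc 3} (hv : v ∈ latticeSet fccMap) :
    ∃ w : Fin 3 → ℤ, Even (∑ i, w i) ∧ ∀ i, v i = w i / √2 := by
  obtain ⟨z, rfl⟩ := hv
  refine ⟨![z 0 + z 1, z 0 + z 2, z 1 + z 2], ⟨z 0 + z 1 + z 2, ?_⟩, fun i => ?_⟩
  · rw [Fin.sum_univ_three]
    simp only [Matrix.cons_val]
    ring
  · rw [fccMap, Matrix.toLpLin_apply]
    fin_cases i <;> simp [Matrix.mulVec, dotProduct, Fin.sum_univ_three] <;> ring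

lemma eq_zero_or_eq_fccInt_of_sum_sq_lt {w : Fin 3 → ℤ} (hw : Even (∑ i, w i))
    (hlt : ∑ i, w i ^ 2 < 4) : w = 0 ∨ ∃ j, w = fccInt j ∨ w = -fccInt j := by
  have hentry (i : Fin 3) : -1 ≤ w i ∧ w i ≤ 1 := by
    have := (Finset.single_le_sum (fun j _ => sq_nonneg (w j)) (Finset.mem_univ i)).trans_lt hlt
    constructor <;> nlinarith
  obtain ⟨p, q, s, rfl⟩ : ∃ p q s, w = ![p, q, s] := ⟨_, _, _, List.ofFn_inj.mp rfl⟩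
  obtain ⟨hp, hp'⟩ : -1 ≤ p ∧ p ≤ 1 := hentry 0
  obtain ⟨hq, hq'⟩ : -1 ≤ q ∧ q ≤ 1 := hentry 1
  obtain ⟨hs, hs'⟩ : -1 ≤ s ∧ s ≤ 1 := hentry 2
  clear hentry hlt
  revert hw
  interval_cases p <;> interval_cases q <;> interval_cases s <;> decide

lemma eq_fcc_or_two_le_norm_sq {v : Euc 3} (hv : v ∈ latticeSet fccMap) (hv0 : v ≠ 0) :
    (∃ j, v = fcc j ∨ v = -fcc j) ∨ 2 ≤ ‖v‖ ^ 2 := by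
  obtain ⟨w, hw, hvw⟩ := exists_int_of_mem_latticeSet_fccMap hv
  rcases lt_or_ge (∑ i, w i ^ 2) 4 with hlt | hge
  · left
    rcases eq_zero_or_eq_fccInt_of_sum_sq_lt hw hlt with rfl | ⟨j, rfl | rfl⟩
    · exact absurd (by ext i; simp [hvw]) hv0
    · exact ⟨j, Or.inl (by ext i; rw [hvw, fcc_apply])⟩
    · exact ⟨j, Or.inr (by ext i; simp [hvw, fcc_apply, neg_div])⟩
  · right
    have hge : (4 : ℝ) ≤ ∑ i, (w i : ℝ) ^ 2 := by exact_mod_cast hge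
    simp_rw [EuclideanSpace.real_norm_sq_eq, hvw, div_pow, Real.sq_sqrt zero_le_two,
      ← Finset.sum_div]
    linarith

lemma isAdmissible_latticeSet_fccMap : IsAdmissible (latticeSet fccMap) (unitBall 3) := by
  rintro v ⟨hv, hvi⟩
  rw [unitBall, interior_closedBall _ one_ne_zero, mem_ball_zero_iff] at hvi
  by_contra hv0
  rcases eq_fcc_or_two_le_norm_sq hv hv0 with ⟨j, rfl | rfl⟩ | hge
  · exact hvi.ne (norm_fcc j)
  · exact hvi.ne ((norm_neg _).trans (norm_fcc j))
  · nlinarith [norm_nonneg v]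

lemma packFrac_unitBall_le : packFrac (unitBall 3) ≤ √2 * volume.real (unitBall 3) / 2 ^ 3 := by
  have hcrit := pow_three_le_sqrt_two_mul_critDet zero_le_one (subset_refl (unitBall 3))
    ⟨fccMap, det_fccMap_ne_zero, rfl⟩ isAdmissible_latticeSet_fccMap
  rw [one_pow] at hcrit
  have hpos : 0 < critDet (unitBall 3) :=
    pos_of_mul_pos_right (one_pos.trans_le hcrit) (Real.sqrt_nonneg 2)
  rw [packFrac, ← measureReal_def, div_le_div_iff₀ (by positivity) (by positivity)]
  nlinarith [measureReal_nonneg (μ := volume) (s := unitBall 3)]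

end FccLattice

section DeformedLattice

lemma eq_zero_of_sphereMean_sq_eq_zero {E : Type*} [NormedAddCommGroup E] [InnerProductSpace ℝ E]
    [FiniteDimensional ℝ E] [Nontrivial E] {f : E → ℝ} (hf : ContinuousOn f (sphere 0 1))
    (h : sphereMean (fun x => f x ^ 2) = 0) {x : E} (hx : ‖x‖ = 1) : f x = 0 := by
  rw [← integral_comp_smul_of_norm_eq_one _ hx] at h
  have hcont : Continuous fun R : OrthGroup E => f (R • x) ^ 2 :=
    (OrthGroup.continuous_comp_smul hf hx).pow 2
  have hae := (integral_eq_zero_iff_of_nonneg (fun R => sq_nonneg _)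
    (OrthGroup.integrable_of_continuous hcont)).mp h
  simpa using congrFun ((hcont.ae_eq_iff_eq _ continuous_zero).mp hae) 1

lemma eq_norm_of_sphereMean_sqDefect_sq_eq_zero {E : Type*} [NormedAddCommGroup E]
    [InnerProductSpace ℝ E] [FiniteDimensional ℝ E] [Nontrivial E] {f : Seminorm ℝ E}
    (hf : Continuous f) (h : sphereMean (fun x => sqDefect f x ^ 2) = 0) (x : E) :
    f x = ‖x‖ := by
  have hcont : Continuous (sqDefect f) := (hf.pow 2).sub (continuous_norm.pow 2)
  rcases eq_or_ne x 0 with rfl | hx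
  · simp
  have hunit : sqDefect f (‖x‖⁻¹ • x) = 0 :=
    eq_zero_of_sphereMean_sq_eq_zero hcont.continuousOn h (norm_smul_inv_norm (𝕜 := ℝ) hx)
  rw [sqDefect_smul, mul_eq_zero, or_iff_right (by positivity), sqDefect, sub_eq_zero] at hunit
  exact (sq_eq_sq₀ (apply_nonneg f x) (norm_nonneg x)).mp hunit

variable {f : Seminorm ℝ (Euc 3)}

lemma one_le_apply_deformed_fcc (hf : IsNearEuclidean f (1 / 4)) {R : OrthGroup (Euc 3)}
    {A : Euc 3 →ₗ[ℝ] Euc 3} (hR : ∀ i, 1 ≤ f (R • (fcc i + A (fcc i))))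
    (hA : ∀ x, ‖A x‖ ≤ ‖x‖ / 10) {v : Euc 3} (hv : v ∈ latticeSet fccMap) (hv0 : v ≠ 0) :
    1 ≤ f (R • (v + A v)) := by
  rcases eq_fcc_or_two_le_norm_sq hv hv0 with ⟨j, rfl | rfl⟩ | hge
  · exact hR j
  · have hneg : R • (-fcc j + A (-fcc j)) = -(R • (fcc j + A (fcc j))) := by
      rw [map_neg, ← neg_add, smul_neg]
    rw [hneg, map_neg_eq_map]
    exact hR j
  · have hnorm : 9 / 10 * ‖v‖ ≤ ‖R • (v + A v)‖ := by
      rw [OrthGroup.norm_smul]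
      have htri := norm_sub_le (v + A v) (A v)
      rw [add_sub_cancel_right] at htri
      linarith [hA v]
    have hdefect := (abs_le.mp (hf (R • (v + A v)))).1
    rw [sqDefect] at hdefect
    have hsq : 81 / 50 ≤ ‖R • (v + A v)‖ ^ 2 := by nlinarith [norm_nonneg v]
    exact (one_le_sq_iff₀ (apply_nonneg f _)).mp (by linarith)

/-- The unit ball of `f` has an admissible lattice packing it more densely than the face-centred
cubic lattice packs the Euclidean ball. -/
def BeatsFcc (f : Seminorm ℝ (Euc 3)) : Prop :=
  ∃ L : Euc 3 →ₗ[ℝ] Euc 3, LinearMap.det L ≠ 0 ∧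
    (∀ v ∈ latticeSet L, v ≠ 0 → 1 ≤ f v) ∧
    √2 * |LinearMap.det L| * volume.real (unitBall 3) < volume.real {x | f x ≤ 1}

lemma exists_mem_latticeSet_eq_of_mem_latticeSet_comp {n : ℕ} {L T : Euc n →ₗ[ℝ] Euc n} {v : Euc n}
    (hv : v ∈ latticeSet (T ∘ₗ L)) : ∃ w ∈ latticeSet L, v = T w := by
  obtain ⟨z, rfl⟩ := hv
  exact ⟨_, ⟨z, rfl⟩, rfl⟩

lemma volume_real_sublevel_comp_symm (f : Seminorm ℝ (Euc 3)) (T : Euc 3 ≃ₗ[ℝ] Euc 3) :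
    volume.real {x | f.comp (T.symm : Euc 3 →ₗ[ℝ] Euc 3) x ≤ 1} =
      |LinearMap.det (T : Euc 3 →ₗ[ℝ] Euc 3)| * volume.real {x | f x ≤ 1} := by
  have hpre : {x | f.comp (T.symm : Euc 3 →ₗ[ℝ] Euc 3) x ≤ 1} =
      (T.symm : Euc 3 →ₗ[ℝ] Euc 3) ⁻¹' {x | f x ≤ 1} := rfl
  have hdet : (LinearMap.det (T.symm : Euc 3 →ₗ[ℝ] Euc 3))⁻¹ =
      LinearMap.det (T : Euc 3 →ₗ[ℝ] Euc 3) :=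
    inv_eq_of_mul_eq_one_left T.det_mul_det_symm
  rw [hpre, measureReal_def,
    Measure.addHaar_preimage_linearMap _ (LinearEquiv.isUnit_det' T.symm).ne_zero,
    ENNReal.toReal_mul, hdet, ENNReal.toReal_ofReal (abs_nonneg _), measureReal_def]

lemma BeatsFcc.of_comp_symm {T : Euc 3 ≃ₗ[ℝ] Euc 3}
    (h : BeatsFcc (f.comp (T.symm : Euc 3 →ₗ[ℝ] Euc 3))) : BeatsFcc f := by
  obtain ⟨L, hL, hadm, hlt⟩ := h
  have hT : LinearMap.det (T : Euc 3 →ₗ[ℝ] Euc 3) ≠ 0 := (LinearEquiv.isUnit_det' T).ne_zero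
  have hdet : LinearMap.det ((T.symm : Euc 3 →ₗ[ℝ] Euc 3) ∘ₗ L) *
      LinearMap.det (T : Euc 3 →ₗ[ℝ] Euc 3) = LinearMap.det L := by
    rw [LinearMap.det_comp, mul_right_comm, T.det_symm_mul_det, one_mul]
  refine ⟨T.symm ∘ₗ L, left_ne_zero_of_mul (hdet ▸ hL), fun v hv hv0 => ?_, ?_⟩
  · obtain ⟨w, hw, rfl⟩ := exists_mem_latticeSet_eq_of_mem_latticeSet_comp hv
    exact hadm w hw fun hw0 => hv0 (by rw [hw0, map_zero])
  · rw [volume_real_sublevel_comp_symm, ← hdet, abs_mul] at hlt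
    refine lt_of_mul_lt_mul_left ?_ (abs_nonneg (LinearMap.det (T : Euc 3 →ₗ[ℝ] Euc 3)))
    linarith

lemma IsNearEuclidean.volume_real_sublevel (hf : IsNearEuclidean f (1 / 4)) :
    volume.real {x | f x ≤ 1} = volume.real (unitBall 3) * sphereMean fun x => 1 / f x ^ 3 := by
  have hpos (x : Euc 3) (hx : x ≠ 0) : 0 < f x := by
    have hdefect := (abs_le.mp (hf x)).1
    rw [sqDefect] at hdefect
    have hnorm : 0 < ‖x‖ ^ 2 := pow_pos (norm_pos_iff.mpr hx) 2
    exact (apply_nonneg f x).lt_of_ne' (sq_pos_iff.mp (by linarith))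
  rw [volume_real_sublevel_of_homogeneous hf.continuous
    (fun r hr x => by rw [map_smul_eq_mul, Real.norm_of_nonneg hr.le]) hpos,
    finrank_euclideanSpace_fin, unitBall, Measure.addHaar_real_closedBall_eq_addHaar_real_ball]

lemma beatsFcc_of_deformed_fcc (hf : IsNearEuclidean f (1 / 4)) {R : OrthGroup (Euc 3)}
    {A : Euc 3 →ₗ[ℝ] Euc 3} (hR : ∀ i, 1 ≤ f (R • (fcc i + A (fcc i))))
    (hA : ∀ x, ‖A x‖ ≤ ‖x‖ / 10) (hpos : 0 < LinearMap.det (1 + A))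
    (hlt : LinearMap.det (1 + A) < sphereMean fun x => 1 / f x ^ 3) : BeatsFcc f := by
  set S : Euc 3 →ₗ[ℝ] Euc 3 := R.1.toLinearMap ∘ₗ (1 + A)
  have hdet : √2 * |LinearMap.det (S ∘ₗ fccMap)| = LinearMap.det (1 + A) := by
    rw [LinearMap.det_comp, LinearMap.det_comp, abs_mul, abs_mul, OrthGroup.abs_det, one_mul,
      mul_left_comm, sqrt_two_mul_abs_det_fccMap, mul_one, abs_of_pos hpos]
  refine ⟨S ∘ₗ fccMap, fun h0 => ?_, fun v hv hv0 => ?_, ?_⟩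
  · rw [h0, abs_zero, mul_zero] at hdet
    exact hpos.ne hdet
  · obtain ⟨w, hw, rfl⟩ := exists_mem_latticeSet_eq_of_mem_latticeSet_comp hv
    exact one_le_apply_deformed_fcc hf hR hA hw fun hw0 => hv0 (hw0 ▸ map_zero S)
  · rw [hdet, hf.volume_real_sublevel, mul_comm]
    have hvol : 0 < volume.real (unitBall 3) := by
      rw [unitBall, Measure.addHaar_real_closedBall_eq_addHaar_real_ball]
      exact volume_real_ball_pos
    gcongr

lemma exists_isNearEuclidean_imp_euclidean_or_beatsFcc :
    ∃ δ : ℝ, 0 < δ ∧ δ ≤ 1 ∧ ∀ f : Seminorm ℝ (Euc 3), IsNearEuclidean f δ →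
      (∃ T : Euc 3 ≃ₗ[ℝ] Euc 3, ∀ x, f x = ‖T x‖) ∨ BeatsFcc f := by
  obtain ⟨ε, hε, hε_le, hfcc⟩ := exists_fcc_deformation_det_lt
  refine ⟨min (1 / 12000) (ε ^ 2 / 20), by positivity,
    (min_le_left _ _).trans (by norm_num), fun f hf => ?_⟩
  obtain ⟨T, hT, hmom⟩ := exists_linearEquiv_isNearEuclidean_comp_symm hf (min_le_left _ _)
  replace hT := hT.mono (δ := ε ^ 2) (by linarith [min_le_right (1 / 12000) (ε ^ 2 / 20)])
  have hnonneg : 0 ≤ sphereMean fun x =>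
      sqDefect (f.comp (T.symm : Euc 3 →ₗ[ℝ] Euc 3)) x ^ 2 := sphereMean_nonneg fun x => sq_nonneg _
  rcases hnonneg.eq_or_lt with hzero | hpos
  · refine Or.inl ⟨T, fun x => ?_⟩
    rw [← eq_norm_of_sphereMean_sqDefect_sq_eq_zero hT.continuous hzero.symm (T x),
      Seminorm.comp_apply, LinearEquiv.coe_coe, T.symm_apply_apply]
  · obtain ⟨R, A, hR, hA, hdet_pos, hdet_lt⟩ := hfcc _ hT hpos hmom
    exact Or.inr <| .of_comp_symm <|
      beatsFcc_of_deformed_fcc (hT.mono (by nlinarith)) hR hA hdet_pos hdet_lt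

end DeformedLattice

/-! ### Symmetric convex bodies as unit balls of norms -/

namespace IsSymCB

variable {n : ℕ} {K : Set (Euc n)}

lemma neg_mem (hK : IsSymCB K) {x : Euc n} (hx : x ∈ K) : -x ∈ K := by
  rwa [← Set.mem_neg, hK.symm]

lemma mem_nhds_zero (hK : IsSymCB K) : K ∈ nhds (0 : Euc n) := by
  obtain ⟨x, hx⟩ := hK.nonempty_interior
  have hx_neg : -x ∈ interior K := by
    have hinv : -interior K = interior (-K) := (Homeomorph.neg (Euc n)).preimage_interior K
    rwa [← Set.mem_neg, hinv, hK.symm]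
  have hzero := hK.convex.interior hx hx_neg (a := 1 / 2) (b := 1 / 2)
    (by norm_num) (by norm_num) (by norm_num)
  rw [smul_neg, add_neg_cancel] at hzero
  exact mem_interior_iff_mem_nhds.mp hzero

/-- The Minkowski functional of a symmetric convex body: the norm whose unit ball is the body. -/
def toSeminorm (hK : IsSymCB K) : Seminorm ℝ (Euc n) :=
  gaugeSeminorm ((balanced_iff_neg_mem hK.convex).mpr fun _ => hK.neg_mem) hK.convex
    (absorbent_nhds_zero hK.mem_nhds_zero)

lemma toSeminorm_apply (hK : IsSymCB K) (x : Euc n) : hK.toSeminorm x = gauge K x := rfl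

lemma sublevel_toSeminorm (hK : IsSymCB K) : {x | hK.toSeminorm x ≤ 1} = K := by
  ext x
  rw [Set.mem_ofPred_eq, toSeminorm_apply,
    gauge_le_one_iff_mem_closure hK.convex hK.mem_nhds_zero, hK.compact.isClosed.closure_eq]

lemma isAdmissible (hK : IsSymCB K) {Λ : Set (Euc n)}
    (hΛ : ∀ v ∈ Λ, v ≠ 0 → 1 ≤ hK.toSeminorm v) : IsAdmissible Λ K := by
  rintro v ⟨hv, hint⟩
  rw [← gauge_lt_one_iff_mem_interior hK.convex hK.mem_nhds_zero] at hint
  by_contra hv0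
  exact hint.not_ge (hΛ v hv hv0)

lemma isNearEuclidean_toSeminorm (hK : IsSymCB K) {ε : ℝ} (hε : 0 ≤ ε) (hε' : ε ≤ 1 / 8)
    (hinner : closedBall 0 (1 - ε) ⊆ K) (houter : K ⊆ closedBall 0 (1 + ε)) :
    IsNearEuclidean hK.toSeminorm (8 * ε) := by
  intro x
  have hupper : gauge K x ≤ ‖x‖ / (1 - ε) := by
    rw [← gauge_closedBall (by linarith)]
    exact gauge_mono (absorbent_nhds_zero (closedBall_mem_nhds _ (by linarith))) hinner x
  have hlower : ‖x‖ / (1 + ε) ≤ gauge K x := by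
    rw [← gauge_closedBall (by linarith)]
    exact gauge_mono (absorbent_nhds_zero hK.mem_nhds_zero) houter x
  rw [le_div_iff₀ (by linarith)] at hupper
  rw [div_le_iff₀ (by linarith)] at hlower
  have hg := gauge_nonneg (s := K) x
  have hupper' : gauge K x ≤ (1 + 2 * ε) * ‖x‖ := by nlinarith
  have hlower' : (1 - ε) * ‖x‖ ≤ gauge K x := by nlinarith
  have hupper_sq := pow_le_pow_left₀ hg hupper' 2
  have hlower_sq := pow_le_pow_left₀ (mul_nonneg (by linarith) (norm_nonneg x)) hlower' 2
  rw [mul_pow] at hupper_sq hlower_sq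
  rw [sqDefect, toSeminorm_apply, abs_le]
  constructor <;> nlinarith [sq_nonneg ‖x‖]

end IsSymCB

/-- Theorem 4.4, main result: there is `ε > 0` such that every
origin-symmetric convex body `K ⊂ ℝ³` with `(1-ε)B³ ⊆ K ⊆ (1+ε)B³` which is not an
ellipsoid satisfies `φ(K) > φ(B³)`: the ball `B³` is a local pessimum for lattice
packing. -/
theorem ball_is_local_pessimum :
    ∃ ε > (0 : ℝ), ∀ K : Set (Euc 3), IsSymCB K →
      Metric.closedBall 0 (1 - ε) ⊆ K → K ⊆ Metric.closedBall 0 (1 + ε) →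
      (∀ T : Euc 3 ≃ₗ[ℝ] Euc 3, K ≠ ⇑T '' unitBall 3) →
      packFrac (unitBall 3) < packFrac K := by
  obtain ⟨δ, hδ, hδ_le, hdich⟩ := exists_isNearEuclidean_imp_euclidean_or_beatsFcc
  refine ⟨δ / 8, by positivity, fun K hK hinner houter hK_ne => ?_⟩
  have hnear := hK.isNearEuclidean_toSeminorm (by positivity) (by linarith) hinner houter
  rw [mul_div_cancel₀ δ (by norm_num)] at hnear
  rcases hdich _ hnear with ⟨T, hT⟩ | ⟨L, hL, hadm, hlt⟩
  · refine absurd ?_ (hK_ne T.symm)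
    ext x
    rw [LinearEquiv.image_symm_eq_preimage, Set.mem_preimage, unitBall, mem_closedBall_zero_iff,
      ← hT, ← Set.mem_ofPred_eq (p := fun x => hK.toSeminorm x ≤ 1), hK.sublevel_toSeminorm]
  · rw [hK.sublevel_toSeminorm] at hlt
    calc packFrac (unitBall 3)
        ≤ √2 * volume.real (unitBall 3) / 2 ^ 3 := packFrac_unitBall_le
      _ < volume.real K / (2 ^ 3 * |LinearMap.det L|) := by
        rw [div_lt_div_iff₀ (by positivity) (by positivity)]
        linarith
      _ ≤ packFrac K :=
        volume_div_le_packFrac (by linarith) hinner hL (hK.isAdmissible hadm)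

end
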